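/- There exist a Borel probability measure μ on [0,1] and a sequence (m^k,q^k)_{k≥1}, where each (m^k,q^k) minimizes P(·;β) among discrete order parameters with at most k atoms, such that the probability measures on [0,1] assigning mass m^k_l − m^k_{l−1} to the point q^k_l (1 ≤ l ≤ k) converge weakly to μ, P(m^k,q^k;β) → P(β), and for every p ∈ S the partial derivative ∂P(β)/∂β_p exists and equals β_p (1 − ∫_0^1 q^p dμ(q)). -/

import Mathlib

open MeasureTheory ProbabilityTheory Real Filter Topology

noncomputable section

/-- The centered Gaussian measure on `ℝ` with variance `v` (Dirac at `0` if `v ≤ 0`). -/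
def gauss (v : ℝ) : Measure ℝ := gaussianReal 0 v.toNNReal

/-- `ξ(x) = Σ_{p ∈ S} β_p^2 x^p`. -/
def xiFn (S : Finset ℕ) (β : ℕ → ℝ) (x : ℝ) : ℝ := ∑ p ∈ S, β p ^ 2 * x ^ p

/-- `ξ'(x) = Σ_{p ∈ S} β_p^2 p x^(p-1)`. -/
def xiFn' (S : Finset ℕ) (β : ℕ → ℝ) (x : ℝ) : ℝ := ∑ p ∈ S, β p ^ 2 * p * x ^ (p - 1)

/-- `θ(x) = x ξ'(x) - ξ(x)`. -/
def thetaFn (S : Finset ℕ) (β : ℕ → ℝ) (x : ℝ) : ℝ := x * xiFn' S β x - xiFn S β x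

/-- A discrete order parameter with at most `k` atoms:
`0 = m_0 ≤ m_1 ≤ ⋯ ≤ m_k = 1` with `m_l > 0` for `1 ≤ l ≤ k`,
and `0 = q_0 ≤ q_1 ≤ ⋯ ≤ q_k ≤ q_{k+1} = 1`. -/
structure OrderParam (k : ℕ) where
  m : ℕ → ℝ
  q : ℕ → ℝ
  m_zero : m 0 = 0
  m_last : m k = 1
  m_mono : ∀ l, l < k → m l ≤ m (l + 1)
  m_pos : ∀ l, 1 ≤ l → l ≤ k → 0 < m l
  q_zero : q 0 = 0
  q_last : q (k + 1) = 1
  q_mono : ∀ l, l ≤ k → q l ≤ q (l + 1)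

/-- The recursively defined functions of the Parisi functional:
`parisiB m v k j = A_{k-j}`, so `parisiB m v k 0 = A_k = log cosh` and
`parisiB m v k k = A_0`, where
`A_{l-1}(x) = (1/m_l) log ∫ exp (m_l A_l (x+y)) dγ_{v_l}(y)`. -/
def parisiB (m v : ℕ → ℝ) (k : ℕ) : ℕ → ℝ → ℝ
  | 0, x => Real.log (Real.cosh x)
  | j + 1, x =>
      (1 / m (k - j)) *
        Real.log (∫ y, Real.exp (m (k - j) * parisiB m v k j (x + y)) ∂(gauss (v (k - j))))

/-- The variances `v_0 = ξ'(q_1)` and `v_l = ξ'(q_{l+1}) - ξ'(q_l)` for `l ≥ 1`. -/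
def opVar (S : Finset ℕ) (β : ℕ → ℝ) {k : ℕ} (op : OrderParam k) : ℕ → ℝ := fun l =>
  if l = 0 then xiFn' S β (op.q 1) else xiFn' S β (op.q (l + 1)) - xiFn' S β (op.q l)

/-- The discrete Parisi functional
`P(m,q;β) = ∫ A_0(h+y) dγ_{v_0}(y) - (1/2) Σ_{1≤l≤k} m_l (θ(q_{l+1}) - θ(q_l))`. -/
def parisiP (S : Finset ℕ) (h : ℝ) (β : ℕ → ℝ) {k : ℕ} (op : OrderParam k) : ℝ :=
  (∫ y, parisiB op.m (opVar S β op) k k (h + y) ∂(gauss (opVar S β op 0))) -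
    (1 / 2) * ∑ l ∈ Finset.Icc 1 k, op.m l * (thetaFn S β (op.q (l + 1)) - thetaFn S β (op.q l))

/-- The Parisi formula: infimum over `k ≥ 1` and discrete order parameters with at
most `k` atoms. -/
def parisiF (S : Finset ℕ) (h : ℝ) (β : ℕ → ℝ) : ℝ :=
  sInf {x : ℝ | ∃ k : ℕ, 1 ≤ k ∧ ∃ op : OrderParam k, x = parisiP S h β op}

/-!
*Strict convexity.* Two order parameters can be written over a common refinement, as one chain of
Gaussian steps carrying two weights each. Averaging the weights lowers the Parisi functional below
the average of its two values, and uniformly so if `∫ ξ'(max s q)` differs by at least `d > 0`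
between the two for some `s`. Hence all near minimizers have nearly the same such integrals. As
`ξ'` is strictly increasing, these integrals determine a probability measure, and by weak
compactness the measures of near minimizers converge to a single limit.

*First-order transfer.* Moving the points of an order parameter so that the times `ξ'(q)` stay the
same, up to clipping, preserves the Gaussian steps and turns an order parameter for `β` into one
for `β'`. Only the `θ`-sum changes, and since tangents lie below the convex function `ξ`, it changes
by at most a term linear in `ξ_{β'} - ξ_β`. Exchanging `β` and `β'` bounds the increment of the
Parisi formula from both sides, and both bounds have the slope given by the limit measure.
-/

namespace Parisi

open scoped NNReal

/-! ### Gaussian integrals of functions of exponential growth -/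

/-- The standard Gaussian measure; every Gaussian increment is written as `√v * g` with `g`
standard, so that all variances share one reference measure. -/
abbrev stdNormal : Measure ℝ := gaussianReal 0 1

/-- Measurable functions of at most exponential growth: an algebra of functions that are integrable
against every Gaussian measure. -/
def HasExpGrowth (f : ℝ → ℝ) : Prop :=
  Measurable f ∧ ∃ C c : ℝ, 0 ≤ C ∧ 0 ≤ c ∧ ∀ y, |f y| ≤ C * exp (c * |y|)

lemma exp_mul_abs_le (c y : ℝ) : exp (c * |y|) ≤ exp (c * y) + exp (-c * y) := by
  rcases abs_cases y with ⟨h, -⟩ | ⟨h, -⟩ <;> rw [h]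
  · linarith [exp_pos (-c * y)]
  · rw [mul_neg, ← neg_mul]
    linarith [exp_pos (c * y)]

lemma integrable_exp_mul_abs (c : ℝ) : Integrable (fun g => exp (c * |g|)) stdNormal := by
  have h : Integrable (fun g => exp (c * g) + exp (-c * g)) stdNormal :=
    (integrable_exp_mul_gaussianReal c).add (integrable_exp_mul_gaussianReal (-c))
  refine h.mono' (by fun_prop) (Eventually.of_forall fun g => ?_)
  rw [norm_of_nonneg (exp_pos _).le]
  exact exp_mul_abs_le c g

namespace HasExpGrowth

variable {f g : ℝ → ℝ}

lemma measurable (hf : HasExpGrowth f) : Measurable f := hf.1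

lemma integrable (hf : HasExpGrowth f) : Integrable f stdNormal := by
  obtain ⟨hm, C, c, -, -, hb⟩ := hf
  exact ((integrable_exp_mul_abs c).const_mul C).mono' hm.aestronglyMeasurable
    (Eventually.of_forall hb)

lemma of_abs_le (hf : Measurable f) (hg : HasExpGrowth g) (h : ∀ y, |f y| ≤ g y) :
    HasExpGrowth f := by
  obtain ⟨-, C, c, hC, hc, hb⟩ := hg
  exact ⟨hf, C, c, hC, hc, fun y => (h y).trans ((le_abs_self _).trans (hb y))⟩

lemma congr (hf : HasExpGrowth f) (h : ∀ y, f y = g y) : HasExpGrowth g := by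
  rwa [← funext h]

lemma const (a : ℝ) : HasExpGrowth (fun _ => a) :=
  ⟨measurable_const, |a|, 0, abs_nonneg _, le_rfl, fun y => by simp⟩

lemma id : HasExpGrowth (fun y => y) := by
  refine ⟨measurable_id, 1, 1, zero_le_one, zero_le_one, fun y => ?_⟩
  rw [one_mul, one_mul]
  linarith [add_one_le_exp |y|]

lemma add (hf : HasExpGrowth f) (hg : HasExpGrowth g) : HasExpGrowth (fun y => f y + g y) := by
  obtain ⟨hm, C, c, hC, hc, hb⟩ := hf
  obtain ⟨hm', C', c', hC', hc', hb'⟩ := hg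
  refine ⟨hm.add hm', C + C', c + c', by positivity, by positivity, fun y => ?_⟩
  calc |f y + g y| ≤ C * exp (c * |y|) + C' * exp (c' * |y|) :=
        (abs_add_le _ _).trans (add_le_add (hb y) (hb' y))
    _ ≤ C * exp ((c + c') * |y|) + C' * exp ((c + c') * |y|) := by gcongr <;> linarith
    _ = (C + C') * exp ((c + c') * |y|) := by ring

lemma mul (hf : HasExpGrowth f) (hg : HasExpGrowth g) : HasExpGrowth (fun y => f y * g y) := by
  obtain ⟨hm, C, c, hC, hc, hb⟩ := hf
  obtain ⟨hm', C', c', hC', hc', hb'⟩ := hg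
  refine ⟨hm.mul hm', C * C', c + c', by positivity, by positivity, fun y => ?_⟩
  calc |f y * g y| ≤ (C * exp (c * |y|)) * (C' * exp (c' * |y|)) := by
        rw [abs_mul]; exact mul_le_mul (hb y) (hb' y) (abs_nonneg _) (by positivity)
    _ = C * C' * exp ((c + c') * |y|) := by rw [add_mul, exp_add]; ring

lemma const_mul (a : ℝ) (hf : HasExpGrowth f) : HasExpGrowth (fun y => a * f y) :=
  (const a).mul hf

lemma div_const (hf : HasExpGrowth f) (a : ℝ) : HasExpGrowth (fun y => f y / a) := by
  simpa only [div_eq_mul_inv] using hf.mul (const a⁻¹)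

lemma neg (hf : HasExpGrowth f) : HasExpGrowth (fun y => -f y) := by
  simpa only [neg_one_mul] using hf.const_mul (-1)

lemma sub (hf : HasExpGrowth f) (hg : HasExpGrowth g) : HasExpGrowth (fun y => f y - g y) := by
  simpa only [sub_eq_add_neg] using hf.add hg.neg

lemma pow (hf : HasExpGrowth f) (n : ℕ) : HasExpGrowth (fun y => f y ^ n) := by
  induction n with
  | zero => simpa using const 1
  | succ n ih => simpa only [pow_succ] using ih.mul hf

lemma abs (hf : HasExpGrowth f) : HasExpGrowth (fun y => |f y|) := by
  obtain ⟨hm, C, c, hC, hc, hb⟩ := hf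
  exact ⟨hm.abs, C, c, hC, hc, fun y => by rw [abs_abs]; exact hb y⟩

lemma comp_affine (hf : HasExpGrowth f) (a s : ℝ) : HasExpGrowth (fun y => f (a + s * y)) := by
  obtain ⟨hm, C, c, hC, hc, hb⟩ := hf
  refine ⟨hm.comp (by fun_prop), C * exp (c * |a|), c * |s|, by positivity, by positivity,
    fun y => (hb _).trans ?_⟩
  rw [mul_assoc, ← exp_add, mul_assoc c, ← mul_add, ← abs_mul]
  gcongr
  exact abs_add_le _ _

lemma exp_of_le (hf : Measurable f) {C c : ℝ} (hc : 0 ≤ c) (h : ∀ y, f y ≤ C + c * |y|) :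
    HasExpGrowth (fun y => exp (f y)) := by
  refine ⟨hf.exp, exp C, c, (exp_pos C).le, hc, fun y => ?_⟩
  rw [abs_of_pos (exp_pos _), ← exp_add]
  exact exp_le_exp.2 (h y)

end HasExpGrowth

section Lipschitz

variable {A : ℝ → ℝ} {K : ℝ≥0}

lemma abs_sub_le_of_lipschitz (hA : LipschitzWith K A) (x y : ℝ) : |A x - A y| ≤ K * |x - y| := by
  simpa only [Real.dist_eq] using hA.dist_le_mul x y

lemma abs_le_of_lipschitz (hA : LipschitzWith K A) (x y : ℝ) :
    |A (x + y)| ≤ |A x| + K * |y| := by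
  have h₁ := abs_sub_le_of_lipschitz hA (x + y) x
  have h₂ := abs_add_le (A (x + y) - A x) (A x)
  rw [add_sub_cancel_left] at h₁
  rw [sub_add_cancel] at h₂
  linarith

lemma lipschitz_comp_add_right (hA : LipschitzWith K A) (a : ℝ) :
    LipschitzWith K (fun x => A (x + a)) :=
  LipschitzWith.of_dist_le_mul fun x y => by simpa using hA.dist_le_mul (x + a) (y + a)

lemma lipschitz_add_const (hA : LipschitzWith K A) (c : ℝ) : LipschitzWith K (fun x => A x + c) :=
  LipschitzWith.of_dist_le_mul fun x y => by simpa using hA.dist_le_mul x y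

lemma HasExpGrowth.of_lipschitz (hA : LipschitzWith K A) : HasExpGrowth A :=
  .of_abs_le hA.continuous.measurable ((HasExpGrowth.const _).add (HasExpGrowth.id.abs.const_mul _))
    fun y => by simpa using abs_le_of_lipschitz hA 0 y

lemma HasExpGrowth.exp_mul_of_lipschitz (hA : LipschitzWith K A) (m : ℝ) :
    HasExpGrowth (fun y => exp (m * A y)) := by
  refine .exp_of_le (hA.continuous.measurable.const_mul m) (C := |m| * |A 0|) (c := |m| * K)
    (by positivity) fun y => ?_
  calc m * A y ≤ |m| * |A y| := (le_abs_self _).trans (abs_mul _ _).le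
    _ ≤ |m| * (|A 0| + K * |y|) := by
        gcongr; simpa using abs_le_of_lipschitz hA 0 y
    _ = |m| * |A 0| + |m| * K * |y| := by ring

end Lipschitz

lemma gauss_eq_map (v : ℝ) : gauss v = stdNormal.map (fun g => √v * g) := by
  rw [gauss, gaussianReal_map_const_mul, mul_zero, mul_one]
  congr 1
  ext
  rcases le_total 0 v with h | h
  · simp [Real.coe_toNNReal _ h, Real.sq_sqrt h]
  · simp [Real.toNNReal_of_nonpos h, Real.sqrt_eq_zero_of_nonpos h]

instance (v : ℝ) : IsProbabilityMeasure (gauss v) := by unfold gauss; infer_instance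

lemma integral_gauss {f : ℝ → ℝ} (hf : Measurable f) (v : ℝ) :
    ∫ y, f y ∂(gauss v) = ∫ g, f (√v * g) ∂stdNormal := by
  rw [gauss_eq_map, integral_map (by fun_prop) hf.aestronglyMeasurable]

lemma integral_stdNormal_comp_add_right (f : ℝ → ℝ) (s : ℝ) :
    ∫ g, f (g + s) ∂stdNormal = ∫ g, exp (s * g - s ^ 2 / 2) * f g ∂stdNormal := by
  rw [integral_gaussianReal_eq_integral_smul one_ne_zero,
    integral_gaussianReal_eq_integral_smul one_ne_zero]
  conv_rhs => rw [← integral_add_right_eq_self _ s]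
  congr 1 with y
  simp only [smul_eq_mul, gaussianPDFReal]
  rw [← mul_assoc, mul_assoc _ (rexp _) (rexp _), ← exp_add]
  congr 4
  simp only [NNReal.coe_one]
  ring

lemma integral_stdNormal_comp_neg (f : ℝ → ℝ) :
    ∫ g, f (-g) ∂stdNormal = ∫ g, f g ∂stdNormal := by
  have h : stdNormal.map (fun g => -g) = stdNormal := by rw [gaussianReal_map_neg, neg_zero]
  conv_rhs => rw [← h]
  exact ((MeasurableEquiv.neg ℝ).measurableEmbedding.integral_map f).symm

lemma integral_sq_stdNormal : ∫ g, g ^ 2 ∂stdNormal = 1 := by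
  have h := variance_id_gaussianReal (μ := 0) (v := 1)
  rw [variance_eq_integral (by fun_prop)] at h
  simpa using h

lemma integral_exp_mul_stdNormal (s : ℝ) : ∫ g, exp (s * g) ∂stdNormal = exp (s ^ 2 / 2) := by
  simpa [mgf] using congrFun (mgf_id_gaussianReal (μ := 0) (v := 1)) s

lemma integral_stdNormal_conv {f : ℝ → ℝ} (hf : HasExpGrowth f) {v w : ℝ} (hv : 0 ≤ v)
    (hw : 0 ≤ w) (x : ℝ) :
    ∫ g, ∫ g', f (x + √v * g + √w * g') ∂stdNormal ∂stdNormal =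
      ∫ g, f (x + √(v + w) * g) ∂stdNormal := by
  have hfx : Measurable fun y => f (x + y) := hf.measurable.comp (by fun_prop)
  have hconv : gauss (v + w) = gauss v ∗ gauss w := by
    rw [gauss, gauss, gauss, gaussianReal_conv_gaussianReal, Real.toNNReal_add hv hw, add_zero]
  have hinteg : Integrable (fun y => f (x + y)) (gauss v ∗ gauss w) := by
    rw [← hconv, gauss_eq_map, integrable_map_measure hfx.aestronglyMeasurable (by fun_prop)]
    exact (hf.comp_affine x _).integrable
  have huncurry : Measurable (Function.uncurry fun y z : ℝ => f (x + (y + z))) :=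
    hf.measurable.comp (by fun_prop)
  have hinner : Measurable fun y => ∫ z, f (x + (y + z)) ∂gauss w :=
    huncurry.stronglyMeasurable.integral_prod_right.measurable
  rw [← integral_gauss hfx, hconv, integral_conv hinteg, integral_gauss hinner]
  congr 1 with g
  rw [integral_gauss (f := fun z => f (x + (√v * g + z))) (hf.measurable.comp (by fun_prop))]
  simp only [add_assoc]

/-! ### Entropic means and the Parisi step -/

lemma exp_le_one_add_add_sq_mul_exp (y : ℝ) : exp y ≤ 1 + y + y ^ 2 * exp |y| := by
  by_cases hy : |y| ≤ 1
  · have h₁ := (le_abs_self _).trans (Real.abs_exp_sub_one_sub_id_le hy)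
    nlinarith [one_le_exp (abs_nonneg y), sq_nonneg y]
  · push Not at hy
    rcases le_total 0 y with h0 | h0
    · rw [abs_of_nonneg h0] at hy ⊢
      nlinarith [mul_pos (exp_pos y) (by linarith : 0 < y - 1), exp_pos y]
    · rw [abs_of_nonpos h0] at hy ⊢
      nlinarith [exp_le_one_iff.2 h0, add_one_le_exp (-y), sq_nonneg y]

section EntropicMean

variable {Ω : Type*} {mΩ : MeasurableSpace Ω} {μ : Measure Ω} {m : ℝ} {f f' : Ω → ℝ}

lemma tendsto_integral_sq_mul_exp_abs {ι : Type*} {l : Filter ι} [l.IsCountablyGenerated]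
    {F : ι → Ω → ℝ} {b : Ω → ℝ} (hF : ∀ i, Measurable (F i))
    (hFf : ∀ ω, Tendsto (fun i => F i ω) l (𝓝 (f ω))) (hFb : ∀ᶠ i in l, ∀ ω, |F i ω| ≤ b ω)
    (hbsq : Integrable (fun ω => b ω ^ 2 * exp (b ω)) μ) :
    (∀ᶠ i in l, Integrable (fun ω => F i ω ^ 2 * exp |F i ω|) μ) ∧
      Tendsto (fun i => ∫ ω, F i ω ^ 2 * exp |F i ω| ∂μ) l
        (𝓝 (∫ ω, f ω ^ 2 * exp |f ω| ∂μ)) := by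
  have hmeas : ∀ i, AEStronglyMeasurable (fun ω => F i ω ^ 2 * exp |F i ω|) μ := fun i =>
    (((hF i).pow_const 2).mul (measurable_exp.comp (hF i).abs)).aestronglyMeasurable
  have hbound : ∀ᶠ i in l, ∀ᵐ ω ∂μ, ‖F i ω ^ 2 * exp |F i ω|‖ ≤ b ω ^ 2 * exp (b ω) := by
    filter_upwards [hFb] with i hi
    refine Eventually.of_forall fun ω => ?_
    rw [norm_mul, norm_of_nonneg (exp_pos _).le, norm_pow, norm_eq_abs]
    gcongr <;> exact hi ω
  exact ⟨hbound.mono fun i hi => hbsq.mono' (hmeas i) hi,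
    tendsto_integral_filter_of_dominated_convergence _ (Eventually.of_forall hmeas) hbound hbsq
      (Eventually.of_forall fun ω =>
        ((hFf ω).pow 2).mul ((continuous_exp.tendsto _).comp (hFf ω).abs))⟩

/-- The entropic mean `m⁻¹ log ∫ exp (m f) dμ`, with its limiting value `∫ f dμ` at `m = 0`. -/
def entropicMean (μ : Measure Ω) (m : ℝ) (f : Ω → ℝ) : ℝ :=
  if m = 0 then ∫ ω, f ω ∂μ else log (∫ ω, exp (m * f ω) ∂μ) / m

@[simp]
lemma entropicMean_zero (μ : Measure Ω) (f : Ω → ℝ) : entropicMean μ 0 f = ∫ ω, f ω ∂μ :=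
  if_pos rfl

lemma entropicMean_of_ne_zero (hm : m ≠ 0) (μ : Measure Ω) (f : Ω → ℝ) :
    entropicMean μ m f = log (∫ ω, exp (m * f ω) ∂μ) / m :=
  if_neg hm

/-- The integrability under which `entropicMean μ m f` is meaningful and comparable with the mean
of `f`. -/
structure HasEntropicMean (μ : Measure Ω) (m : ℝ) (f : Ω → ℝ) : Prop where
  integrable : Integrable f μ
  integrable_exp : Integrable (fun ω => exp (m * f ω)) μ

variable [IsProbabilityMeasure μ]

lemma HasEntropicMean.add_const (hf : HasEntropicMean μ m f) (c : ℝ) :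
    HasEntropicMean μ m fun ω => f ω + c := by
  refine ⟨hf.integrable.add (integrable_const c), ?_⟩
  simpa only [mul_add, exp_add] using hf.integrable_exp.mul_const (exp (m * c))

lemma exp_mul_entropicMean (hm : m ≠ 0) (hf : HasEntropicMean μ m f) :
    exp (m * entropicMean μ m f) = ∫ ω, exp (m * f ω) ∂μ := by
  rw [entropicMean_of_ne_zero hm, mul_div_cancel₀ _ hm, exp_log (integral_exp_pos hf.2)]

lemma entropicMean_eq_add_tilted (hf : HasEntropicMean μ m f)
    (hf' : HasEntropicMean μ m f') :
    entropicMean μ m f' = entropicMean μ m f +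
      entropicMean (μ.tilted fun ω => m * f ω) m (fun ω => f' ω - f ω) := by
  by_cases hm : m = 0
  · subst hm
    have h : μ.tilted (fun ω => 0 * f ω) = μ := by simp
    simp only [h, entropicMean_zero]
    rw [integral_sub hf'.integrable hf.integrable]
    ring
  · have h : ∫ ω, exp (m * (f' ω - f ω)) ∂(μ.tilted fun ω => m * f ω) =
        (∫ ω, exp (m * f' ω) ∂μ) / ∫ ω, exp (m * f ω) ∂μ := by
      rw [integral_exp_tilted]
      simp only [Pi.add_apply, mul_sub, add_sub_cancel]
    simp only [entropicMean_of_ne_zero hm]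
    rw [h, log_div (integral_exp_pos hf'.2).ne' (integral_exp_pos hf.2).ne']
    ring

lemma integral_le_entropicMean (hm : 0 ≤ m) (hf : HasEntropicMean μ m f) :
    ∫ ω, f ω ∂μ ≤ entropicMean μ m f := by
  rcases hm.eq_or_lt with rfl | hm
  · simp
  · rw [entropicMean_of_ne_zero hm.ne', le_div_iff₀' hm,
      le_log_iff_exp_le (integral_exp_pos hf.2), ← integral_const_mul]
    exact convexOn_exp.map_integral_le continuous_exp.continuousOn isClosed_univ
      (by simp) (hf.1.const_mul m) hf.2

lemma entropicMean_le (hm : 0 ≤ m) (hm1 : m ≤ 1) (hf : HasEntropicMean μ m f)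
    (hsq : Integrable (fun ω => f ω ^ 2 * exp |f ω|) μ) :
    entropicMean μ m f ≤ (∫ ω, f ω ∂μ) + m * ∫ ω, f ω ^ 2 * exp |f ω| ∂μ := by
  rcases hm.eq_or_lt with rfl | hm
  · simp
  have hpt : ∀ ω, exp (m * f ω) ≤ 1 + (m * f ω + m ^ 2 * (f ω ^ 2 * exp |f ω|)) := fun ω => by
    have h : exp |m * f ω| ≤ exp |f ω| := by
      rw [exp_le_exp, abs_mul, abs_of_pos hm]
      exact mul_le_of_le_one_left (abs_nonneg _) hm1
    calc exp (m * f ω) ≤ 1 + m * f ω + (m * f ω) ^ 2 * exp |m * f ω| :=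
          exp_le_one_add_add_sq_mul_exp _
      _ ≤ 1 + m * f ω + (m * f ω) ^ 2 * exp |f ω| := by gcongr
      _ = 1 + (m * f ω + m ^ 2 * (f ω ^ 2 * exp |f ω|)) := by ring
  have hsum : Integrable (fun ω => m * f ω + m ^ 2 * (f ω ^ 2 * exp |f ω|)) μ :=
    (hf.1.const_mul m).add (hsq.const_mul _)
  have hle : ∫ ω, exp (m * f ω) ∂μ ≤
      1 + (m * (∫ ω, f ω ∂μ) + m ^ 2 * ∫ ω, f ω ^ 2 * exp |f ω| ∂μ) := by
    refine (integral_mono hf.2 ((integrable_const 1).add hsum) hpt).trans_eq ?_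
    simp only [Pi.add_apply]
    rw [integral_add (integrable_const 1) hsum, integral_add (hf.1.const_mul m) (hsq.const_mul _),
      integral_const_mul, integral_const_mul]
    simp
  rw [entropicMean_of_ne_zero hm.ne', div_le_iff₀' hm]
  linarith [log_le_sub_one_of_pos (integral_exp_pos hf.2)]

lemma entropicMean_add_const (hf : HasEntropicMean μ m f) (c : ℝ) :
    entropicMean μ m (fun ω => f ω + c) = entropicMean μ m f + c := by
  by_cases hm : m = 0
  · simp [hm, integral_add hf.1 (integrable_const c)]
  · simp only [entropicMean_of_ne_zero hm, mul_add, exp_add, integral_mul_const]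
    rw [log_mul (integral_exp_pos hf.2).ne' (exp_pos _).ne', log_exp]
    field_simp

/-- Over an arithmetic mean of exponentials, concavity of `y ↦ y ^ m` (or, at `m = 0`, of `log`)
beats the entropic means. -/
lemma le_entropicMean_of_convexComb_exp_le {f₁ f₂ : Ω → ℝ} {a b d : ℝ} (hm : 0 ≤ m) (hm1 : m ≤ 1)
    (ha : 0 ≤ a) (hb : 0 ≤ b) (hab : a + b = 1) (hf₁ : HasEntropicMean μ m f₁)
    (hf₂ : HasEntropicMean μ m f₂) (hf : HasEntropicMean μ m f)
    (hd₁ : entropicMean μ m f₁ = d) (hd₂ : entropicMean μ m f₂ = d)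
    (h : ∀ ω, a * exp (f₁ ω) + b * exp (f₂ ω) ≤ exp (f ω)) : d ≤ entropicMean μ m f := by
  rcases hm.eq_or_lt with rfl | hm
  · rw [entropicMean_zero] at *
    calc d = ∫ ω, (a * f₁ ω + b * f₂ ω) ∂μ := by
          rw [integral_add (hf₁.1.const_mul a) (hf₂.1.const_mul b), integral_const_mul,
            integral_const_mul, hd₁, hd₂, ← add_mul, hab, one_mul]
      _ ≤ ∫ ω, f ω ∂μ := by
          refine integral_mono ((hf₁.1.const_mul a).add (hf₂.1.const_mul b)) hf.1 fun ω => ?_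
          exact exp_le_exp.1 ((convexOn_exp.2 (Set.mem_univ (f₁ ω)) (Set.mem_univ (f₂ ω))
            ha hb hab).trans (h ω))
  · have hpt : ∀ ω, a * exp (m * f₁ ω) + b * exp (m * f₂ ω) ≤ exp (m * f ω) := fun ω => by
      have hc := (concaveOn_rpow hm.le hm1).2 (Set.mem_Ici.2 (exp_pos (f₁ ω)).le)
        (Set.mem_Ici.2 (exp_pos (f₂ ω)).le) ha hb hab
      have hr := rpow_le_rpow (by positivity) (h ω) hm.le
      simp only [smul_eq_mul] at hc
      simp only [← exp_mul, mul_comm _ m] at hc hr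
      exact hc.trans hr
    have hexp : exp (m * d) ≤ exp (m * entropicMean μ m f) := by
      calc exp (m * d) = ∫ ω, (a * exp (m * f₁ ω) + b * exp (m * f₂ ω)) ∂μ := by
            rw [integral_add (hf₁.2.const_mul a) (hf₂.2.const_mul b), integral_const_mul,
              integral_const_mul, ← exp_mul_entropicMean hm.ne' hf₁,
              ← exp_mul_entropicMean hm.ne' hf₂, hd₁, hd₂, ← add_mul, hab, one_mul]
        _ ≤ ∫ ω, exp (m * f ω) ∂μ :=
            integral_mono ((hf₁.2.const_mul a).add (hf₂.2.const_mul b)) hf.2 hpt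
        _ = exp (m * entropicMean μ m f) := (exp_mul_entropicMean hm.ne' hf).symm
    exact le_of_mul_le_mul_left (exp_le_exp.1 hexp) hm

/-- The reverse Minkowski inequality in `L^m`, `0 ≤ m ≤ 1`, written for exponentials. -/
lemma exp_entropicMean_add_exp_entropicMean_le {f₁ f₂ : Ω → ℝ} (hm : 0 ≤ m) (hm1 : m ≤ 1)
    (hf₁ : HasEntropicMean μ m f₁) (hf₂ : HasEntropicMean μ m f₂) (hf : HasEntropicMean μ m f)
    (h : ∀ ω, exp (f₁ ω) + exp (f₂ ω) ≤ exp (f ω)) :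
    exp (entropicMean μ m f₁) + exp (entropicMean μ m f₂) ≤ exp (entropicMean μ m f) := by
  set t₁ := entropicMean μ m f₁
  set t₂ := entropicMean μ m f₂
  set d := log (exp t₁ + exp t₂)
  have hd : exp d = exp t₁ + exp t₂ := exp_log (by positivity)
  have hsum : exp (t₁ - d) + exp (t₂ - d) = 1 := by
    rw [exp_sub, exp_sub, ← add_div, hd, div_self (by positivity)]
  rw [← hd, exp_le_exp]
  refine le_entropicMean_of_convexComb_exp_le hm hm1 (exp_pos _).le (exp_pos _).le hsum
    (hf₁.add_const (d - t₁)) (hf₂.add_const (d - t₂)) hf ?_ ?_ fun ω => ?_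
  · rw [entropicMean_add_const hf₁, add_sub_cancel]
  · rw [entropicMean_add_const hf₂, add_sub_cancel]
  · simp only [← exp_add]
    convert h ω using 3 <;> ring

section Limit

variable {ι : Type*} {l : Filter ι} [l.IsCountablyGenerated] {F : ι → Ω → ℝ} {b : Ω → ℝ}
  {M : ι → ℝ}

private lemma abs_mul_le_of_le_one {a B c : ℝ} (ha0 : 0 ≤ a) (ha1 : a ≤ 1) (hB : |B| ≤ c) :
    |a * B| ≤ c := by
  rw [abs_mul, abs_of_nonneg ha0]
  exact (mul_le_of_le_one_left (abs_nonneg _) ha1).trans hB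

lemma tendsto_entropicMean_of_ne_zero (hm : m ≠ 0) (hM0 : ∀ i, 0 ≤ M i) (hM1 : ∀ i, M i ≤ 1)
    (hM : Tendsto M l (𝓝 m)) (hF : ∀ i, Measurable (F i))
    (hFf : ∀ ω, Tendsto (fun i => F i ω) l (𝓝 (f ω))) (hFb : ∀ᶠ i in l, ∀ ω, |F i ω| ≤ b ω)
    (hbexp : Integrable (fun ω => exp (b ω)) μ) (hexp : Integrable (fun ω => exp (m * f ω)) μ) :
    Tendsto (fun i => entropicMean μ (M i) (F i)) l (𝓝 (entropicMean μ m f)) := by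
  have hZ : Tendsto (fun i => ∫ ω, exp (M i * F i ω) ∂μ) l (𝓝 (∫ ω, exp (m * f ω) ∂μ)) := by
    refine tendsto_integral_filter_of_dominated_convergence (fun ω => exp (b ω)) ?_ ?_ hbexp
      (Eventually.of_forall fun ω => (continuous_exp.tendsto _).comp (hM.mul (hFf ω)))
    · exact Eventually.of_forall fun i => ((hF i).const_mul _).exp.aestronglyMeasurable
    · filter_upwards [hFb] with i hi
      refine Eventually.of_forall fun ω => ?_
      rw [norm_of_nonneg (exp_pos _).le, exp_le_exp]
      exact (le_abs_self _).trans (abs_mul_le_of_le_one (hM0 i) (hM1 i) (hi ω))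
  rw [entropicMean_of_ne_zero hm]
  refine ((hZ.log (integral_exp_pos hexp).ne').div hM hm).congr' ?_
  filter_upwards [hM.eventually_ne hm] with i hi
  rw [entropicMean_of_ne_zero hi]
  rfl

lemma tendsto_entropicMean_zero (hM0 : ∀ i, 0 ≤ M i) (hM1 : ∀ i, M i ≤ 1)
    (hM : Tendsto M l (𝓝 0)) (hF : ∀ i, Measurable (F i))
    (hFf : ∀ ω, Tendsto (fun i => F i ω) l (𝓝 (f ω))) (hFb : ∀ᶠ i in l, ∀ ω, |F i ω| ≤ b ω)
    (hb : Integrable b μ) (hbexp : Integrable (fun ω => exp (b ω)) μ)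
    (hbsq : Integrable (fun ω => b ω ^ 2 * exp (b ω)) μ) :
    Tendsto (fun i => entropicMean μ (M i) (F i)) l (𝓝 (∫ ω, f ω ∂μ)) := by
  have hmean : Tendsto (fun i => ∫ ω, F i ω ∂μ) l (𝓝 (∫ ω, f ω ∂μ)) := by
    refine tendsto_integral_filter_of_dominated_convergence b
      (Eventually.of_forall fun i => (hF i).aestronglyMeasurable) ?_ hb (Eventually.of_forall hFf)
    filter_upwards [hFb] with i hi using Eventually.of_forall hi
  obtain ⟨hsqInt, hsq⟩ := tendsto_integral_sq_mul_exp_abs hF hFf hFb hbsq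
  have hupper : Tendsto (fun i => (∫ ω, F i ω ∂μ) + M i * ∫ ω, F i ω ^ 2 * exp |F i ω| ∂μ) l
      (𝓝 (∫ ω, f ω ∂μ)) := by simpa using hmean.add (hM.mul hsq)
  have hmean_F : ∀ᶠ i in l, HasEntropicMean μ (M i) (F i) := by
    filter_upwards [hFb] with i hi
    refine ⟨hb.mono' (hF i).aestronglyMeasurable (Eventually.of_forall hi), hbexp.mono'
      ((hF i).const_mul _).exp.aestronglyMeasurable (Eventually.of_forall fun ω => ?_)⟩
    rw [norm_of_nonneg (exp_pos _).le, exp_le_exp]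
    exact (le_abs_self _).trans (abs_mul_le_of_le_one (hM0 i) (hM1 i) (hi ω))
  refine tendsto_of_tendsto_of_tendsto_of_le_of_le' hmean hupper ?_ ?_
  · filter_upwards [hmean_F] with i hi using integral_le_entropicMean (hM0 i) hi
  · filter_upwards [hmean_F, hsqInt] with i hi hi' using
      entropicMean_le (hM0 i) (hM1 i) hi hi'

end Limit

end EntropicMean

section Step

variable {A B f f' : ℝ → ℝ} {K L : ℝ≥0} {m v w : ℝ}

/-- One step `A_l ↦ A_{l-1}` of the Parisi recursion, with parameter `m` and Gaussian variance `v`;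
at `m = 0` it is the Gaussian smoothing that occurs in the first term of the functional. -/
def step (m v : ℝ) (A : ℝ → ℝ) (x : ℝ) : ℝ :=
  entropicMean stdNormal m fun g => A (x + √v * g)

/-- The standard Gaussian measure tilted by `exp (m A (x + √v g))`: the law of the Gaussian
increment started from `x` under the Gibbs weight of a Parisi step. -/
def tilt (m v : ℝ) (A : ℝ → ℝ) (x : ℝ) : Measure ℝ :=
  stdNormal.tilted fun g => m * A (x + √v * g)

/-- The mean of `f` at the end point `x + √v g` of a Parisi step under its tilted law. -/
def tiltMean (m v : ℝ) (A f : ℝ → ℝ) (x : ℝ) : ℝ :=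
  ∫ g, f (x + √v * g) ∂(tilt m v A x)

lemma expGrowth_exp (hA : LipschitzWith K A) (m v x : ℝ) :
    HasExpGrowth fun g => exp (m * A (x + √v * g)) :=
  (HasExpGrowth.exp_mul_of_lipschitz hA m).comp_affine x _

lemma expGrowth_comp (hA : LipschitzWith K A) (v x : ℝ) : HasExpGrowth fun g => A (x + √v * g) :=
  (HasExpGrowth.of_lipschitz hA).comp_affine x _

lemma hasEntropicMean_step (hA : LipschitzWith K A) (m v x : ℝ) :
    HasEntropicMean stdNormal m fun g => A (x + √v * g) :=
  ⟨(expGrowth_comp hA v x).integrable, (expGrowth_exp hA m v x).integrable⟩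

lemma isProbabilityMeasure_tilt (hA : LipschitzWith K A) (m v x : ℝ) :
    IsProbabilityMeasure (tilt m v A x) :=
  isProbabilityMeasure_tilted (expGrowth_exp hA m v x).integrable

lemma HasExpGrowth.integrable_tilt (hf : HasExpGrowth f) (hA : LipschitzWith K A) (m v x : ℝ) :
    Integrable f (tilt m v A x) := by
  rw [tilt, integrable_tilted_iff (expGrowth_exp hA m v x).integrable]
  exact ((expGrowth_exp hA m v x).mul hf).integrable

lemma integral_tilt (m v : ℝ) (A f : ℝ → ℝ) (x : ℝ) :
    ∫ g, f g ∂(tilt m v A x) = (∫ g, exp (m * A (x + √v * g)) * f g ∂stdNormal) /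
      ∫ g, exp (m * A (x + √v * g)) ∂stdNormal := by
  rw [tilt, integral_tilted, ← integral_div]
  simp only [smul_eq_mul, div_mul_eq_mul_div]

lemma step_zero (v : ℝ) (A : ℝ → ℝ) (x : ℝ) : step 0 v A x = ∫ g, A (x + √v * g) ∂stdNormal :=
  entropicMean_zero _ _

lemma step_zero_le (hA : LipschitzWith K A) (hm : 0 ≤ m) (v x : ℝ) :
    step 0 v A x ≤ step m v A x :=
  (step_zero v A x).trans_le (integral_le_entropicMean hm (hasEntropicMean_step hA m v x))

lemma step_of_ne_zero (hm : m ≠ 0) (v : ℝ) (A : ℝ → ℝ) (x : ℝ) :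
    step m v A x = log (∫ g, exp (m * A (x + √v * g)) ∂stdNormal) / m :=
  entropicMean_of_ne_zero hm _ _

lemma exp_mul_step (hA : LipschitzWith K A) (hm : m ≠ 0) (v x : ℝ) :
    exp (m * step m v A x) = ∫ g, exp (m * A (x + √v * g)) ∂stdNormal :=
  exp_mul_entropicMean hm (hasEntropicMean_step hA m v x)

lemma step_eq_add_tilt (hA : LipschitzWith K A) (hB : LipschitzWith L B) (m v x : ℝ) :
    step m v B x = step m v A x +
      entropicMean (tilt m v A x) m (fun g => B (x + √v * g) - A (x + √v * g)) :=
  entropicMean_eq_add_tilted (hasEntropicMean_step hA m v x) (hasEntropicMean_step hB m v x)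

/-- The Gibbs variational principle. -/
lemma step_add_tiltMean_sub_le (hA : LipschitzWith K A) (hB : LipschitzWith L B) (hm : 0 ≤ m)
    (v x : ℝ) : step m v A x + tiltMean m v A (fun y => B y - A y) x ≤ step m v B x := by
  have := isProbabilityMeasure_tilt hA m v x
  rw [step_eq_add_tilt hA hB, tiltMean]
  gcongr
  refine integral_le_entropicMean hm
    ⟨((expGrowth_comp hB v x).sub (expGrowth_comp hA v x)).integrable_tilt hA m v x, ?_⟩
  have h := (expGrowth_exp hB m v x).mul (expGrowth_exp hA (-m) v x)
  refine (h.integrable_tilt hA m v x).congr (Eventually.of_forall fun g => ?_)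
  simp only [← exp_add]
  ring_nf

lemma step_mono (hA : LipschitzWith K A) (hB : LipschitzWith L B) (hm : 0 ≤ m) (v x : ℝ)
    (h : ∀ y, A y ≤ B y) : step m v A x ≤ step m v B x := by
  have h₁ := step_add_tiltMean_sub_le hA hB hm v x
  have h₂ : 0 ≤ tiltMean m v A (fun y => B y - A y) x :=
    integral_nonneg fun g => sub_nonneg.2 (h _)
  linarith

lemma step_add_right (m v : ℝ) (A : ℝ → ℝ) (x y : ℝ) :
    step m v A (x + y) = step m v (fun z => A (z + y)) x := by
  simp only [step, add_right_comm]

lemma step_add_const (hA : LipschitzWith K A) (m v x c : ℝ) :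
    step m v (fun y => A y + c) x = step m v A x + c :=
  entropicMean_add_const (hasEntropicMean_step hA m v x) c

lemma lipschitz_step (hA : LipschitzWith K A) (hm : 0 ≤ m) (v : ℝ) :
    LipschitzWith K (step m v A) := by
  have key : ∀ x y, step m v A x ≤ step m v A y + K * |x - y| := fun x y => by
    conv_lhs => rw [← add_sub_cancel y x, step_add_right]
    rw [← step_add_const hA]
    refine step_mono (lipschitz_comp_add_right hA _) (lipschitz_add_const hA _) hm v y fun z => ?_
    have := (le_abs_self _).trans (abs_sub_le_of_lipschitz hA (z + (x - y)) z)
    rw [add_sub_cancel_left] at this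
    linarith
  refine LipschitzWith.of_le_add_mul K fun x y => ?_
  rw [Real.dist_eq]
  exact key x y

lemma step_zero_variance (m : ℝ) (A : ℝ → ℝ) : step m 0 A = A := by
  ext x
  by_cases hm : m = 0
  · simp [hm, step_zero]
  · simp [step_of_ne_zero hm, hm]

lemma step_step (hA : LipschitzWith K A) (m : ℝ) (hv : 0 ≤ v) (hw : 0 ≤ w) (x : ℝ) :
    step m v (step m w A) x = step m (v + w) A x := by
  by_cases hm : m = 0
  · subst hm
    simp only [step_zero]
    exact integral_stdNormal_conv (.of_lipschitz hA) hv hw x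
  · rw [step_of_ne_zero hm, step_of_ne_zero hm]
    simp only [exp_mul_step hA hm]
    rw [integral_stdNormal_conv (.exp_mul_of_lipschitz hA m) hv hw]

section Limit

variable {ι : Type*} {l : Filter ι} {M V X : ι → ℝ} {F : ι → ℝ → ℝ} {x : ℝ}

lemma tendsto_lipschitz_apply (hF : ∀ i, LipschitzWith K (F i))
    (hFA : ∀ y, Tendsto (fun i => F i y) l (𝓝 (A y))) (hX : Tendsto X l (𝓝 x)) :
    Tendsto (fun i => F i (X i)) l (𝓝 (A x)) := by
  have hdiff : Tendsto (fun i => F i (X i) - F i x) l (𝓝 0) := by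
    refine squeeze_zero_norm (fun i => abs_sub_le_of_lipschitz (hF i) _ _) ?_
    simpa using (hX.sub_const x).abs.const_mul (K : ℝ)
  simpa using hdiff.add (hFA x)

lemma eventually_abs_le_of_lipschitz (hF : ∀ i, LipschitzWith K (F i))
    (hFA : Tendsto (fun i => F i 0) l (𝓝 (A 0))) (hV : Tendsto V l (𝓝 v))
    (hX : Tendsto X l (𝓝 x)) :
    ∀ᶠ i in l, ∀ g, |F i (X i + √(V i) * g)| ≤
      |A 0| + 1 + K * (|x| + 1) + K * (√v + 1) * |g| := by
  have hs : Tendsto (fun i => √(V i)) l (𝓝 √v) := (continuous_sqrt.tendsto _).comp hV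
  filter_upwards [hFA.abs.eventually_lt_const (lt_add_one |A 0|),
    hX.abs.eventually_lt_const (lt_add_one |x|), hs.eventually_lt_const (lt_add_one √v)]
    with i h₁ h₂ h₃ g
  have h₄ := abs_le_of_lipschitz (hF i) 0 (X i + √(V i) * g)
  have h₅ : |X i + √(V i) * g| ≤ (|x| + 1) + (√v + 1) * |g| := by
    refine (abs_add_le _ _).trans ?_
    rw [abs_mul, abs_of_nonneg (sqrt_nonneg _)]
    gcongr
  rw [zero_add] at h₄
  linarith [mul_le_mul_of_nonneg_left h₅ K.coe_nonneg]

lemma tendsto_step [l.IsCountablyGenerated] (hM0 : ∀ i, 0 ≤ M i) (hM1 : ∀ i, M i ≤ 1)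
    (hF : ∀ i, LipschitzWith K (F i)) (hA : LipschitzWith K A) (hM : Tendsto M l (𝓝 m))
    (hV : Tendsto V l (𝓝 v)) (hX : Tendsto X l (𝓝 x))
    (hFA : ∀ y, Tendsto (fun i => F i y) l (𝓝 (A y))) :
    Tendsto (fun i => step (M i) (V i) (F i) (X i)) l (𝓝 (step m v A x)) := by
  have hpt : ∀ g, Tendsto (fun i => F i (X i + √(V i) * g)) l (𝓝 (A (x + √v * g))) := fun g =>
    tendsto_lipschitz_apply hF hFA (hX.add (((continuous_sqrt.tendsto _).comp hV).mul_const g))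
  have hbound := eventually_abs_le_of_lipschitz hF (hFA 0) hV hX
  have hlin : HasExpGrowth fun g => |A 0| + 1 + K * (|x| + 1) + K * (√v + 1) * |g| :=
    (HasExpGrowth.const _).add (HasExpGrowth.id.abs.const_mul _)
  have hexp : HasExpGrowth fun g => exp (|A 0| + 1 + K * (|x| + 1) + K * (√v + 1) * |g|) :=
    .exp_of_le hlin.measurable (by positivity) fun g => le_rfl
  have hmeas : ∀ i, Measurable fun g => F i (X i + √(V i) * g) := fun i =>
    (expGrowth_comp (hF i) _ _).measurable
  by_cases hm : m = 0
  · subst hm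
    rw [step_zero]
    exact tendsto_entropicMean_zero hM0 hM1 hM hmeas hpt hbound hlin.integrable hexp.integrable
      ((hlin.pow 2).mul hexp).integrable
  · exact tendsto_entropicMean_of_ne_zero hm hM0 hM1 hM hmeas hpt hbound hexp.integrable
      (expGrowth_exp hA m v x).integrable

end Limit

end Step

/-! ### The potentials of the recursion -/

/-- The terminal potential `A_k = log cosh`. -/
def logCosh (x : ℝ) : ℝ := log (cosh x)

lemma exp_logCosh (x : ℝ) : exp (logCosh x) = cosh x := exp_log (cosh_pos x)

lemma cosh_add_eq_cosh_mul (x y : ℝ) :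
    cosh (x + y) = cosh x * ((1 + tanh x) / 2 * exp y + (1 - tanh x) / 2 * exp (-y)) := by
  rw [cosh_add, tanh_eq_sinh_div_cosh, ← cosh_add_sinh y, ← cosh_sub_sinh y]
  have := cosh_pos x
  field_simp
  ring

lemma tanh_weights_nonneg (x : ℝ) : 0 ≤ (1 + tanh x) / 2 ∧ 0 ≤ (1 - tanh x) / 2 := by
  have ht := abs_le.1 (abs_tanh_lt_one x).le
  constructor <;> linarith

lemma logCosh_add_tanh_mul_le (x y : ℝ) : logCosh x + tanh x * y ≤ logCosh (x + y) := by
  obtain ⟨hp, hn⟩ := tanh_weights_nonneg x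
  have hconv := convexOn_exp.2 (Set.mem_univ y) (Set.mem_univ (-y)) hp hn (by ring)
  simp only [smul_eq_mul] at hconv
  rw [← exp_le_exp, exp_add, exp_logCosh, exp_logCosh, cosh_add_eq_cosh_mul]
  refine mul_le_mul_of_nonneg_left (le_of_eq_of_le ?_ hconv) (cosh_pos x).le
  ring_nf

lemma lipschitz_logCosh : LipschitzWith 1 logCosh := by
  refine LipschitzWith.of_le_add fun x y => ?_
  have h₁ := logCosh_add_tanh_mul_le x (y - x)
  have h₂ : |tanh x * (y - x)| ≤ 1 * |y - x| := by
    rw [abs_mul]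
    gcongr
    exact (abs_tanh_lt_one x).le
  rw [add_sub_cancel] at h₁
  rw [Real.dist_eq, abs_sub_comm]
  linarith [neg_abs_le (tanh x * (y - x))]

/-- The class of functions preserved by Parisi steps: a potential `A` is `1`-Lipschitz and convex
with subgradient `u`, and the symmetric second differences of `exp ∘ A` are at most those of
`cosh`. The subgradient is carried along because it is propagated explicitly by the recursion. -/
structure IsPotential (A u : ℝ → ℝ) : Prop where
  lipschitz : LipschitzWith 1 A
  add_mul_le : ∀ x y, A x + u x * y ≤ A (x + y)
  exp_add_exp_le : ∀ x y, exp (A (x + y)) + exp (A (x - y)) ≤ 2 * cosh y * exp (A x)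

lemma isPotential_logCosh : IsPotential logCosh tanh := by
  refine ⟨lipschitz_logCosh, logCosh_add_tanh_mul_le, fun x y => le_of_eq ?_⟩
  simp only [exp_logCosh, cosh_add, cosh_sub]
  ring

/-- The distance `A (x + y) - A x - u x * y` of a potential above its tangent line at `x`. -/
def tangentGap (A u : ℝ → ℝ) (x y : ℝ) : ℝ := A (x + y) - A x - u x * y

namespace IsPotential

variable {A u : ℝ → ℝ}

lemma abs_sub_le (h : IsPotential A u) (x y : ℝ) : |A x - A y| ≤ |x - y| := by
  simpa using abs_sub_le_of_lipschitz h.lipschitz x y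

lemma monotone (h : IsPotential A u) : Monotone u := by
  intro x y hxy
  rcases hxy.eq_or_lt with rfl | hxy
  · rfl
  have h₁ := h.add_mul_le x (y - x)
  have h₂ := h.add_mul_le y (x - y)
  rw [add_sub_cancel] at h₁ h₂
  nlinarith

lemma abs_le_one (h : IsPotential A u) (x : ℝ) : |u x| ≤ 1 := by
  have h₁ := (h.add_mul_le x 1).trans (sub_le_iff_le_add.1 (abs_le.1 (h.abs_sub_le (x + 1) x)).2)
  have h₂ := (h.add_mul_le x (-1)).trans
    (sub_le_iff_le_add.1 (abs_le.1 (h.abs_sub_le (x + -1) x)).2)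
  simp only [add_sub_cancel_left, abs_one, abs_neg] at h₁ h₂
  exact abs_le.2 ⟨by linarith, by linarith⟩

lemma hasExpGrowth_subgradient (h : IsPotential A u) : HasExpGrowth u :=
  .of_abs_le h.monotone.measurable (.const 1) h.abs_le_one

lemma second_difference_le (h : IsPotential A u) (x y : ℝ) :
    A (x + y) + A (x - y) - 2 * A x ≤ y ^ 2 := by
  set s := A (x + y)
  set t := A (x - y)
  have hamgm : exp (s / 2) * exp (t / 2) ≤ (exp s + exp t) / 2 := by
    have hs : exp s = exp (s / 2) ^ 2 := by rw [← exp_nat_mul]; ring_nf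
    have ht : exp t = exp (t / 2) ^ 2 := by rw [← exp_nat_mul]; ring_nf
    rw [hs, ht]
    nlinarith [sq_nonneg (exp (s / 2) - exp (t / 2))]
  have hexp : exp (s / 2 + t / 2) ≤ exp (y ^ 2 / 2 + A x) := by
    calc exp (s / 2 + t / 2) ≤ (exp s + exp t) / 2 := by rw [exp_add]; exact hamgm
      _ ≤ cosh y * exp (A x) := by linarith [h.exp_add_exp_le x y]
      _ ≤ exp (y ^ 2 / 2 + A x) := by
          rw [exp_add]
          gcongr
          exact cosh_le_exp_half_sq y
  linarith [exp_le_exp.1 hexp]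

lemma tangentGap_nonneg (h : IsPotential A u) (x y : ℝ) : 0 ≤ tangentGap A u x y := by
  rw [tangentGap]
  linarith [h.add_mul_le x y]

lemma tangentGap_le_sq (h : IsPotential A u) (x y : ℝ) : tangentGap A u x y ≤ y ^ 2 := by
  have h₁ := h.second_difference_le x y
  have h₂ := h.add_mul_le x (-y)
  rw [← sub_eq_add_neg] at h₂
  rw [tangentGap]
  linarith

lemma tangentGap_le_abs (h : IsPotential A u) (x y : ℝ) : tangentGap A u x y ≤ 2 * |y| := by
  have h₁ := h.abs_sub_le (x + y) x
  have h₂ : |u x * y| ≤ |y| := by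
    rw [abs_mul]
    exact mul_le_of_le_one_left (abs_nonneg _) (h.abs_le_one x)
  rw [add_sub_cancel_left] at h₁
  rw [tangentGap]
  linarith [le_abs_self (A (x + y) - A x), neg_abs_le (u x * y)]

lemma subgradient_sub_le (h : IsPotential A u) (x : ℝ) {y : ℝ} (hy : 0 < y) :
    u (x + y) - u x ≤ 4 * y := by
  have h₁ := h.add_mul_le (x + y) y
  have h₂ := h.add_mul_le x y
  have h₃ := h.tangentGap_le_sq x (y + y)
  rw [tangentGap, ← add_assoc] at h₃
  refine le_of_mul_le_mul_right (?_ : (u (x + y) - u x) * y ≤ 4 * y * y) hy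
  nlinarith

lemma lipschitz_subgradient (h : IsPotential A u) : LipschitzWith 4 u := by
  refine LipschitzWith.of_le_add_mul 4 fun x y => ?_
  rw [Real.dist_eq]
  rcases lt_or_ge y x with hxy | hxy
  · have := h.subgradient_sub_le y (sub_pos.2 hxy)
    rw [add_sub_cancel] at this
    rw [abs_of_pos (sub_pos.2 hxy)]
    push_cast
    linarith
  · exact (h.monotone hxy).trans (le_add_of_nonneg_right (by positivity))

end IsPotential

section Propagation

variable {A f f' u : ℝ → ℝ} {K : ℝ≥0} {m : ℝ}

lemma tiltMean_mono (hA : LipschitzWith K A) (hf : HasExpGrowth f) (hf' : HasExpGrowth f')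
    (h : ∀ y, f y ≤ f' y) (m v x : ℝ) : tiltMean m v A f x ≤ tiltMean m v A f' x :=
  integral_mono ((hf.comp_affine x _).integrable_tilt hA m v x)
    ((hf'.comp_affine x _).integrable_tilt hA m v x) fun _ => h _

lemma step_exp_add_exp_le (hA : LipschitzWith K A)
    (h : ∀ x y, exp (A (x + y)) + exp (A (x - y)) ≤ 2 * cosh y * exp (A x)) (hm : 0 ≤ m)
    (hm1 : m ≤ 1) (v x y : ℝ) :
    exp (step m v A (x + y)) + exp (step m v A (x - y)) ≤ 2 * cosh y * exp (step m v A x) := by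
  have hpos : 0 < 2 * cosh y := mul_pos two_pos (cosh_pos y)
  have hmul : ∀ t, exp (t + log (2 * cosh y)) = 2 * cosh y * exp t := fun t => by
    rw [exp_add, exp_log hpos, mul_comm]
  rw [← hmul, ← step_add_const hA]
  refine exp_entropicMean_add_exp_entropicMean_le hm hm1 (hasEntropicMean_step hA m v _)
    (hasEntropicMean_step hA m v _) (hasEntropicMean_step (lipschitz_add_const hA _) m v x)
    fun g => ?_
  rw [hmul, add_right_comm, sub_add_eq_add_sub, add_sub_right_comm, sub_add_eq_add_sub]
  exact h _ y

lemma IsPotential.step (h : IsPotential A u) (hm : 0 ≤ m) (hm1 : m ≤ 1) (v : ℝ) :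
    IsPotential (step m v A) (tiltMean m v A u) := by
  refine ⟨lipschitz_step h.lipschitz hm v, fun x y => ?_,
    step_exp_add_exp_le h.lipschitz h.exp_add_exp_le hm hm1 v⟩
  have hshift := lipschitz_comp_add_right h.lipschitz y
  calc Parisi.step m v A x + tiltMean m v A u x * y
      = Parisi.step m v A x + tiltMean m v A (fun z => u z * y) x := by
        rw [tiltMean, tiltMean, integral_mul_const]
    _ ≤ Parisi.step m v A x + tiltMean m v A (fun z => A (z + y) - A z) x := by
        gcongr
        exact tiltMean_mono h.lipschitz (h.hasExpGrowth_subgradient.mul (.const y))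
          ((HasExpGrowth.of_lipschitz hshift).sub (.of_lipschitz h.lipschitz))
          (fun z => by linarith [h.add_mul_le z y]) m v x
    _ ≤ Parisi.step m v A (x + y) := by
        rw [step_add_right]
        exact step_add_tiltMean_sub_le h.lipschitz hshift hm v x

end Propagation

/-- A quantitative strict convexity of `A`: its symmetric second differences of width at most `1`
are at least `c` times those expected from `(log ∘ cosh)'' = 1 / cosh ^ 2`. -/
def HasCurvature (c : ℝ) (A : ℝ → ℝ) : Prop :=
  ∀ x y, |y| ≤ 1 → c * y ^ 2 / cosh x ^ 2 ≤ A (x + y) + A (x - y) - 2 * A x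

lemma logCosh_second_difference (x y : ℝ) :
    logCosh (x + y) + logCosh (x - y) - 2 * logCosh x = log (1 + sinh y ^ 2 / cosh x ^ 2) := by
  have h₁ := cosh_pos (x + y)
  have h₂ := cosh_pos (x - y)
  rw [logCosh, logCosh, logCosh, ← log_mul h₁.ne' h₂.ne', ← Nat.cast_two, ← log_pow,
    ← log_div (by positivity) (by positivity)]
  congr 1
  rw [cosh_add, cosh_sub]
  field_simp
  nlinarith [cosh_sq x, cosh_sq y]

lemma sq_le_sinh_sq (y : ℝ) : y ^ 2 ≤ sinh y ^ 2 := by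
  rw [sq_le_sq, abs_sinh]
  exact self_le_sinh_iff.2 (abs_nonneg y)

lemma le_logCosh_second_difference {x y Y : ℝ} (hy : |y| ≤ Y) :
    y ^ 2 / cosh x ^ 2 / (1 + sinh Y ^ 2) ≤
      logCosh (x + y) + logCosh (x - y) - 2 * logCosh x := by
  rw [logCosh_second_difference]
  set t := sinh y ^ 2 / cosh x ^ 2
  have ht₀ : 0 ≤ t := by positivity
  have hyY : sinh y ^ 2 ≤ sinh Y ^ 2 := by
    rw [sq_le_sq, abs_sinh, abs_sinh]
    exact sinh_le_sinh.2 (hy.trans (le_abs_self Y))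
  have htY : t ≤ sinh Y ^ 2 :=
    (div_le_self (sq_nonneg _) (one_le_pow₀ (one_le_cosh x))).trans hyY
  calc y ^ 2 / cosh x ^ 2 / (1 + sinh Y ^ 2) ≤ t / (1 + t) := by
        gcongr
        exact div_le_div_of_nonneg_right (sq_le_sinh_sq y) (by positivity)
    _ = 1 - (1 + t)⁻¹ := by field_simp; ring
    _ ≤ log (1 + t) := one_sub_inv_le_log_of_pos (by linarith)

lemma hasCurvature_logCosh : HasCurvature (1 / 3) logCosh := by
  intro x y hy
  have hsinh : sinh 1 ^ 2 ≤ 2 := by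
    have h₁ : sinh 1 ≤ 1.4 := by
      rw [sinh_eq]; linarith [exp_one_lt_d9, exp_pos (-1)]
    nlinarith [sinh_nonneg_iff.2 (zero_le_one (α := ℝ))]
  calc 1 / 3 * y ^ 2 / cosh x ^ 2 = y ^ 2 / cosh x ^ 2 / 3 := by ring
    _ ≤ y ^ 2 / cosh x ^ 2 / (1 + sinh 1 ^ 2) := by gcongr; linarith
    _ ≤ _ := le_logCosh_second_difference hy

/-! ### Steps of small variance -/

section Weight

/-- The weight whose powers and exponential dominate the errors of a Parisi step. -/
def weight (g : ℝ) : ℝ := |g| + 1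

lemma one_le_weight (g : ℝ) : 1 ≤ weight g := le_add_of_nonneg_left (abs_nonneg g)

lemma expGrowth_weight : HasExpGrowth weight := HasExpGrowth.id.abs.add (.const 1)

lemma expGrowth_weight_pow_mul_exp (n : ℕ) :
    HasExpGrowth fun g => weight g ^ n * exp (2 * weight g) :=
  (expGrowth_weight.pow n).mul (.exp_of_le (expGrowth_weight.measurable.const_mul 2) (C := 2)
    two_pos.le fun g => by rw [weight]; linarith)

/-- The universal constant in the error bounds for Parisi steps of small variance. -/
def stepConst : ℝ := ∫ g, weight g ^ 4 * exp (2 * weight g) ∂stdNormal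

lemma integral_weight_pow_mul_exp_le {n : ℕ} (hn : n ≤ 4) :
    ∫ g, weight g ^ n * exp (2 * weight g) ∂stdNormal ≤ stepConst :=
  integral_mono (expGrowth_weight_pow_mul_exp n).integrable
    (expGrowth_weight_pow_mul_exp 4).integrable fun g => by
      dsimp only
      gcongr
      exact one_le_weight g

lemma one_le_exp_two_mul_weight (g : ℝ) : 1 ≤ exp (2 * weight g) :=
  one_le_exp (by linarith [one_le_weight g])

lemma integral_weight_pow_le {n : ℕ} (hn : n ≤ 4) :
    ∫ g, weight g ^ n ∂stdNormal ≤ stepConst :=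
  (integral_mono (expGrowth_weight.pow n).integrable (expGrowth_weight_pow_mul_exp n).integrable
    fun g => le_mul_of_one_le_right (pow_nonneg (zero_le_one.trans (one_le_weight g)) n)
      (one_le_exp_two_mul_weight g)).trans (integral_weight_pow_mul_exp_le hn)

lemma one_le_stepConst : 1 ≤ stepConst := by
  simpa using integral_weight_pow_le (Nat.zero_le 4)

lemma integral_quadratic_stdNormal (a b c : ℝ) :
    ∫ g, (a + b * g + c * g ^ 2) ∂stdNormal = a + c := by
  rw [integral_add ((HasExpGrowth.const a).add (.const_mul b .id)).integrable
    (.const_mul (HasExpGrowth.id.pow 2).integrable c), integral_add (integrable_const a)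
    (HasExpGrowth.const_mul b .id).integrable, integral_const_mul, integral_const_mul,
    integral_sq_stdNormal, integral_id_gaussianReal]
  simp

end Weight

/-- The increment of a Parisi step under the tilt by a function of constant slope `U`: the tilt
shifts the Gaussian increment `√v * g` by `m * v * U`. -/
def driftIncr (m v U g : ℝ) : ℝ := m * v * U + √v * g

section Affine

variable {A f : ℝ → ℝ} {K : ℝ≥0} {m v : ℝ}

lemma expGrowth_comp_driftIncr (hf : HasExpGrowth f) (m v U x : ℝ) :
    HasExpGrowth fun g => f (x + driftIncr m v U g) := by
  simpa only [driftIncr, add_assoc] using hf.comp_affine (x + m * v * U) √v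

lemma abs_driftIncr_le {U : ℝ} (hm : m ∈ Set.Icc 0 1) (hv : v ∈ Set.Icc 0 1) (hU : |U| ≤ 1)
    (g : ℝ) : |driftIncr m v U g| ≤ √v * weight g := by
  have hsqrt : v ≤ √v := Real.le_sqrt_of_sq_le (by nlinarith [hv.1, hv.2])
  have hdrift : |m * v * U| ≤ √v := by
    rw [abs_mul, abs_mul, abs_of_nonneg hm.1, abs_of_nonneg hv.1]
    calc m * v * |U| ≤ 1 * v * 1 := by have := hm.2; have := hv.1; gcongr
      _ ≤ √v := by linarith
  calc |driftIncr m v U g| ≤ |m * v * U| + |√v * g| := abs_add_le _ _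
    _ ≤ √v + √v * |g| := by rw [abs_mul √v, abs_of_nonneg (sqrt_nonneg v)]; gcongr
    _ = √v * weight g := by rw [weight]; ring

lemma lipschitz_mul_left (U : ℝ) : LipschitzWith ‖U‖₊ (U * ·) := lipschitzWith_smul U

/-- Cameron–Martin, applied to the linear part of slope `U` of `A` at `x`. -/
lemma integral_exp_mul_eq_drift (hv : 0 ≤ v) (m U : ℝ) (A f : ℝ → ℝ) (x : ℝ) :
    ∫ g, exp (m * A (x + √v * g)) * f (x + √v * g) ∂stdNormal =
      exp (m * (A x + m * v * U ^ 2 / 2)) *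
        ∫ g, exp (m * tangentGap A (fun _ => U) x (driftIncr m v U g)) *
          f (x + driftIncr m v U g) ∂stdNormal := by
  set s := m * U * √v
  have hs : s ^ 2 = m ^ 2 * U ^ 2 * v := by rw [mul_pow, sq_sqrt hv]; ring
  have hincr : ∀ g, √v * (g + s) = driftIncr m v U g := fun g => by
    rw [driftIncr]
    linear_combination (m * U) * mul_self_sqrt hv
  have hshift := integral_stdNormal_comp_add_right (fun g =>
    exp (m * tangentGap A (fun _ => U) x (√v * g)) * f (x + √v * g)) s
  simp only [hincr] at hshift
  rw [hshift, ← integral_const_mul]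
  congr 1 with g
  rw [← mul_assoc, ← mul_assoc, ← exp_add, ← exp_add]
  congr 2
  rw [tangentGap]
  linear_combination hs / 2

lemma tangentGap_mul_left (U x y : ℝ) : tangentGap (U * ·) (fun _ => U) x y = 0 := by
  rw [tangentGap]
  ring

lemma tiltMean_mul_left (hv : 0 ≤ v) (m U : ℝ) (f : ℝ → ℝ) (x : ℝ) :
    tiltMean m v (U * ·) f x = ∫ g, f (x + driftIncr m v U g) ∂stdNormal := by
  have h := integral_exp_mul_eq_drift hv m U (U * ·) (fun _ => 1) x
  have h' := integral_exp_mul_eq_drift hv m U (U * ·) f x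
  simp only [tangentGap_mul_left, mul_zero, exp_zero, mul_one, one_mul, integral_const,
    probReal_univ, smul_eq_mul] at h h'
  rw [tiltMean, integral_tilt m v (U * ·) (fun g => f (x + √v * g)), h, h',
    mul_div_cancel_left₀ _ (exp_pos _).ne']

lemma step_mul_left (hv : 0 ≤ v) (m U x : ℝ) :
    step m v (U * ·) x = U * x + m * v * U ^ 2 / 2 := by
  rcases eq_or_ne m 0 with rfl | hm
  · have h := integral_quadratic_stdNormal (U * x) (U * √v) 0
    simp only [zero_mul, add_zero] at h
    rw [step_zero]
    simpa only [mul_add, ← mul_assoc, zero_mul, zero_div, add_zero] using h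
  · have h := integral_exp_mul_eq_drift hv m U (U * ·) (fun _ => 1) x
    rw [← mul_right_inj' hm, ← exp_eq_exp, exp_mul_step (lipschitz_mul_left U) hm]
    simpa only [tangentGap_mul_left, mul_zero, exp_zero, mul_one, integral_const,
      probReal_univ, smul_eq_mul] using h

lemma integral_driftIncr (m v U : ℝ) : ∫ g, driftIncr m v U g ∂stdNormal = m * v * U := by
  simpa [driftIncr] using integral_quadratic_stdNormal (m * v * U) √v 0

lemma integral_drift_sub_le_step (hA : LipschitzWith K A) (hm : 0 ≤ m) (hv : 0 ≤ v) (x U : ℝ) :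
    (∫ g, A (x + driftIncr m v U g) ∂stdNormal) - m * v * U ^ 2 / 2 ≤ step m v A x := by
  have hinteg := expGrowth_comp_driftIncr (.of_lipschitz hA) m v U x
  have hlin := expGrowth_comp_driftIncr (.of_lipschitz (lipschitz_mul_left U)) m v U x
  have h := step_add_tiltMean_sub_le (lipschitz_mul_left U) hA hm v x
  have hmean : ∫ g, U * (x + driftIncr m v U g) ∂stdNormal = U * x + m * v * U ^ 2 := by
    simpa [driftIncr, mul_add, add_assoc, mul_assoc, mul_comm, mul_left_comm, sq] using
      integral_quadratic_stdNormal (U * (x + m * v * U)) (U * √v) 0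
  rw [step_mul_left hv, tiltMean_mul_left hv, integral_sub hinteg.integrable hlin.integrable,
    hmean] at h
  linarith

end Affine

section SmallStep

variable {A u f : ℝ → ℝ} {L : ℝ≥0} {m v : ℝ}

lemma IsPotential.tangentGap_driftIncr_le_sq (h : IsPotential A u) (hm : m ∈ Set.Icc 0 1)
    (hv : v ∈ Set.Icc 0 1) (x g : ℝ) :
    tangentGap A u x (driftIncr m v (u x) g) ≤ v * weight g ^ 2 := by
  refine (h.tangentGap_le_sq x _).trans ?_
  rw [← sq_abs, ← sq_sqrt hv.1, ← mul_pow, sq_sqrt hv.1]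
  gcongr
  exact abs_driftIncr_le hm hv (h.abs_le_one x) g

lemma IsPotential.tangentGap_driftIncr_le (h : IsPotential A u) (hm : m ∈ Set.Icc 0 1)
    (hv : v ∈ Set.Icc 0 1) (x g : ℝ) :
    tangentGap A u x (driftIncr m v (u x) g) ≤ 2 * weight g := by
  have hsqrt : √v * weight g ≤ weight g :=
    mul_le_of_le_one_left (zero_le_one.trans (one_le_weight g)) (Real.sqrt_le_one.2 hv.2)
  have := h.tangentGap_le_abs x (driftIncr m v (u x) g)
  linarith [abs_driftIncr_le hm hv (h.abs_le_one x) g]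

lemma IsPotential.expGrowth_tangentGap (h : IsPotential A u) (x : ℝ) :
    HasExpGrowth (tangentGap A u x) :=
  ((HasExpGrowth.of_lipschitz h.lipschitz).comp_affine x 1 |>.sub (.const (A x))).sub
    (.const_mul (u x) .id) |>.congr fun y => by rw [tangentGap, one_mul]

lemma IsPotential.expGrowth_exp_mul_tangentGap (h : IsPotential A u) (hm : m ∈ Set.Icc 0 1)
    (x : ℝ) : HasExpGrowth fun y => exp (m * tangentGap A u x y) :=
  .exp_of_le ((h.expGrowth_tangentGap x).measurable.const_mul m) (C := 0) two_pos.le fun y =>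
    (mul_le_of_le_one_left (h.tangentGap_nonneg x y) hm.2).trans
      ((h.tangentGap_le_abs x y).trans_eq (zero_add _).symm)

lemma IsPotential.integral_sq_mul_exp_tangentGap_le (h : IsPotential A u) (hm : m ∈ Set.Icc 0 1)
    (hv : v ∈ Set.Icc 0 1) (x : ℝ) :
    ∫ g, tangentGap A u x (driftIncr m v (u x) g) ^ 2 *
      exp |tangentGap A u x (driftIncr m v (u x) g)| ∂stdNormal ≤ stepConst * v ^ 2 := by
  rw [stepConst, ← integral_mul_const]
  refine integral_mono_of_nonneg (Eventually.of_forall fun g => by positivity)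
    ((expGrowth_weight_pow_mul_exp 4).mul (.const _)).integrable (Eventually.of_forall fun g => ?_)
  have h₀ := h.tangentGap_nonneg x (driftIncr m v (u x) g)
  dsimp only
  rw [abs_of_nonneg h₀]
  calc _ ≤ (v * weight g ^ 2) ^ 2 * exp (2 * weight g) := by
        gcongr
        · exact h.tangentGap_driftIncr_le_sq hm hv x g
        · exact h.tangentGap_driftIncr_le hm hv x g
    _ = _ := by ring

lemma IsPotential.integral_tangentGap_driftIncr (h : IsPotential A u) (m v x : ℝ) :
    ∫ g, tangentGap A u x (driftIncr m v (u x) g) ∂stdNormal =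
      (∫ g, A (x + driftIncr m v (u x) g) ∂stdNormal) - A x - m * v * u x ^ 2 := by
  have hA := expGrowth_comp_driftIncr (.of_lipschitz h.lipschitz) m v (u x) x
  have hincr := expGrowth_comp_driftIncr (.id) m v (u x) 0
  simp only [zero_add] at hincr
  simp only [tangentGap]
  rw [integral_sub (hA.sub (.const _)).integrable (hincr.const_mul _).integrable,
    integral_sub hA.integrable (integrable_const _), integral_const_mul, integral_driftIncr]
  simp only [integral_const, probReal_univ, one_smul]
  ring

lemma IsPotential.step_le_integral_drift (h : IsPotential A u) (hm : m ∈ Set.Icc 0 1)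
    (hv : v ∈ Set.Icc 0 1) (x : ℝ) :
    Parisi.step m v A x ≤ (∫ g, A (x + driftIncr m v (u x) g) ∂stdNormal) -
      m * v * u x ^ 2 / 2 + stepConst * v ^ 2 := by
  have hB := lipschitz_mul_left (u x)
  have := isProbabilityMeasure_tilt hB m v x
  have hgap := h.expGrowth_tangentGap x
  have hgap_sq := (hgap.pow 2).mul
    (HasExpGrowth.exp_of_le hgap.abs.measurable (C := 0) two_pos.le fun y => by
      rw [abs_of_nonneg (h.tangentGap_nonneg x y), zero_add]
      exact h.tangentGap_le_abs x y)
  have hshift : ∀ f : ℝ → ℝ, ∫ g, f (√v * g) ∂(tilt m v (u x * ·) x) =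
      ∫ g, f (driftIncr m v (u x) g) ∂stdNormal := fun f => by
    simpa [tiltMean] using tiltMean_mul_left hv.1 m (u x) (fun y => f (y - x)) x
  have hexp : HasEntropicMean (tilt m v (u x * ·) x) m fun g => tangentGap A u x (√v * g) := by
    constructor
    · simpa using (hgap.comp_affine 0 √v).integrable_tilt hB m v x
    · simpa using ((h.expGrowth_exp_mul_tangentGap hm x).comp_affine 0 √v).integrable_tilt hB m v x
  have hle := entropicMean_le hm.1 hm.2 hexp
    (by simpa using (hgap_sq.comp_affine 0 √v).integrable_tilt hB m v x)
  rw [hshift (tangentGap A u x), hshift fun y => tangentGap A u x y ^ 2 * exp |tangentGap A u x y|]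
    at hle
  have hmul := mul_le_of_le_one_left
    (integral_nonneg (μ := stdNormal) fun g => show 0 ≤ tangentGap A u x (driftIncr m v (u x) g) ^ 2
      * exp |tangentGap A u x (driftIncr m v (u x) g)| by positivity) hm.2
  have hdiff : (fun g => A (x + √v * g) - u x * (x + √v * g)) =
      fun g => tangentGap A u x (√v * g) + (A x - u x * x) := by
    ext g
    rw [tangentGap]
    ring
  rw [step_eq_add_tilt hB h.lipschitz, hdiff, entropicMean_add_const hexp, step_mul_left hv.1]
  linarith [h.integral_sq_mul_exp_tangentGap_le hm hv x, h.integral_tangentGap_driftIncr m v x]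

/-- The partition function of the Gibbs weight left over after the Cameron–Martin shift. -/
def gapPartition (m v : ℝ) (A u : ℝ → ℝ) (x : ℝ) : ℝ :=
  ∫ g, exp (m * tangentGap A u x (driftIncr m v (u x) g)) ∂stdNormal

lemma IsPotential.expGrowth_exp_tangentGap_driftIncr (h : IsPotential A u)
    (hm : m ∈ Set.Icc 0 1) (v x : ℝ) :
    HasExpGrowth fun g => exp (m * tangentGap A u x (driftIncr m v (u x) g)) :=
  (h.expGrowth_exp_mul_tangentGap hm x).comp_affine _ _

lemma IsPotential.exp_tangentGap_sub_one_le (h : IsPotential A u) (hm : m ∈ Set.Icc 0 1)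
    (hv : v ∈ Set.Icc 0 1) (x g : ℝ) :
    exp (m * tangentGap A u x (driftIncr m v (u x) g)) - 1 ≤
      v * (weight g ^ 2 * exp (2 * weight g)) := by
  have h₀ := h.tangentGap_nonneg x (driftIncr m v (u x) g)
  have h₁ := h.tangentGap_driftIncr_le hm hv x g
  have h₂ := h.tangentGap_driftIncr_le_sq hm hv x g
  set R := tangentGap A u x (driftIncr m v (u x) g)
  have hexp : exp R - 1 ≤ R * exp R := by
    have := mul_le_mul_of_nonneg_right (one_sub_le_exp_neg R) (exp_pos R).le
    rw [← exp_add, neg_add_cancel, exp_zero] at this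
    linarith
  calc exp (m * R) - 1 ≤ exp R - 1 := by gcongr; exact mul_le_of_le_one_left h₀ hm.2
    _ ≤ R * exp R := hexp
    _ ≤ v * weight g ^ 2 * exp (2 * weight g) := by have := hv.1; gcongr
    _ = v * (weight g ^ 2 * exp (2 * weight g)) := by ring

lemma IsPotential.one_le_gapPartition (h : IsPotential A u) (hm : m ∈ Set.Icc 0 1) (v x : ℝ) :
    1 ≤ gapPartition m v A u x := by
  have := integral_mono (integrable_const (1 : ℝ))
    (h.expGrowth_exp_tangentGap_driftIncr hm v x).integrable fun g =>
      one_le_exp (mul_nonneg hm.1 (h.tangentGap_nonneg x _))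
  simpa [gapPartition] using this

lemma IsPotential.gapPartition_le (h : IsPotential A u) (hm : m ∈ Set.Icc 0 1)
    (hv : v ∈ Set.Icc 0 1) (x : ℝ) : gapPartition m v A u x ≤ 1 + stepConst * v := by
  have hweight := expGrowth_weight_pow_mul_exp 2
  calc gapPartition m v A u x
      ≤ ∫ g, (1 + v * (weight g ^ 2 * exp (2 * weight g))) ∂stdNormal :=
        integral_mono (h.expGrowth_exp_tangentGap_driftIncr hm v x).integrable
          ((HasExpGrowth.const 1).add (hweight.const_mul v)).integrable
          fun g => by linarith [h.exp_tangentGap_sub_one_le hm hv x g]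
    _ = 1 + v * ∫ g, weight g ^ 2 * exp (2 * weight g) ∂stdNormal := by
        rw [integral_add (integrable_const 1) (hweight.const_mul v).integrable, integral_const_mul]
        simp
    _ ≤ 1 + v * stepConst := by
        have := hv.1
        gcongr
        exact integral_weight_pow_mul_exp_le (by norm_num)
    _ = 1 + stepConst * v := by ring

lemma IsPotential.gapPartition_mul_tiltMean (h : IsPotential A u) (hm : m ∈ Set.Icc 0 1)
    (hv : 0 ≤ v) (f : ℝ → ℝ) (x : ℝ) :
    gapPartition m v A u x * tiltMean m v A f x =
      ∫ g, exp (m * tangentGap A u x (driftIncr m v (u x) g)) *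
        f (x + driftIncr m v (u x) g) ∂stdNormal := by
  have hnum := integral_exp_mul_eq_drift hv m (u x) A f x
  have hden := integral_exp_mul_eq_drift hv m (u x) A (fun _ => 1) x
  have hgap : ∀ y, tangentGap A (fun _ => u x) x y = tangentGap A u x y := fun _ => rfl
  simp only [mul_one, hgap] at hnum hden
  rw [tiltMean, integral_tilt m v A (fun g => f (x + √v * g)), hnum, hden, ← gapPartition,
    mul_div_mul_left _ _ (exp_pos _).ne',
    mul_div_cancel₀ _ (zero_lt_one.trans_le (h.one_le_gapPartition hm v x)).ne']

lemma IsPotential.gapPartition_mul_tiltMean_sub (h : IsPotential A u) (hf : HasExpGrowth f)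
    (hm : m ∈ Set.Icc 0 1) (hv : 0 ≤ v) (x : ℝ) :
    gapPartition m v A u x *
        (tiltMean m v A f x - ∫ g, f (x + driftIncr m v (u x) g) ∂stdNormal) =
      ∫ g, (exp (m * tangentGap A u x (driftIncr m v (u x) g)) - 1) *
        (f (x + driftIncr m v (u x) g) - ∫ g, f (x + driftIncr m v (u x) g) ∂stdNormal)
          ∂stdNormal := by
  have hgrowth := expGrowth_comp_driftIncr hf m v (u x) x
  have hexp := h.expGrowth_exp_tangentGap_driftIncr hm v x
  have hmul := h.gapPartition_mul_tiltMean hm hv f x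
  set I := ∫ g, f (x + driftIncr m v (u x) g) ∂stdNormal with hI
  simp only [sub_mul _ (1 : ℝ), mul_sub, one_mul]
  rw [integral_sub ((hexp.mul hgrowth).sub (hexp.mul (.const I))).integrable
    (hgrowth.sub (.const I)).integrable, integral_sub (hexp.mul hgrowth).integrable
    (hexp.mul (.const I)).integrable, integral_sub hgrowth.integrable (integrable_const I),
    integral_mul_const, hmul, ← hI, gapPartition]
  simp

lemma IsPotential.abs_drift_sub_le (h : IsPotential A u) (hf : LipschitzWith L f)
    (hm : m ∈ Set.Icc 0 1) (hv : v ∈ Set.Icc 0 1) (x g : ℝ) :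
    |f (x + driftIncr m v (u x) g) - f x| ≤ L * √v * weight g := by
  have := abs_sub_le_of_lipschitz hf (x + driftIncr m v (u x) g) x
  rw [add_sub_cancel_left] at this
  calc _ ≤ L * |driftIncr m v (u x) g| := this
    _ ≤ L * (√v * weight g) := by gcongr; exact abs_driftIncr_le hm hv (h.abs_le_one x) g
    _ = _ := by ring

lemma IsPotential.abs_integral_drift_sub_le (h : IsPotential A u) (hf : LipschitzWith L f)
    (hm : m ∈ Set.Icc 0 1) (hv : v ∈ Set.Icc 0 1) (x : ℝ) :
    |(∫ g, f (x + driftIncr m v (u x) g) ∂stdNormal) - f x| ≤ L * stepConst * √v := by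
  have hinteg := (expGrowth_comp_driftIncr (.of_lipschitz hf) m v (u x) x).integrable
  have hmean : (∫ g, f (x + driftIncr m v (u x) g) ∂stdNormal) - f x =
      ∫ g, (f (x + driftIncr m v (u x) g) - f x) ∂stdNormal := by
    rw [integral_sub hinteg (integrable_const _)]
    simp
  rw [hmean, ← norm_eq_abs]
  calc _ ≤ ∫ g, L * √v * weight g ∂stdNormal :=
        norm_integral_le_of_norm_le (expGrowth_weight.const_mul _).integrable
          (Eventually.of_forall fun g => h.abs_drift_sub_le hf hm hv x g)
    _ = L * √v * ∫ g, weight g ^ 1 ∂stdNormal := by simp only [integral_const_mul, pow_one]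
    _ ≤ L * √v * stepConst := by gcongr; exact integral_weight_pow_le (by norm_num)
    _ = L * stepConst * √v := by ring

lemma IsPotential.abs_drift_sub_integral_le (h : IsPotential A u) (hf : LipschitzWith L f)
    (hm : m ∈ Set.Icc 0 1) (hv : v ∈ Set.Icc 0 1) (x g : ℝ) :
    |f (x + driftIncr m v (u x) g) - ∫ g, f (x + driftIncr m v (u x) g) ∂stdNormal| ≤
      2 * L * stepConst * √v * weight g := by
  have hC := one_le_stepConst
  have hg := one_le_weight g
  have hmean := h.abs_integral_drift_sub_le hf hm hv x
  rw [abs_sub_comm] at hmean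
  calc _ ≤ L * √v * weight g + L * stepConst * √v := (_root_.abs_sub_le _ (f x) _).trans
        (add_le_add (h.abs_drift_sub_le hf hm hv x g) hmean)
    _ = L * √v * (weight g + stepConst) := by ring
    _ ≤ L * √v * (2 * stepConst * weight g) := by gcongr; nlinarith
    _ = _ := by ring

/-- The deviation of `f` from its drifted mean is of order `√v` and the reweighting by the gap is
of order `v`. -/
lemma IsPotential.abs_tiltMean_sub_drift_le (h : IsPotential A u) (hf : LipschitzWith L f)
    (hm : m ∈ Set.Icc 0 1) (hv : v ∈ Set.Icc 0 1) (x : ℝ) :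
    |tiltMean m v A f x - ∫ g, f (x + driftIncr m v (u x) g) ∂stdNormal| ≤
      2 * L * stepConst ^ 2 * (v * √v) := by
  have hC := one_le_stepConst
  have hv₀ := hv.1
  have hZ := h.one_le_gapPartition hm v x
  have hcov := h.gapPartition_mul_tiltMean_sub (.of_lipschitz hf) hm hv.1 x
  have hdev := h.abs_drift_sub_integral_le hf hm hv x
  set I := ∫ g, f (x + driftIncr m v (u x) g) ∂stdNormal
  have hbound : ∀ g, ‖(exp (m * tangentGap A u x (driftIncr m v (u x) g)) - 1) *
      (f (x + driftIncr m v (u x) g) - I)‖ ≤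
        2 * L * stepConst * (v * √v) * (weight g ^ 3 * exp (2 * weight g)) := fun g => by
    have hnonneg : 0 ≤ exp (m * tangentGap A u x (driftIncr m v (u x) g)) - 1 :=
      sub_nonneg.2 (one_le_exp (mul_nonneg hm.1 (h.tangentGap_nonneg x _)))
    have hle := h.exp_tangentGap_sub_one_le hm hv x g
    rw [norm_mul, norm_of_nonneg hnonneg, norm_eq_abs]
    calc _ ≤ v * (weight g ^ 2 * exp (2 * weight g)) * (2 * L * stepConst * √v * weight g) :=
          mul_le_mul hle (hdev g) (abs_nonneg _) (hnonneg.trans hle)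
      _ = _ := by ring
  calc |tiltMean m v A f x - I| ≤ gapPartition m v A u x * |tiltMean m v A f x - I| :=
        le_mul_of_one_le_left (abs_nonneg _) hZ
    _ = |gapPartition m v A u x * (tiltMean m v A f x - I)| := by
        rw [abs_mul, abs_of_nonneg (zero_le_one.trans hZ)]
    _ ≤ 2 * L * stepConst * (v * √v) * ∫ g, weight g ^ 3 * exp (2 * weight g) ∂stdNormal := by
        rw [hcov, ← integral_const_mul]
        exact norm_integral_le_of_norm_le ((expGrowth_weight_pow_mul_exp 3).const_mul _).integrable
          (Eventually.of_forall hbound)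
    _ ≤ 2 * L * stepConst * (v * √v) * stepConst := by
        gcongr
        exact integral_weight_pow_mul_exp_le (by norm_num)
    _ = _ := by ring

lemma IsPotential.abs_tiltMean_sub_le (h : IsPotential A u) (hf : LipschitzWith L f)
    (hm : m ∈ Set.Icc 0 1) (hv : v ∈ Set.Icc 0 1) (x : ℝ) :
    |tiltMean m v A f x - f x| ≤ 3 * L * stepConst ^ 2 * √v := by
  have hC := one_le_stepConst
  have hmean : 2 * L * stepConst ^ 2 * (v * √v) ≤ 2 * L * stepConst ^ 2 * (1 * √v) := by
    gcongr
    exact hv.2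
  have hdrift : L * stepConst * √v ≤ L * stepConst ^ 2 * √v := by
    gcongr
    exact le_self_pow₀ hC two_ne_zero
  linarith [h.abs_tiltMean_sub_drift_le hf hm hv x, h.abs_integral_drift_sub_le hf hm hv x,
    _root_.abs_sub_le (tiltMean m v A f x) (∫ g, f (x + driftIncr m v (u x) g) ∂stdNormal) (f x)]

end SmallStep

section SmallStepConvexity

variable {A u f : ℝ → ℝ} {m v c : ℝ}

lemma abs_mul_mul_le {U : ℝ} (hm : m ∈ Set.Icc 0 1) (hv : 0 ≤ v) (hU : |U| ≤ 1) :
    |m * v * U| ≤ v := by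
  rw [abs_mul, abs_mul, abs_of_nonneg hm.1, abs_of_nonneg hv]
  calc m * v * |U| ≤ 1 * v * 1 := by have := hm.2; gcongr
    _ = v := by ring

lemma integral_sq_drift_add_le {U : ℝ} (hm : m ∈ Set.Icc 0 1) (hv : v ∈ Set.Icc 0 1)
    (hU : |U| ≤ 1) (x : ℝ) :
    ∫ g, ((x + driftIncr m v U g) ^ 2 + 4) ∂stdNormal ≤ (1 + v) * (x ^ 2 + 4) := by
  set w := m * v * U
  have hw : |w| ≤ v := abs_mul_mul_le hm hv.1 hU
  have hquad : ∀ g, (x + driftIncr m v U g) ^ 2 + 4 =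
      ((x + w) ^ 2 + 4) + 2 * (x + w) * √v * g + v * g ^ 2 := fun g => by
    rw [driftIncr]
    linear_combination g ^ 2 * mul_self_sqrt hv.1
  have hcross : 2 * x * w ≤ v * (x ^ 2 + 1) := by
    calc 2 * x * w ≤ |w| * (2 * |x|) := by
          have := le_abs_self (2 * x * w)
          rw [abs_mul, abs_mul, abs_two] at this
          linarith
      _ ≤ v * (x ^ 2 + 1) := by
          have := hv.1
          gcongr
          nlinarith [sq_abs x, sq_nonneg (|x| - 1)]
  have hsq : w ^ 2 ≤ v := by
    rw [← sq_abs]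
    nlinarith [hv.2, abs_nonneg w]
  simp_rw [hquad]
  rw [integral_quadratic_stdNormal]
  nlinarith [hv.1]

lemma expGrowth_one_div_cosh_sq : HasExpGrowth fun z => 1 / cosh z ^ 2 := by
  refine .of_abs_le (by have := continuous_cosh.measurable; fun_prop) (.const 1) fun z => ?_
  rw [abs_of_nonneg (by positivity)]
  exact div_le_one_of_le₀ (one_le_pow₀ (one_le_cosh z)) (by positivity)

lemma mul_one_div_cosh_sq_le (x w : ℝ) :
    1 / cosh x ^ 2 * (1 - 2 * tanh x * w - 2 * w ^ 2) ≤ 1 / cosh (x + w) ^ 2 := by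
  have hgap := isPotential_logCosh.tangentGap_le_sq x w
  have hinv : ∀ z, 1 / cosh z ^ 2 = exp (-(2 * logCosh z)) := fun z => by
    rw [exp_neg, ← exp_logCosh, ← exp_nat_mul, one_div, Nat.cast_two]
  rw [tangentGap] at hgap
  rw [hinv, hinv, show -(2 * logCosh (x + w)) = -(2 * logCosh x) +
    -(2 * (logCosh (x + w) - logCosh x)) by ring, exp_add]
  gcongr
  linarith [one_sub_le_exp_neg (2 * (logCosh (x + w) - logCosh x))]

lemma le_integral_one_div_cosh_sq_drift {U : ℝ} (hm : m ∈ Set.Icc 0 1) (hv : v ∈ Set.Icc 0 1)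
    (hU : |U| ≤ 1) (x : ℝ) : 1 / cosh x ^ 2 * (1 - 6 * v) ≤
      ∫ g, 1 / cosh (x + driftIncr m v U g) ^ 2 ∂stdNormal := by
  set w := m * v * U
  have hw : |w| ≤ v := abs_mul_mul_le hm hv.1 hU
  have htanh : tanh x * w ≤ v :=
    (le_abs_self _).trans (by
      rw [abs_mul]
      exact (mul_le_of_le_one_left (abs_nonneg w) (abs_tanh_lt_one x).le).trans hw)
  have hsq : w ^ 2 ≤ v := by
    rw [← sq_abs]
    nlinarith [hv.2, abs_nonneg w]
  have hquad : ∀ g, 1 / cosh x ^ 2 *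
      (1 - 2 * tanh x * driftIncr m v U g - 2 * driftIncr m v U g ^ 2) =
        1 / cosh x ^ 2 * (1 - 2 * tanh x * w - 2 * w ^ 2) +
        1 / cosh x ^ 2 * (-(2 * tanh x + 4 * w) * √v) * g + 1 / cosh x ^ 2 * (-(2 * v)) * g ^ 2 :=
    fun g => by
      rw [driftIncr]
      linear_combination (-(2 * g ^ 2) * (1 / cosh x ^ 2)) * mul_self_sqrt hv.1
  have hincr := expGrowth_comp_driftIncr .id m v U 0
  simp only [zero_add] at hincr
  calc 1 / cosh x ^ 2 * (1 - 6 * v)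
      ≤ 1 / cosh x ^ 2 * (1 - 2 * tanh x * w - 2 * w ^ 2) + 1 / cosh x ^ 2 * (-(2 * v)) := by
        rw [← mul_add]
        gcongr
        linarith
    _ = ∫ g, 1 / cosh x ^ 2 * (1 - 2 * tanh x * driftIncr m v U g -
          2 * driftIncr m v U g ^ 2) ∂stdNormal := by
        simp_rw [hquad]
        rw [integral_quadratic_stdNormal]
    _ ≤ _ := integral_mono (((HasExpGrowth.const 1).sub (hincr.const_mul (2 * tanh x))).sub
          ((hincr.pow 2).const_mul 2) |>.const_mul (1 / cosh x ^ 2)).integrable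
        (expGrowth_comp_driftIncr expGrowth_one_div_cosh_sq m v U x).integrable
        fun g => mul_one_div_cosh_sq_le x _

lemma IsPotential.integral_drift_le_tiltMean (h : IsPotential A u) (hf : HasExpGrowth f)
    (hf₀ : ∀ y, 0 ≤ f y) (hm : m ∈ Set.Icc 0 1) (hv : v ∈ Set.Icc 0 1) (x : ℝ) :
    ∫ g, f (x + driftIncr m v (u x) g) ∂stdNormal ≤ (1 + stepConst * v) * tiltMean m v A f x := by
  have hdrift := expGrowth_comp_driftIncr hf m v (u x) x
  calc _ ≤ ∫ g, exp (m * tangentGap A u x (driftIncr m v (u x) g)) *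
          f (x + driftIncr m v (u x) g) ∂stdNormal :=
        integral_mono hdrift.integrable
          ((h.expGrowth_exp_tangentGap_driftIncr hm v x).mul hdrift).integrable fun g =>
            le_mul_of_one_le_left (hf₀ _)
              (one_le_exp (mul_nonneg hm.1 (h.tangentGap_nonneg x _)))
    _ = gapPartition m v A u x * tiltMean m v A f x :=
        (h.gapPartition_mul_tiltMean hm hv.1 f x).symm
    _ ≤ _ := mul_le_mul_of_nonneg_right (h.gapPartition_le hm hv x)
        (integral_nonneg fun g => hf₀ _)

/-- The rate at which steps of small variance lose curvature. -/
def curvatureDecay : ℝ := 6 + stepConst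

lemma curvatureDecay_pos : 0 < curvatureDecay := by
  rw [curvatureDecay]
  linarith [one_le_stepConst]

lemma IsPotential.le_tiltMean_one_div_cosh_sq (h : IsPotential A u) (hm : m ∈ Set.Icc 0 1)
    (hv : v ∈ Set.Icc 0 1) (x : ℝ) :
    1 / cosh x ^ 2 * (1 - curvatureDecay * v) ≤ tiltMean m v A (fun z => 1 / cosh z ^ 2) x := by
  have hC := one_le_stepConst
  have hv₀ := hv.1
  have hpos : 0 < 1 + stepConst * v := by positivity
  refine le_of_mul_le_mul_left ?_ hpos
  calc (1 + stepConst * v) * (1 / cosh x ^ 2 * (1 - curvatureDecay * v))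
      = 1 / cosh x ^ 2 * (1 - 6 * v - stepConst * (6 + stepConst) * v ^ 2) := by
        rw [curvatureDecay]
        ring
    _ ≤ 1 / cosh x ^ 2 * (1 - 6 * v) :=
        mul_le_mul_of_nonneg_left (sub_le_self _ (by positivity)) (by positivity)
    _ ≤ _ := (le_integral_one_div_cosh_sq_drift hm hv (h.abs_le_one x) x).trans
        (h.integral_drift_le_tiltMean expGrowth_one_div_cosh_sq (fun _ => by positivity) hm hv x)

lemma HasCurvature.mul_tiltMean_le {K : ℝ≥0} (hc : HasCurvature c A) (hA : LipschitzWith K A)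
    (hm : 0 ≤ m) (v x : ℝ) {y : ℝ} (hy : |y| ≤ 1) :
    c * y ^ 2 * tiltMean m v A (fun z => 1 / cosh z ^ 2) x ≤
      step m v A (x + y) + step m v A (x - y) - 2 * step m v A x := by
  have hAy : ∀ a, LipschitzWith K fun z => A (z + a) := lipschitz_comp_add_right hA
  have hdiff : ∀ a, HasExpGrowth fun z => A (z + a) - A z := fun a =>
    (HasExpGrowth.of_lipschitz (hAy a)).sub (.of_lipschitz hA)
  have hgibbs := step_add_tiltMean_sub_le hA (hAy y) hm v x
  have hgibbs' := step_add_tiltMean_sub_le hA (hAy (-y)) hm v x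
  rw [← step_add_right] at hgibbs hgibbs'
  have hmono : tiltMean m v A (fun z => c * y ^ 2 * (1 / cosh z ^ 2)) x ≤
      tiltMean m v A (fun z => (A (z + y) - A z) + (A (z + -y) - A z)) x :=
    tiltMean_mono hA (expGrowth_one_div_cosh_sq.const_mul _) ((hdiff y).add (hdiff (-y)))
      (fun z => by
        have := hc z y hy
        rw [sub_eq_add_neg z] at this
        rw [mul_one_div]
        linarith) m v x
  have hadd : tiltMean m v A (fun z => (A (z + y) - A z) + (A (z + -y) - A z)) x =
      tiltMean m v A (fun z => A (z + y) - A z) x + tiltMean m v A (fun z => A (z + -y) - A z) x :=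
    integral_add (((hdiff y).comp_affine x _).integrable_tilt hA m v x)
      (((hdiff (-y)).comp_affine x _).integrable_tilt hA m v x)
  have hmul : tiltMean m v A (fun z => c * y ^ 2 * (1 / cosh z ^ 2)) x =
      c * y ^ 2 * tiltMean m v A (fun z => 1 / cosh z ^ 2) x := integral_const_mul _ _
  rw [sub_eq_add_neg x]
  linarith

lemma HasCurvature.step (hc : HasCurvature c A) (hc₀ : 0 ≤ c) (h : IsPotential A u)
    (hm : m ∈ Set.Icc 0 1) (hv : v ∈ Set.Icc 0 1) :
    HasCurvature (c * (1 - curvatureDecay * v)) (step m v A) := fun x y hy =>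
  calc c * (1 - curvatureDecay * v) * y ^ 2 / cosh x ^ 2
      = c * y ^ 2 * (1 / cosh x ^ 2 * (1 - curvatureDecay * v)) := by ring
    _ ≤ c * y ^ 2 * tiltMean m v A (fun z => 1 / cosh z ^ 2) x := by
        gcongr
        exact h.le_tiltMean_one_div_cosh_sq hm hv x
    _ ≤ _ := hc.mul_tiltMean_le h.lipschitz hm.1 v x hy

lemma HasCurvature.le_subgradient_sub (hc : HasCurvature c A) (h : IsPotential A u) (a : ℝ) {y : ℝ}
    (hy : 0 ≤ y) (hy₁ : y ≤ 1) : c * y / cosh a ^ 2 ≤ u (a + y) - u (a - y) := by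
  rcases hy.eq_or_lt with rfl | hy
  · simp
  have hcurv := hc a y (by rwa [abs_of_pos hy])
  have hright := h.add_mul_le (a + y) (-y)
  have hleft := h.add_mul_le (a - y) y
  rw [add_neg_cancel_right] at hright
  rw [sub_add_cancel] at hleft
  refine le_of_mul_le_mul_right ?_ hy
  calc c * y / cosh a ^ 2 * y = c * y ^ 2 / cosh a ^ 2 := by ring
    _ ≤ (u (a + y) - u (a - y)) * y := by linarith

end SmallStepConvexity

section Variance

variable {A u f : ℝ → ℝ} {m v c : ℝ}

lemma integral_pow_four_stdNormal_le : ∫ g, g ^ 4 ∂stdNormal ≤ 96 := by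
  have hexp : ∀ s, HasExpGrowth fun g => exp (s * g) := fun s =>
    .exp_of_le (by fun_prop) (C := 0) (abs_nonneg s) fun y => by
      rw [zero_add, ← abs_mul]; exact le_abs_self _
  have hbound : ∀ g : ℝ, g ^ 4 ≤ 24 * (exp (1 * g) + exp (-1 * g)) := fun g => by
    have h := pow_div_factorial_le_exp |g| (abs_nonneg _) 4
    have h' := exp_mul_abs_le 1 g
    rw [pow_abs, abs_of_nonneg (by positivity : 0 ≤ g ^ 4),
      div_le_iff₀ (by positivity), show ((Nat.factorial 4 : ℕ) : ℝ) = 24 by norm_num] at h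
    rw [one_mul] at h'
    linarith
  have hhalf : exp (1 / 2) ≤ 2 := by
    have : exp (1 / 2) ^ 2 = exp 1 := by rw [← exp_nat_mul]; norm_num
    nlinarith [exp_one_lt_d9, exp_pos (1 / 2)]
  calc ∫ g, g ^ 4 ∂stdNormal
      ≤ ∫ g, 24 * (exp (1 * g) + exp (-1 * g)) ∂stdNormal :=
        integral_mono (HasExpGrowth.id.pow 4).integrable
          (((hexp 1).add (hexp (-1))).const_mul 24).integrable hbound
    _ = 24 * (exp (1 / 2) + exp (1 / 2)) := by
        rw [integral_const_mul, integral_add (hexp 1).integrable (hexp (-1)).integrable,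
          integral_exp_mul_stdNormal, integral_exp_mul_stdNormal]
        norm_num
    _ ≤ 96 := by linarith

/-- Bessel's inequality for the orthonormal functions `1` and `g`. -/
lemma sq_integral_add_sq_integral_mul_le (hf : HasExpGrowth f) :
    (∫ g, f g ∂stdNormal) ^ 2 + (∫ g, f g * g ∂stdNormal) ^ 2 ≤ ∫ g, f g ^ 2 ∂stdNormal := by
  set a := ∫ g, f g ∂stdNormal with ha
  set b := ∫ g, f g * g ∂stdNormal with hb
  have hfg := hf.mul .id
  have hlin : HasExpGrowth fun g => 2 * a * f g + 2 * b * (f g * g) :=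
    (hf.const_mul _).add (hfg.const_mul _)
  have hquad : HasExpGrowth fun g => a ^ 2 + 2 * a * b * g + b ^ 2 * g ^ 2 :=
    ((HasExpGrowth.const _).add (.const_mul _ .id)).add ((HasExpGrowth.id.pow 2).const_mul _)
  have hsq : 0 ≤ ∫ g, (f g - (a + b * g)) ^ 2 ∂stdNormal := integral_nonneg fun g => sq_nonneg _
  have hexpand : ∀ g, (f g - (a + b * g)) ^ 2 = f g ^ 2 - (2 * a * f g + 2 * b * (f g * g)) +
      (a ^ 2 + 2 * a * b * g + b ^ 2 * g ^ 2) := fun g => by ring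
  simp_rw [hexpand] at hsq
  rw [integral_add ((hf.pow 2).sub hlin).integrable hquad.integrable,
    integral_sub (hf.pow 2).integrable hlin.integrable, integral_quadratic_stdNormal,
    integral_add (hf.const_mul _).integrable (hfg.const_mul _).integrable,
    integral_const_mul, integral_const_mul, ← ha, ← hb] at hsq
  linarith

lemma integral_mul_id_eq_half_integral_odd (hf : HasExpGrowth f) :
    ∫ g, f g * g ∂stdNormal = (∫ g, (f g - f (-g)) * g ∂stdNormal) / 2 := by
  have hfg := hf.mul .id
  have hneg : HasExpGrowth fun g => f (-g) * -g := by simpa using hfg.comp_affine 0 (-1)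
  have hsplit : ∀ g, (f g - f (-g)) * g = f g * g + f (-g) * -g := fun g => by ring
  simp_rw [hsplit]
  rw [integral_add hfg.integrable hneg.integrable,
    integral_stdNormal_comp_neg fun g => f g * g]
  ring

lemma HasCurvature.le_odd_increment_mul (hc : HasCurvature c A) (hc₀ : 0 ≤ c)
    (h : IsPotential A u) {s : ℝ} (hs : 0 ≤ s) (hs₁ : s ≤ 1 / 16) (a g : ℝ) :
    c * s / cosh a ^ 2 * (g ^ 2 - 1 / 256 * g ^ 4) ≤ (u (a + s * g) - u (a + s * -g)) * g := by
  wlog hg : 0 ≤ g generalizing g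
  · have := this (-g) (by linarith)
    rw [neg_neg, even_two.neg_pow, (by decide : Even 4).neg_pow] at this
    linarith
  have hk : 0 ≤ c * s / cosh a ^ 2 := by positivity
  rcases le_total g 16 with hg₁ | hg₁
  · have hsg := hc.le_subgradient_sub h a (mul_nonneg hs hg) (by nlinarith)
    rw [sub_eq_add_neg a, ← mul_neg] at hsg
    calc c * s / cosh a ^ 2 * (g ^ 2 - 1 / 256 * g ^ 4) ≤ c * s / cosh a ^ 2 * g ^ 2 := by
          gcongr
          exact sub_le_self _ (by positivity)
      _ = c * (s * g) / cosh a ^ 2 * g := by ring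
      _ ≤ _ := by gcongr
  · have hpoly : g ^ 2 - 1 / 256 * g ^ 4 ≤ 0 := by
      have : 256 ≤ g ^ 2 := by nlinarith
      nlinarith
    have hmono := h.monotone (show a + s * -g ≤ a + s * g by nlinarith)
    exact (mul_nonpos_of_nonneg_of_nonpos hk hpoly).trans
      (mul_nonneg (sub_nonneg.2 hmono) hg)

lemma HasCurvature.le_integral_subgradient_mul (hc : HasCurvature c A) (hc₀ : 0 ≤ c)
    (h : IsPotential A u) {s : ℝ} (hs : 0 ≤ s) (hs₁ : s ≤ 1 / 16) (a : ℝ) :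
    c * s / cosh a ^ 2 / 4 ≤ ∫ g, u (a + s * g) * g ∂stdNormal := by
  have hpoly : HasExpGrowth fun g => g ^ 2 - 1 / 256 * g ^ 4 :=
    (HasExpGrowth.id.pow 2).sub ((HasExpGrowth.id.pow 4).const_mul _)
  have hu := h.hasExpGrowth_subgradient.comp_affine a s
  have hu' : HasExpGrowth fun g => u (a + s * -g) := by
    simpa using h.hasExpGrowth_subgradient.comp_affine a (-s)
  have hmean : 1 / 2 ≤ ∫ g, (g ^ 2 - 1 / 256 * g ^ 4) ∂stdNormal := by
    rw [integral_sub (HasExpGrowth.id.pow 2).integrable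
      ((HasExpGrowth.id.pow 4).const_mul _).integrable, integral_const_mul, integral_sq_stdNormal]
    linarith [integral_pow_four_stdNormal_le]
  calc c * s / cosh a ^ 2 / 4 = c * s / cosh a ^ 2 * (1 / 2) / 2 := by ring
    _ ≤ c * s / cosh a ^ 2 * (∫ g, (g ^ 2 - 1 / 256 * g ^ 4) ∂stdNormal) / 2 := by gcongr
    _ ≤ (∫ g, (u (a + s * g) - u (a + s * -g)) * g ∂stdNormal) / 2 := by
        rw [← integral_const_mul]
        refine div_le_div_of_nonneg_right ?_ two_pos.le
        exact integral_mono (hpoly.const_mul _).integrable ((hu.sub hu').mul .id).integrable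
          (hc.le_odd_increment_mul hc₀ h hs hs₁ a)
    _ = _ := (integral_mul_id_eq_half_integral_odd hu).symm

lemma cosh_le_three_mul_cosh {a x : ℝ} (h : |a - x| ≤ 1) : cosh a ≤ 3 * cosh x := by
  have hlip := (le_abs_self _).trans ((abs_sub_le_of_lipschitz lipschitz_logCosh a x).trans_eq
    (one_mul _))
  calc cosh a = exp (logCosh a) := (exp_logCosh a).symm
    _ ≤ exp (1 + logCosh x) := exp_le_exp.2 (by linarith)
    _ = exp 1 * cosh x := by rw [exp_add, exp_logCosh]
    _ ≤ 3 * cosh x := by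
        have := cosh_pos x
        gcongr
        linarith [exp_one_lt_d9]

lemma HasCurvature.sq_integral_add_le_integral_sq (hc : HasCurvature c A) (hc₀ : 0 ≤ c)
    (h : IsPotential A u) (hm : m ∈ Set.Icc 0 1) (hv : 0 ≤ v) (hv₁ : v ≤ 1 / 256) (x : ℝ) :
    (∫ g, u (x + driftIncr m v (u x) g) ∂stdNormal) ^ 2 + v * (c ^ 2 / 1296 / cosh x ^ 4) ≤
      ∫ g, u (x + driftIncr m v (u x) g) ^ 2 ∂stdNormal := by
  set a := x + m * v * u x
  have hincr : ∀ g, x + driftIncr m v (u x) g = a + √v * g := fun g => by rw [driftIncr, add_assoc]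
  have hsqrt : √v ≤ 1 / 16 := (Real.sqrt_le_left (by norm_num)).2 (by linarith)
  have hcosh : cosh a ≤ 3 * cosh x := cosh_le_three_mul_cosh (by
    rw [add_sub_cancel_left]
    linarith [abs_mul_mul_le hm hv (h.abs_le_one x)])
  have hcov : c * √v / (3 * cosh x) ^ 2 / 4 ≤ ∫ g, u (a + √v * g) * g ∂stdNormal := by
    refine le_trans ?_ (hc.le_integral_subgradient_mul hc₀ h (sqrt_nonneg v) hsqrt a)
    have := cosh_pos a
    gcongr
  have hsq : (c * √v / (3 * cosh x) ^ 2 / 4) ^ 2 = v * (c ^ 2 / 1296 / cosh x ^ 4) := by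
    have := (cosh_pos x).ne'
    field_simp
    rw [sq_sqrt hv]
    ring
  have hcov_sq := pow_le_pow_left₀ (by positivity) hcov 2
  have hbessel := sq_integral_add_sq_integral_mul_le
    (h.hasExpGrowth_subgradient.comp_affine a √v)
  simp only [hincr]
  linarith

end Variance

/-! ### Strict convexity along chains of steps -/

/-- A common step of two Parisi recursions: its variance and the exponents of the two recursions. -/
structure TwinStep where
  var : ℝ
  left : ℝ
  right : ℝ

namespace TwinStep

/-- The exponent of the midpoint of the two recursions. -/
def mid (t : TwinStep) : ℝ := (t.left + t.right) / 2

/-- The difference that the step makes to `∫ m dξ'` for the two recursions. -/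
def discrepancy (t : TwinStep) : ℝ := (t.left - t.right) * t.var

/-- A twin step with nonnegative variance and exponents in `[0, 1]`. -/
structure Admissible (t : TwinStep) : Prop where
  var_nonneg : 0 ≤ t.var
  left_mem : t.left ∈ Set.Icc 0 1
  right_mem : t.right ∈ Set.Icc 0 1

lemma Admissible.mid_mem {t : TwinStep} (ht : t.Admissible) : t.mid ∈ Set.Icc 0 1 := by
  obtain ⟨⟨ha₀, ha₁⟩, hb₀, hb₁⟩ := And.intro ht.left_mem ht.right_mem
  exact ⟨by rw [mid]; linarith, by rw [mid]; linarith⟩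

lemma Admissible.abs_left_sub_right_le {t : TwinStep} (ht : t.Admissible) :
    |t.left - t.right| ≤ 1 := by
  obtain ⟨⟨ha₀, ha₁⟩, hb₀, hb₁⟩ := And.intro ht.left_mem ht.right_mem
  exact abs_le.2 ⟨by linarith, by linarith⟩

lemma Admissible.abs_discrepancy_le {t : TwinStep} (ht : t.Admissible) :
    |t.discrepancy| ≤ t.var := by
  rw [discrepancy, abs_mul, abs_of_nonneg ht.var_nonneg]
  exact mul_le_of_le_one_left ht.var_nonneg ht.abs_left_sub_right_le

end TwinStep

/-- The potential obtained from `log cosh` by a list of twin steps, outermost step first, when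
the exponent of each step is chosen by `e`. -/
def chainPotential (e : TwinStep → ℝ) (L : List TwinStep) : ℝ → ℝ :=
  L.foldr (fun t => step (e t) t.var) logCosh

/-- The subgradient of the midpoint potential `chainPotential TwinStep.mid L`. -/
def midSubgradient : List TwinStep → ℝ → ℝ
  | [] => tanh
  | t :: L => tiltMean t.mid t.var (chainPotential TwinStep.mid L) (midSubgradient L)

/-- The total variance of a list of twin steps. -/
def totalVar (L : List TwinStep) : ℝ := (L.map TwinStep.var).sum

/-- The total discrepancy of a list of twin steps. -/
def displacement (L : List TwinStep) : ℝ := (L.map TwinStep.discrepancy).sum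

/-- The integral of the squared displacement along a list of twin steps, as a Riemann sum; it
measures the strict convexity gained along the list. -/
def convexityGain : List TwinStep → ℝ
  | [] => 0
  | t :: L => convexityGain L + displacement L ^ 2 * t.var

/-- A list of admissible twin steps, each of variance at most `η`. -/
def IsFineChain (η : ℝ) (L : List TwinStep) : Prop := ∀ t ∈ L, t.Admissible ∧ t.var ≤ η

section Chain

variable {η T : ℝ} {t : TwinStep} {L P : List TwinStep} {e : TwinStep → ℝ}

lemma chainPotential_cons (e : TwinStep → ℝ) (t : TwinStep) (L : List TwinStep) :
    chainPotential e (t :: L) = step (e t) t.var (chainPotential e L) := rfl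

lemma totalVar_cons (t : TwinStep) (L : List TwinStep) :
    totalVar (t :: L) = t.var + totalVar L := rfl

lemma displacement_cons (t : TwinStep) (L : List TwinStep) :
    displacement (t :: L) = t.discrepancy + displacement L := rfl

namespace IsFineChain

lemma head (h : IsFineChain η (t :: L)) : t.Admissible ∧ t.var ≤ η := h t List.mem_cons_self

lemma tail (h : IsFineChain η (t :: L)) : IsFineChain η L :=
  fun _ hs => h _ (List.mem_cons_of_mem _ hs)

lemma right_of_append (h : IsFineChain η (P ++ L)) : IsFineChain η L :=
  fun _ hs => h _ (List.mem_append_right _ hs)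

lemma left_of_append (h : IsFineChain η (P ++ L)) : IsFineChain η P :=
  fun _ hs => h _ (List.mem_append_left _ hs)

lemma totalVar_nonneg (h : IsFineChain η L) : 0 ≤ totalVar L :=
  List.sum_nonneg (by simpa using fun t ht => (h t ht).1.var_nonneg)

lemma abs_displacement_le (h : IsFineChain η L) : |displacement L| ≤ totalVar L := by
  induction L with
  | nil => simp [displacement, totalVar]
  | cons t L ih =>
    rw [displacement_cons, totalVar_cons]
    exact (abs_add_le _ _).trans (add_le_add h.head.1.abs_discrepancy_le (ih h.tail))

lemma lipschitz (h : IsFineChain η L) (he : ∀ t, t.Admissible → 0 ≤ e t) :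
    LipschitzWith 1 (chainPotential e L) := by
  induction L with
  | nil => exact lipschitz_logCosh
  | cons t L ih => exact lipschitz_step (ih h.tail) (he t h.head.1) _

lemma lipschitz_left (h : IsFineChain η L) : LipschitzWith 1 (chainPotential TwinStep.left L) :=
  h.lipschitz fun _ ht => ht.left_mem.1

lemma lipschitz_right (h : IsFineChain η L) : LipschitzWith 1 (chainPotential TwinStep.right L) :=
  h.lipschitz fun _ ht => ht.right_mem.1

lemma isPotential (h : IsFineChain η L) :
    IsPotential (chainPotential TwinStep.mid L) (midSubgradient L) := by
  induction L with
  | nil => exact isPotential_logCosh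
  | cons t L ih => exact (ih h.tail).step h.head.1.mid_mem.1 h.head.1.mid_mem.2 _

end IsFineChain

lemma HasCurvature.mono {A : ℝ → ℝ} {c c' : ℝ} (h : HasCurvature c A) (hc : c' ≤ c) :
    HasCurvature c' A := fun x y hy => by
  refine le_trans ?_ (h x y hy)
  gcongr

lemma exp_neg_two_mul_le {y : ℝ} (hy₀ : 0 ≤ y) (hy : y ≤ 1 / 2) : exp (-(2 * y)) ≤ 1 - y := by
  rw [exp_neg]
  refine inv_le_of_inv_le₀ (by linarith) ?_
  calc (1 - y)⁻¹ ≤ 2 * y + 1 := by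
        rw [inv_le_iff_one_le_mul₀ (by linarith)]
        nlinarith
    _ ≤ exp (2 * y) := add_one_le_exp _

lemma IsFineChain.hasCurvature (h : IsFineChain η L) (hη₁ : η ≤ 1)
    (hη : curvatureDecay * η ≤ 1 / 2) :
    HasCurvature (1 / 3 * exp (-(2 * curvatureDecay * totalVar L)))
      (chainPotential TwinStep.mid L) := by
  have hpos := curvatureDecay_pos
  induction L with
  | nil => simpa [totalVar, chainPotential] using hasCurvature_logCosh
  | cons t L ih =>
    obtain ⟨ht, htη⟩ := h.head
    have hsmall : curvatureDecay * t.var ≤ 1 / 2 := (by gcongr : _ ≤ curvatureDecay * η).trans hη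
    refine ((ih h.tail).step (by positivity) h.tail.isPotential ht.mid_mem
      ⟨ht.var_nonneg, htη.trans hη₁⟩).mono ?_
    rw [totalVar_cons, mul_add, neg_add, exp_add, mul_assoc (1 / 3), mul_comm (exp _)]
    gcongr
    rw [mul_assoc 2]
    exact exp_neg_two_mul_le (mul_nonneg hpos.le ht.var_nonneg) hsmall

end Chain

/-- The gap at `x` between the average of `A` and `B`, evaluated at two points centered at `x` and
at distance `z`, and `M`. -/
def midpointGap (A B M : ℝ → ℝ) (x z : ℝ) : ℝ := A (x + z / 2) / 2 + B (x - z / 2) / 2 - M x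

section MidpointGap

variable {A B M u : ℝ → ℝ} {K K' K'' : ℝ≥0} {t : TwinStep}

lemma expGrowth_midpointGap (hA : LipschitzWith K A) (hB : LipschitzWith K' B)
    (hM : LipschitzWith K'' M) (z : ℝ) : HasExpGrowth fun y => midpointGap A B M y z := by
  have hBz : LipschitzWith K' fun x => B (x - z / 2) := by
    simpa only [sub_eq_add_neg] using lipschitz_comp_add_right hB (-(z / 2))
  exact (((HasExpGrowth.of_lipschitz (lipschitz_comp_add_right hA (z / 2))).div_const 2).add
    ((HasExpGrowth.of_lipschitz hBz).div_const 2)).sub (.of_lipschitz hM)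

/-- All three steps are compared with the same Gaussian increment, tilted by the slope of `M`;
the quadratic costs of the three tilts cancel. -/
lemma IsPotential.integral_midpointGap_le (hM : IsPotential M u) (hA : LipschitzWith K A)
    (hB : LipschitzWith K' B) (ht : t.Admissible) (htv : t.var ≤ 1) (x z : ℝ) :
    (∫ g, midpointGap A B M (x + driftIncr t.mid t.var (u x) g)
      (z + t.discrepancy * u x) ∂stdNormal) - stepConst * t.var ^ 2 ≤
    midpointGap (Parisi.step t.left t.var A) (Parisi.step t.right t.var B)
      (Parisi.step t.mid t.var M) x z := by
  have hleft := integral_drift_sub_le_step hA ht.left_mem.1 ht.var_nonneg (x + z / 2) (u x)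
  have hright := integral_drift_sub_le_step hB ht.right_mem.1 ht.var_nonneg (x - z / 2) (u x)
  have hmid := hM.step_le_integral_drift ht.mid_mem ⟨ht.var_nonneg, htv⟩ x
  have hintA := (expGrowth_comp_driftIncr (.of_lipschitz hA) t.left t.var (u x)
    (x + z / 2)).div_const 2
  have hintB := (expGrowth_comp_driftIncr (.of_lipschitz hB) t.right t.var (u x)
    (x - z / 2)).div_const 2
  have hintM := expGrowth_comp_driftIncr (.of_lipschitz hM.lipschitz) t.mid t.var (u x) x
  have hsplit : ∀ g, midpointGap A B M (x + driftIncr t.mid t.var (u x) g)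
      (z + t.discrepancy * u x) = A (x + z / 2 + driftIncr t.left t.var (u x) g) / 2 +
        B (x - z / 2 + driftIncr t.right t.var (u x) g) / 2 -
          M (x + driftIncr t.mid t.var (u x) g) := fun g => by
    simp only [midpointGap, driftIncr, TwinStep.discrepancy, TwinStep.mid]
    ring_nf
  have hcost : t.mid * t.var * u x ^ 2 / 2 =
      t.left * t.var * u x ^ 2 / 2 / 2 + t.right * t.var * u x ^ 2 / 2 / 2 := by
    rw [TwinStep.mid]
    ring
  simp_rw [hsplit]
  rw [integral_sub (hintA.add hintB).integrable hintM.integrable,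
    integral_add hintA.integrable hintB.integrable, integral_div, integral_div, midpointGap]
  linarith

lemma HasCurvature.sq_add_mul_integral_le {c m v : ℝ} (hc : HasCurvature c M) (hc₀ : 0 ≤ c)
    (h : IsPotential M u) (hm : m ∈ Set.Icc 0 1) (hv : 0 ≤ v) (hv₁ : v ≤ 1 / 256) (x z D : ℝ) :
    (z + D * ∫ g, u (x + driftIncr m v (u x) g) ∂stdNormal) ^ 2 +
        D ^ 2 * (v * (c ^ 2 / 1296 / cosh x ^ 4)) ≤
      ∫ g, (z + D * u (x + driftIncr m v (u x) g)) ^ 2 ∂stdNormal := by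
  have hvar := mul_le_mul_of_nonneg_left (hc.sq_integral_add_le_integral_sq hc₀ h hm hv hv₁ x)
    (sq_nonneg D)
  have hu := expGrowth_comp_driftIncr h.hasExpGrowth_subgradient m v (u x) x
  have hexpand : ∀ g, (z + D * u (x + driftIncr m v (u x) g)) ^ 2 =
      z ^ 2 + 2 * z * D * u (x + driftIncr m v (u x) g) +
        D ^ 2 * u (x + driftIncr m v (u x) g) ^ 2 := fun g => by ring
  simp_rw [hexpand]
  rw [integral_add ((HasExpGrowth.const _).add (hu.const_mul _)).integrable
    ((hu.pow 2).const_mul _).integrable, integral_add (integrable_const _)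
    (hu.const_mul _).integrable, integral_const_mul, integral_const_mul, integral_const,
    probReal_univ, one_smul]
  linarith

end MidpointGap

/-- The midpoint gap of the recursions along a chain. -/
def chainGap (L : List TwinStep) : ℝ → ℝ → ℝ :=
  midpointGap (chainPotential TwinStep.left L) (chainPotential TwinStep.right L)
    (chainPotential TwinStep.mid L)

/-- The fraction of the squared displacement that each unit of variance adds to the midpoint gap at
`x`, up to the factor `1 / cosh x ^ 4`, along chains of total variance at most `T`. -/
def gainRate (T : ℝ) : ℝ := (1 / 3 * exp (-(2 * curvatureDecay * T))) ^ 2 / 1296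

/-- The error per unit of variance in the recursion for the midpoint gap, along chains of total
variance at most `T` with steps of variance at most `η`. -/
def driftError (T η : ℝ) : ℝ := 40 * T ^ 2 * stepConst ^ 2 * √η

/-- The coefficient of `x ^ 2 + 4` in `quadBound`. -/
def quadPenalty (T r b : ℝ) (L : List TwinStep) : ℝ :=
  (b + r * T ^ 2 * totalVar L) * exp (totalVar L)

/-- A function of `x` and `z` that is stable under the Gaussian averages of
`IsPotential.integral_midpointGap_le`, so that it bounds the midpoint gap from below by induction
on the chain. -/
def quadBound (T η s r b : ℝ) (L : List TwinStep) (x z : ℝ) : ℝ :=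
  (z + displacement L * midSubgradient L x) ^ 2 +
    (s * convexityGain L - driftError T η * totalVar L) - quadPenalty T r b L * (x ^ 2 + 4)

section QuadBound

variable {T η s r b κ : ℝ} {t : TwinStep} {L P : List TwinStep} {x z : ℝ}

lemma convexityGain_cons (t : TwinStep) (L : List TwinStep) :
    convexityGain (t :: L) = convexityGain L + displacement L ^ 2 * t.var := rfl

lemma IsFineChain.abs_midSubgradient_le (h : IsFineChain η L) (x : ℝ) : |midSubgradient L x| ≤ 1 :=
  h.isPotential.abs_le_one x

lemma IsFineChain.abs_discrepancy_mul_le (h : IsFineChain η (t :: L)) (x : ℝ) :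
    |t.discrepancy * midSubgradient L x| ≤ t.var := by
  rw [abs_mul]
  exact (mul_le_of_le_one_right (abs_nonneg _) (h.tail.abs_midSubgradient_le x)).trans
    h.head.1.abs_discrepancy_le

lemma IsFineChain.abs_add_totalVar_le (h : IsFineChain η (t :: L))
    (hz : |z| + totalVar (t :: L) ≤ T) (x : ℝ) :
    |z + t.discrepancy * midSubgradient L x| + totalVar L ≤ T := by
  rw [totalVar_cons] at hz
  linarith [abs_add_le z (t.discrepancy * midSubgradient L x), h.abs_discrepancy_mul_le x]

lemma quadPenalty_mul_add_le (hr : 0 ≤ r) (hb : 0 ≤ b) (h : IsFineChain η (t :: L)) :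
    quadPenalty T r b L * (1 + t.var) + r * T ^ 2 * t.var ≤ quadPenalty T r b (t :: L) := by
  have hv := h.head.1.var_nonneg
  have hL := h.tail.totalVar_nonneg
  have hexp : 1 ≤ exp (t.var + totalVar L) := one_le_exp (by linarith)
  have hexp' : 1 + t.var ≤ exp t.var := by linarith [add_one_le_exp t.var]
  calc quadPenalty T r b L * (1 + t.var) + r * T ^ 2 * t.var
      ≤ quadPenalty T r b L * exp t.var + r * T ^ 2 * t.var * exp (t.var + totalVar L) := by
        refine add_le_add ?_ (le_mul_of_one_le_right (by positivity) hexp)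
        gcongr
        rw [quadPenalty]
        positivity
    _ = quadPenalty T r b (t :: L) := by
        rw [quadPenalty, quadPenalty, totalVar_cons, exp_add]
        ring

lemma sq_sub_two_mul_abs_mul_abs_sub_le (X Y : ℝ) : Y ^ 2 - 2 * |Y| * |Y - X| ≤ X ^ 2 := by
  have hle : Y * (Y - X) ≤ |Y| * |Y - X| := by
    rw [← abs_mul]
    exact le_abs_self _
  linarith [sq_nonneg (Y - X)]

lemma IsFineChain.abs_midSubgradient_cons_sub_le (h : IsFineChain η (t :: L)) (hη : η ≤ 1)
    (hT : 1 ≤ T) (hz : |z| + totalVar (t :: L) ≤ T) (x : ℝ) :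
    |z + displacement (t :: L) * midSubgradient (t :: L) x -
      (z + t.discrepancy * midSubgradient L x + displacement L * ∫ g, midSubgradient L
        (x + driftIncr t.mid t.var (midSubgradient L x) g) ∂stdNormal)| ≤
      20 * T * stepConst ^ 2 * √η * t.var := by
  obtain ⟨ht, htη⟩ := h.head
  have hv := ht.var_nonneg
  have hpot := h.tail.isPotential
  have hvar : t.var ∈ Set.Icc 0 1 := ⟨hv, htη.trans hη⟩
  set u := midSubgradient L x
  set u' := midSubgradient (t :: L) x
  set M := ∫ g, midSubgradient L (x + driftIncr t.mid t.var u g) ∂stdNormal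
  have hmean : |u' - M| ≤ 2 * 4 * stepConst ^ 2 * (t.var * √t.var) :=
    hpot.abs_tiltMean_sub_drift_le hpot.lipschitz_subgradient ht.mid_mem hvar x
  have hclose : |u' - u| ≤ 3 * 4 * stepConst ^ 2 * √t.var :=
    hpot.abs_tiltMean_sub_le hpot.lipschitz_subgradient ht.mid_mem hvar x
  have hD : |displacement L| ≤ T := h.tail.abs_displacement_le.trans
    (by linarith [abs_nonneg (z + t.discrepancy * u), h.abs_add_totalVar_le hz x])
  calc |z + displacement (t :: L) * u' - (z + t.discrepancy * u + displacement L * M)|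
      = |displacement L * (u' - M) + t.discrepancy * (u' - u)| := by
        rw [displacement_cons]
        ring_nf
    _ ≤ T * (2 * 4 * stepConst ^ 2 * (t.var * √t.var)) +
          t.var * (3 * 4 * stepConst ^ 2 * √t.var) := by
        refine (abs_add_le _ _).trans ?_
        rw [abs_mul, abs_mul]
        gcongr
        exact ht.abs_discrepancy_le
    _ ≤ T * (2 * 4 * stepConst ^ 2 * (t.var * √η)) +
          T * t.var * (3 * 4 * stepConst ^ 2 * √η) := by
        gcongr
        exact le_mul_of_one_le_left hv hT
    _ = 20 * T * stepConst ^ 2 * √η * t.var := by ring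

lemma IsFineChain.abs_add_displacement_mul_le (h : IsFineChain η L) (x : ℝ)
    (hz : |z| + totalVar L ≤ T) : |z + displacement L * midSubgradient L x| ≤ T := calc
  |z + displacement L * midSubgradient L x| ≤ |z| + |displacement L| * |midSubgradient L x| :=
    (abs_add_le _ _).trans_eq (by rw [abs_mul])
  _ ≤ |z| + totalVar L * 1 := by
    gcongr
    exacts [h.totalVar_nonneg, h.abs_displacement_le, h.abs_midSubgradient_le x]
  _ ≤ T := by rwa [mul_one]

lemma IsFineChain.sq_midSubgradient_sub_le (h : IsFineChain η (t :: L)) (hη : η ≤ 1) (hT : 1 ≤ T)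
    (hz : |z| + totalVar (t :: L) ≤ T) (x : ℝ) :
    (z + displacement (t :: L) * midSubgradient (t :: L) x) ^ 2 - driftError T η * t.var ≤
      (z + t.discrepancy * midSubgradient L x + displacement L * ∫ g, midSubgradient L
        (x + driftIncr t.mid t.var (midSubgradient L x) g) ∂stdNormal) ^ 2 := by
  have hdiff := h.abs_midSubgradient_cons_sub_le hη hT hz x
  have hbound := h.abs_add_displacement_mul_le x hz
  set Y := z + displacement (t :: L) * midSubgradient (t :: L) x
  set X := z + t.discrepancy * midSubgradient L x + displacement L * ∫ g, midSubgradient L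
    (x + driftIncr t.mid t.var (midSubgradient L x) g) ∂stdNormal
  calc Y ^ 2 - driftError T η * t.var
      = Y ^ 2 - 2 * T * (20 * T * stepConst ^ 2 * √η * t.var) := by
        rw [driftError]
        ring
    _ ≤ Y ^ 2 - 2 * |Y| * |Y - X| := by gcongr
    _ ≤ X ^ 2 := sq_sub_two_mul_abs_mul_abs_sub_le X Y

lemma IsFineChain.expGrowth_sq_add_midSubgradient (h : IsFineChain η L) (m v U x z : ℝ) :
    HasExpGrowth fun g =>
      (z + displacement L * midSubgradient L (x + driftIncr m v U g)) ^ 2 :=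
  ((HasExpGrowth.const z).add ((expGrowth_comp_driftIncr
    h.isPotential.hasExpGrowth_subgradient m v U x).const_mul (displacement L))).pow 2

lemma expGrowth_sq_drift_add (m v U x : ℝ) :
    HasExpGrowth fun g => (x + driftIncr m v U g) ^ 2 + 4 :=
  (expGrowth_comp_driftIncr (HasExpGrowth.id.pow 2) m v U x).add (.const 4)

variable (T η s r b) in
lemma IsFineChain.expGrowth_quadBound (h : IsFineChain η L) (m v U x z : ℝ) :
    HasExpGrowth fun g => quadBound T η s r b L (x + driftIncr m v U g) z :=
  ((h.expGrowth_sq_add_midSubgradient m v U x z).add (.const _)).sub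
    ((expGrowth_sq_drift_add m v U x).const_mul _)

variable (T η s r b) in
lemma IsFineChain.integral_quadBound (h : IsFineChain η L) (m v U x z : ℝ) :
    ∫ g, quadBound T η s r b L (x + driftIncr m v U g) z ∂stdNormal =
      ∫ g, (z + displacement L * midSubgradient L (x + driftIncr m v U g)) ^ 2 ∂stdNormal +
        (s * convexityGain L - driftError T η * totalVar L) -
        quadPenalty T r b L * ∫ g, ((x + driftIncr m v U g) ^ 2 + 4) ∂stdNormal := by
  have hsq := h.expGrowth_sq_add_midSubgradient m v U x z
  have hx := (expGrowth_sq_drift_add m v U x).const_mul (quadPenalty T r b L)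
  simp only [quadBound]
  rw [integral_sub (hsq.add (.const _)).integrable hx.integrable,
    integral_add hsq.integrable (integrable_const _), integral_const_mul, integral_const,
    probReal_univ, one_smul]

lemma IsFineChain.quadBound_cons_le_integral (h : IsFineChain η (t :: L)) (hη : η ≤ 1 / 256)
    (hη' : curvatureDecay * η ≤ 1 / 2) (hT : 1 ≤ T) (hr : 0 ≤ r) (hb : 0 ≤ b)
    (hs : ∀ x, s - r * (x ^ 2 + 4) ≤ gainRate T / cosh x ^ 4)
    (hz : |z| + totalVar (t :: L) ≤ T) (x : ℝ) :
    quadBound T η s r b (t :: L) x z ≤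
      ∫ g, quadBound T η s r b L (x + driftIncr t.mid t.var (midSubgradient L x) g)
        (z + t.discrepancy * midSubgradient L x) ∂stdNormal := by
  obtain ⟨ht, htη⟩ := h.head
  have hv := ht.var_nonneg
  have hpos := curvatureDecay_pos
  have hTL : totalVar L ≤ T := by
    linarith [abs_nonneg (z + t.discrepancy * midSubgradient L x), h.abs_add_totalVar_le hz x]
  have hcurv : HasCurvature (1 / 3 * exp (-(2 * curvatureDecay * T)))
      (chainPotential TwinStep.mid L) :=
    (h.tail.hasCurvature (hη.trans (by norm_num)) hη').mono (by gcongr)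
  have hgain := hcurv.sq_add_mul_integral_le (by positivity) h.tail.isPotential ht.mid_mem hv
    (htη.trans hη) x (z + t.discrepancy * midSubgradient L x) (displacement L)
  have hmean := h.sq_midSubgradient_sub_le (hη.trans (by norm_num)) hT hz x
  have hmoment := mul_le_mul_of_nonneg_left (integral_sq_drift_add_le ht.mid_mem
    ⟨hv, htη.trans (hη.trans (by norm_num))⟩ (h.tail.abs_midSubgradient_le x) x)
    (show 0 ≤ quadPenalty T r b L by
      have := h.tail.totalVar_nonneg
      rw [quadPenalty]
      positivity)
  have hpenalty := mul_le_mul_of_nonneg_right (quadPenalty_mul_add_le (T := T) hr hb h)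
    (show 0 ≤ x ^ 2 + 4 by positivity)
  have hrate : s * (displacement L ^ 2 * t.var) - r * T ^ 2 * t.var * (x ^ 2 + 4) ≤
      displacement L ^ 2 * (t.var * (gainRate T / cosh x ^ 4)) :=
    calc s * (displacement L ^ 2 * t.var) - r * T ^ 2 * t.var * (x ^ 2 + 4)
        ≤ s * (displacement L ^ 2 * t.var) - r * displacement L ^ 2 * t.var * (x ^ 2 + 4) := by
          rw [← sq_abs (displacement L)]
          gcongr
          exact h.tail.abs_displacement_le.trans hTL
      _ = displacement L ^ 2 * t.var * (s - r * (x ^ 2 + 4)) := by ring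
      _ ≤ displacement L ^ 2 * t.var * (gainRate T / cosh x ^ 4) := by
          gcongr
          exact hs x
      _ = _ := by ring
  rw [h.tail.integral_quadBound, quadBound, convexityGain_cons,
    totalVar_cons]
  rw [gainRate] at hrate
  linarith

lemma IsFineChain.quadBound_le_midpointGap (h : IsFineChain η L) (hη : η ≤ 1 / 256)
    (hη' : curvatureDecay * η ≤ 1 / 2) (hT : 1 ≤ T) (hr : 0 ≤ r) (hb : 0 ≤ b) (hκ : 0 ≤ κ)
    (hs : ∀ x, s - r * (x ^ 2 + 4) ≤ gainRate T / cosh x ^ 4)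
    (hκb : ∀ x z, |z| ≤ T →
      κ * (z ^ 2 - b * (x ^ 2 + 4)) ≤ midpointGap logCosh logCosh logCosh x z)
    (x : ℝ) (hz : |z| + totalVar L ≤ T) :
    κ * quadBound T η s r b L x z - stepConst * η * totalVar L ≤ chainGap L x z := by
  induction L generalizing x z with
  | nil =>
    have hbase := hκb x z (by simpa [totalVar] using hz)
    simpa [chainGap, quadBound, quadPenalty, totalVar, displacement, convexityGain, chainPotential]
      using hbase
  | cons t L ih =>
    obtain ⟨ht, htη⟩ := h.head
    have hpot := h.tail.isPotential
    have hinteg := h.tail.expGrowth_quadBound T η s r b t.mid t.var (midSubgradient L x) x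
      (z + t.discrepancy * midSubgradient L x)
    have hrec := integral_mono ((hinteg.const_mul κ).integrable.sub (integrable_const _))
      (expGrowth_comp_driftIncr (expGrowth_midpointGap h.tail.lipschitz_left h.tail.lipschitz_right
        hpot.lipschitz _) _ _ _ _).integrable
      (fun g => ih h.tail (x + driftIncr t.mid t.var (midSubgradient L x) g)
        (h.abs_add_totalVar_le hz x))
    simp only [Pi.sub_apply] at hrec
    rw [integral_sub (hinteg.const_mul κ).integrable (integrable_const _), integral_const_mul,
      integral_const, probReal_univ, one_smul] at hrec
    have hstep := hpot.integral_midpointGap_le h.tail.lipschitz_left h.tail.lipschitz_right ht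
      (htη.trans (hη.trans (by norm_num))) x z
    have hquad := mul_le_mul_of_nonneg_left
      (h.quadBound_cons_le_integral (s := s) hη hη' hT hr hb hs hz x) hκ
    have hsq : stepConst * t.var ^ 2 ≤ stepConst * η * t.var := by
      rw [sq, ← mul_assoc]
      have := ht.var_nonneg
      have := one_le_stepConst
      gcongr
    rw [totalVar_cons, mul_add]
    simp only [chainGap, chainPotential_cons] at hrec ⊢
    linarith

end QuadBound

section ConvexityGain

variable {η T : ℝ} {t : TwinStep} {L P : List TwinStep}

lemma add_pow_three_sub_le {X v : ℝ} (hX : 0 ≤ X) (hv : 0 ≤ v) (hXT : X ≤ T) (hvη : v ≤ η)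
    (hη : η ≤ 1) : (X + v) ^ 3 / 3 - (T + 1) * η * v ≤ X ^ 3 / 3 + X ^ 2 * v := by
  have : 0 ≤ η := hv.trans hvη
  have : 0 ≤ T := hX.trans hXT
  calc (X + v) ^ 3 / 3 - (T + 1) * η * v
      = X ^ 3 / 3 + X ^ 2 * v + (X * v * v + v * v * v / 3 - (T + 1) * η * v) := by ring
    _ ≤ X ^ 3 / 3 + X ^ 2 * v + (T * η * v + 1 * η * v - (T + 1) * η * v) := by
        have hcube : v * v * v / 3 ≤ 1 * η * v := (div_le_self (by positivity) (by norm_num)).trans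
          (by gcongr; exact hvη.trans hη)
        gcongr
    _ = X ^ 3 / 3 + X ^ 2 * v := by ring

lemma IsFineChain.displacement_pow_three_sub_le (h : IsFineChain η L) (hη : η ≤ 1)
    (hT : totalVar L ≤ T) :
    |displacement L| ^ 3 / 3 - (T + 1) * η * totalVar L ≤ convexityGain L := by
  induction L with
  | nil => simp [displacement, totalVar, convexityGain]
  | cons t L ih =>
    obtain ⟨ht, htη⟩ := h.head
    have hv := ht.var_nonneg
    rw [totalVar_cons] at hT
    have hrec := ih h.tail (by linarith)
    have hstep := add_pow_three_sub_le (abs_nonneg (displacement L)) hv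
      (h.tail.abs_displacement_le.trans (by linarith : totalVar L ≤ T)) htη hη
    have hcube : |displacement (t :: L)| ^ 3 ≤ (|displacement L| + t.var) ^ 3 := by
      gcongr
      rw [displacement_cons, add_comm]
      exact (abs_add_le _ _).trans (by gcongr; exact ht.abs_discrepancy_le)
    rw [totalVar_cons, convexityGain_cons, ← sq_abs (displacement L)]
    linarith

lemma IsFineChain.convexityGain_le_append (h : IsFineChain η (P ++ L)) :
    convexityGain L ≤ convexityGain (P ++ L) := by
  induction P with
  | nil => rfl
  | cons t P ih =>
    have hsq := mul_nonneg (sq_nonneg (displacement (P ++ L))) h.head.1.var_nonneg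
    rw [List.cons_append, convexityGain_cons]
    linarith [ih h.tail]

end ConvexityGain

/-! ### Refinement of chains -/

/-- The `n`-th part of a twin step. -/
def TwinStep.divide (n : ℕ) (t : TwinStep) : TwinStep := ⟨t.var / n, t.left, t.right⟩

/-- The chain in which every step is divided into `n` equal steps. -/
def refine (n : ℕ) (L : List TwinStep) : List TwinStep :=
  L.flatMap fun t => List.replicate n (t.divide n)

section Refine

variable {η T : ℝ} {n : ℕ} {t : TwinStep} {L P : List TwinStep} {e : TwinStep → ℝ}

lemma refine_cons (n : ℕ) (t : TwinStep) (L : List TwinStep) :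
    refine n (t :: L) = List.replicate n (t.divide n) ++ refine n L := rfl

lemma refine_append (n : ℕ) (L L' : List TwinStep) :
    refine n (L ++ L') = refine n L ++ refine n L' :=
  List.flatMap_append

lemma totalVar_append (L L' : List TwinStep) : totalVar (L ++ L') = totalVar L + totalVar L' := by
  simp [totalVar]

lemma totalVar_refine (hn : n ≠ 0) (L : List TwinStep) : totalVar (refine n L) = totalVar L := by
  induction L with
  | nil => rfl
  | cons t L ih =>
    rw [refine_cons, totalVar_append, ih, totalVar_cons]
    simp [totalVar, TwinStep.divide]
    field_simp

lemma displacement_refine (hn : n ≠ 0) (L : List TwinStep) :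
    displacement (refine n L) = displacement L := by
  induction L with
  | nil => rfl
  | cons t L ih =>
    rw [refine_cons, displacement_cons, ← ih]
    simp [displacement, TwinStep.divide, TwinStep.discrepancy]
    field_simp

lemma IsFineChain.refine (h : IsFineChain η L) (n : ℕ) : IsFineChain (η / n) (refine n L) := by
  intro s hs
  obtain ⟨t, ht, hst⟩ := List.mem_flatMap.1 hs
  obtain rfl := List.eq_of_mem_replicate hst
  obtain ⟨htadm, htη⟩ := h t ht
  exact ⟨⟨div_nonneg htadm.var_nonneg n.cast_nonneg, htadm.left_mem, htadm.right_mem⟩,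
    div_le_div_of_nonneg_right htη n.cast_nonneg⟩

lemma chainPotential_replicate_append (n : ℕ) (ht : 0 ≤ t.var)
    (hL : LipschitzWith 1 (chainPotential e L)) :
    chainPotential e (List.replicate n t ++ L) = step (e t) (n * t.var) (chainPotential e L) := by
  induction n with
  | zero => simp [step_zero_variance]
  | succ n ih =>
    ext x
    rw [List.replicate_succ, List.cons_append, chainPotential_cons, ih,
      step_step hL _ ht (by positivity)]
    push_cast
    ring_nf

lemma IsFineChain.chainPotential_refine (h : IsFineChain η L) (hn : n ≠ 0)
    (he : ∀ t, t.Admissible → 0 ≤ e t) (hen : ∀ t, e (t.divide n) = e t) :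
    chainPotential e (Parisi.refine n L) = chainPotential e L := by
  induction L with
  | nil => rfl
  | cons t L ih =>
    have hvar : n * (t.divide n).var = t.var := by
      rw [TwinStep.divide]
      field_simp
    rw [refine_cons, chainPotential_replicate_append n
      (div_nonneg h.head.1.var_nonneg n.cast_nonneg) (ih h.tail ▸ h.tail.lipschitz he), ih h.tail,
      hvar, hen, chainPotential_cons]

lemma IsFineChain.chainGap_refine (h : IsFineChain η L) (hn : n ≠ 0) :
    chainGap (Parisi.refine n L) = chainGap L := by
  rw [chainGap, h.chainPotential_refine hn (fun _ ht => ht.left_mem.1) fun _ => rfl,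
    h.chainPotential_refine hn (fun _ ht => ht.right_mem.1) fun _ => rfl,
    h.chainPotential_refine hn (fun _ ht => ht.mid_mem.1) fun _ => rfl, chainGap]

end Refine

/-! ### The uniform lower bound for the midpoint gap -/

lemma cosh_le_cosh_add_one {x R : ℝ} (h : x ^ 2 ≤ R) (hR : 0 ≤ R) : cosh x ≤ cosh (R + 1) := by
  rw [cosh_le_cosh, abs_of_nonneg (by linarith : 0 ≤ R + 1)]
  nlinarith [sq_abs x, abs_nonneg x]

lemma exists_mul_one_sub_le_div_cosh {K r : ℝ} (hK : 0 < K) (hr : 0 < r) :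
    ∃ s > 0, ∀ x, s * (1 - r * (x ^ 2 + 4)) ≤ K / cosh x ^ 4 := by
  refine ⟨K / cosh (1 / r + 1) ^ 4, by positivity, fun x => ?_⟩
  by_cases hx : x ^ 2 ≤ 1 / r
  · calc K / cosh (1 / r + 1) ^ 4 * (1 - r * (x ^ 2 + 4)) ≤ K / cosh (1 / r + 1) ^ 4 :=
          mul_le_of_le_one_right (by positivity) (sub_le_self _ (by positivity))
      _ ≤ K / cosh x ^ 4 := by
          gcongr
          exact cosh_le_cosh_add_one hx (by positivity)
  · rw [not_le, div_lt_iff₀ hr] at hx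
    exact (mul_nonpos_of_nonneg_of_nonpos (by positivity) (by linarith)).trans (by positivity)

lemma midpointGap_logCosh_nonneg (x z : ℝ) : 0 ≤ midpointGap logCosh logCosh logCosh x z := by
  have hright := isPotential_logCosh.add_mul_le x (z / 2)
  have hleft := isPotential_logCosh.add_mul_le x (-(z / 2))
  rw [← sub_eq_add_neg] at hleft
  rw [midpointGap]
  linarith

lemma sq_div_cosh_le_midpointGap_logCosh {x z T : ℝ} (hz : |z| ≤ T) :
    z ^ 2 / (8 * cosh x ^ 2 * (1 + sinh T ^ 2)) ≤ midpointGap logCosh logCosh logCosh x z := by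
  have hgap := le_logCosh_second_difference (x := x) (y := z / 2) (Y := T)
    (by rw [abs_div, abs_two]; linarith [abs_nonneg z])
  calc z ^ 2 / (8 * cosh x ^ 2 * (1 + sinh T ^ 2))
      = (z / 2) ^ 2 / cosh x ^ 2 / (1 + sinh T ^ 2) / 2 := by
        field_simp
        ring
    _ ≤ _ := by
        rw [midpointGap]
        linarith

lemma exists_mul_sub_le_midpointGap_logCosh (T : ℝ) {b : ℝ} (hb : 0 < b) :
    ∃ κ > 0, ∀ x z, |z| ≤ T →
      κ * (z ^ 2 - b * (x ^ 2 + 4)) ≤ midpointGap logCosh logCosh logCosh x z := by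
  set R := T ^ 2 / b with hR
  refine ⟨1 / (8 * cosh (R + 1) ^ 2 * (1 + sinh T ^ 2)), by positivity, fun x z hz => ?_⟩
  by_cases hx : x ^ 2 ≤ R
  · refine le_trans ?_ (sq_div_cosh_le_midpointGap_logCosh hz)
    calc 1 / (8 * cosh (R + 1) ^ 2 * (1 + sinh T ^ 2)) * (z ^ 2 - b * (x ^ 2 + 4))
        ≤ 1 / (8 * cosh (R + 1) ^ 2 * (1 + sinh T ^ 2)) * z ^ 2 := by
          gcongr
          exact sub_le_self _ (by positivity)
      _ ≤ z ^ 2 / (8 * cosh x ^ 2 * (1 + sinh T ^ 2)) := by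
          rw [one_div_mul_eq_div]
          gcongr
          exact cosh_le_cosh_add_one hx (by positivity)
  · refine le_trans ?_ (midpointGap_logCosh_nonneg x z)
    rw [hR, not_le, div_lt_iff₀ hb] at hx
    have hzT : z ^ 2 ≤ T ^ 2 := sq_le_sq' (neg_le_of_abs_le hz) (le_of_abs_le hz)
    exact mul_nonpos_of_nonneg_of_nonpos (by positivity) (by linarith)

section UniformGap

variable {T η s r b d : ℝ} {L P : List TwinStep}

lemma IsFineChain.le_quadBound (h : IsFineChain η (P ++ L)) (hη₀ : 0 ≤ η) (hη : η ≤ 1)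
    (hr : 0 ≤ r) (hb : 0 ≤ b) (hs : 0 ≤ s) (hT : totalVar (P ++ L) ≤ T) (hd : 0 ≤ d)
    (hdL : d ≤ |displacement L|) (x : ℝ) :
    s * (d ^ 3 / 3) - (b + r * T ^ 3) * exp T * (x ^ 2 + 4) -
      (s * (T + 1) * η * T + driftError T η * T) ≤ quadBound T η s r b (P ++ L) x 0 := by
  have hL : 0 ≤ totalVar L := h.right_of_append.totalVar_nonneg
  have hPL : 0 ≤ totalVar (P ++ L) := h.totalVar_nonneg
  have hT₀ : 0 ≤ T := hPL.trans hT
  have hLT : totalVar L ≤ T := by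
    rw [totalVar_append] at hT
    linarith [h.left_of_append.totalVar_nonneg]
  have hgain : d ^ 3 / 3 - (T + 1) * η * T ≤ convexityGain (P ++ L) :=
    calc d ^ 3 / 3 - (T + 1) * η * T
        ≤ |displacement L| ^ 3 / 3 - (T + 1) * η * totalVar L := by gcongr
      _ ≤ convexityGain L := h.right_of_append.displacement_pow_three_sub_le hη hLT
      _ ≤ convexityGain (P ++ L) := h.convexityGain_le_append
  have hpenalty : quadPenalty T r b (P ++ L) * (x ^ 2 + 4) ≤
      (b + r * T ^ 3) * exp T * (x ^ 2 + 4) :=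
    calc quadPenalty T r b (P ++ L) * (x ^ 2 + 4)
        ≤ (b + r * T ^ 2 * T) * exp T * (x ^ 2 + 4) := by
          rw [quadPenalty]
          gcongr
      _ = _ := by ring
  have herror : driftError T η * totalVar (P ++ L) ≤ driftError T η * T :=
    mul_le_mul_of_nonneg_left hT (by rw [driftError]; positivity)
  rw [quadBound]
  linarith [mul_le_mul_of_nonneg_left hgain hs,
    sq_nonneg (0 + displacement (P ++ L) * midSubgradient (P ++ L) x)]

lemma exists_fineness (T s κ : ℝ) {ε : ℝ} (hε : 0 < ε) :
    ∃ η > 0, η ≤ 1 / 256 ∧ curvatureDecay * η ≤ 1 / 2 ∧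
      κ * (s * (T + 1) * η * T + driftError T η * T) + stepConst * η * T ≤ ε := by
  have herror : Tendsto (fun η => κ * (s * (T + 1) * η * T + driftError T η * T) +
      stepConst * η * T) (𝓝 0) (𝓝 0) := by
    unfold driftError
    exact Continuous.tendsto' (by fun_prop) _ _ (by simp)
  have hdecay : Tendsto (fun η => curvatureDecay * η) (𝓝 0) (𝓝 0) :=
    Continuous.tendsto' (by fun_prop) _ _ (by simp)
  have hsmall : ∀ᶠ η in 𝓝[>] (0 : ℝ), η ≤ 1 / 256 ∧ curvatureDecay * η ≤ 1 / 2 ∧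
      κ * (s * (T + 1) * η * T + driftError T η * T) + stepConst * η * T ≤ ε :=
    nhdsWithin_le_nhds ((eventually_le_nhds (by norm_num)).and
      ((hdecay.eventually_le_const (by norm_num)).and (herror.eventually_le_const hε)))
  obtain ⟨η, hη, hη₀⟩ := (hsmall.and self_mem_nhdsWithin).exists
  exact ⟨η, hη₀, hη⟩

lemma exists_le_chainGap_of_fine (x : ℝ) (hT : 1 ≤ T) (hd : 0 < d) :
    ∃ ε > 0, ∃ η > 0, ∀ P L, IsFineChain η (P ++ L) → totalVar (P ++ L) ≤ T →
      d ≤ |displacement L| → ε ≤ chainGap (P ++ L) x 0 := by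
  have : 0 < T := by linarith
  have hrate : 0 < gainRate T := by
    rw [gainRate]
    positivity
  set H := exp T * (x ^ 2 + 4) with hH
  have hH₀ : 0 < H := by positivity
  obtain ⟨s, hs₀, hs⟩ := exists_mul_one_sub_le_div_cosh hrate
    (show 0 < d ^ 3 / (12 * T ^ 3 * H) by positivity)
  set r := s * d ^ 3 / (12 * T ^ 3 * H) with hr
  set b := s * d ^ 3 / (12 * H) with hb
  obtain ⟨κ, hκ₀, hκ⟩ := exists_mul_sub_le_midpointGap_logCosh T (show 0 < b by positivity)
  obtain ⟨η, hη₀, hη, hη', herror⟩ := exists_fineness T s κ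
    (show 0 < κ * (s * d ^ 3 / 12) by positivity)
  refine ⟨κ * (s * d ^ 3 / 12), by positivity, η, hη₀, fun P L hfine htot hdL => ?_⟩
  have hquad := hfine.le_quadBound hη₀.le (hη.trans (by norm_num)) (show 0 ≤ r by positivity)
    (show 0 ≤ b by positivity) hs₀.le htot hd.le hdL x
  have hpenalty : (b + r * T ^ 3) * exp T * (x ^ 2 + 4) = s * d ^ 3 / 6 := by
    rw [mul_assoc _ (exp T), ← hH, hb, hr]
    field_simp
    norm_num
  have hgap := hfine.quadBound_le_midpointGap hη hη' hT (show 0 ≤ r by positivity)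
    (show 0 ≤ b by positivity) hκ₀.le
    (fun y => (hs y).trans' (by rw [hr]; ring_nf; rfl)) hκ x (z := 0) (by simpa using htot)
  have hone := one_le_stepConst
  have htail : stepConst * η * totalVar (P ++ L) ≤ stepConst * η * T := by gcongr
  have hκquad := mul_le_mul_of_nonneg_left hquad hκ₀.le
  rw [hpenalty] at hκquad
  linarith

theorem exists_le_chainGap (x : ℝ) (hT : 1 ≤ T) (hd : 0 < d) :
    ∃ ε > 0, ∀ P L, IsFineChain T (P ++ L) → totalVar (P ++ L) ≤ T → d ≤ |displacement L| →
      ε ≤ chainGap (P ++ L) x 0 := by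
  obtain ⟨ε, hε, η, hη, hgap⟩ := exists_le_chainGap_of_fine x hT hd
  obtain ⟨n, hn⟩ := exists_nat_gt (T / η)
  have hn₀ : (0 : ℝ) < n := lt_trans (by positivity) hn
  have hne : n ≠ 0 := by exact_mod_cast hn₀.ne'
  have hle : T / n ≤ η := by
    rw [div_lt_iff₀ hη] at hn
    rw [div_le_iff₀ hn₀]
    linarith
  refine ⟨ε, hε, fun P L hchain htot hdL => ?_⟩
  rw [← hchain.chainGap_refine hne, refine_append]
  refine hgap _ _ ?_ ?_ (by rwa [displacement_refine hne])
  · rw [← refine_append]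
    exact fun t ht => (hchain.refine n t ht).imp_right fun h => h.trans hle
  · rwa [← refine_append, totalVar_refine hne]

end UniformGap

/-! ### Order parameters as lists -/

/-- `IsOrderPath q m z`: the list `z` of points `(q_l, m_l)` continues the state `(q, m)` of a
discrete order parameter up to its final value `m = 1`. Full order parameters are the lists `z`
with `IsOrderPath 0 0 z`. Repeated points and steps with `m_l = 0` are allowed. -/
inductive IsOrderPath : ℝ → ℝ → List (ℝ × ℝ) → Prop
  | nil {q : ℝ} (hq₀ : 0 ≤ q) (hq : q ≤ 1) : IsOrderPath q 1 []
  | cons {q m : ℝ} {p : ℝ × ℝ} {z : List (ℝ × ℝ)} (hq₀ : 0 ≤ q) (hq : q ≤ p.1) (hm₀ : 0 ≤ m)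
      (hm : m ≤ p.2) (hz : IsOrderPath p.1 p.2 z) : IsOrderPath q m (p :: z)

/-- The recursively defined functions of the Parisi functional along a list of points `(q_l, m_l)`,
started at the variance `t` and the value `m`; `τ` plays the role of `ξ'`. -/
def pathPotential (τ : ℝ → ℝ) : ℝ → ℝ → List (ℝ × ℝ) → ℝ → ℝ
  | t, m, [] => step m (τ 1 - t) logCosh
  | t, m, p :: z => step m (τ p.1 - t) (pathPotential τ (τ p.1) p.2 z)

/-- The integral of `f` against the discrete measure with mass `m_l - m_{l-1}` at `q_l`, where the
list of the points `(q_l, m_l)` continues the value `m`. -/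
def pathIntegral : ℝ → List (ℝ × ℝ) → (ℝ → ℝ) → ℝ
  | _, [], _ => 0
  | m, p :: z, f => (p.2 - m) * f p.1 + pathIntegral p.2 z f

section OrderPath

variable {τ : ℝ → ℝ} {q m t : ℝ} {p : ℝ × ℝ} {z : List (ℝ × ℝ)}

namespace IsOrderPath

lemma q_mem (h : IsOrderPath q m z) : q ∈ Set.Icc 0 1 := by
  induction h with
  | nil hq₀ hq => exact ⟨hq₀, hq⟩
  | cons hq₀ hq _ _ _ ih => exact ⟨hq₀, hq.trans ih.2⟩

lemma m_mem (h : IsOrderPath q m z) : m ∈ Set.Icc 0 1 := by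
  induction h with
  | nil => exact ⟨zero_le_one, le_rfl⟩
  | cons _ _ hm₀ hm _ ih => exact ⟨hm₀, hm.trans ih.2⟩

lemma eq_one (h : IsOrderPath q m []) : m = 1 := by
  cases h
  rfl

lemma tail (h : IsOrderPath q m (p :: z)) : IsOrderPath p.1 p.2 z := by
  cases h
  assumption

lemma m_le_head (h : IsOrderPath q m (p :: z)) : m ≤ p.2 := by
  cases h
  assumption

lemma q_le_head (h : IsOrderPath q m (p :: z)) : q ≤ p.1 := by
  cases h
  assumption

lemma of_le {q' : ℝ} (h : IsOrderPath q m z) (hq₀ : 0 ≤ q') (hq : q' ≤ q) :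
    IsOrderPath q' m z := by
  cases h with
  | nil _ hq₁ => exact nil hq₀ (hq.trans hq₁)
  | cons _ hq₁ hm₀ hm hz => exact cons hq₀ (hq.trans hq₁) hm₀ hm hz

lemma lipschitz_pathPotential (h : IsOrderPath q m z) (τ : ℝ → ℝ) (t : ℝ) :
    LipschitzWith 1 (pathPotential τ t m z) := by
  induction h generalizing t with
  | nil => exact lipschitz_step lipschitz_logCosh zero_le_one _
  | cons _ _ hm₀ _ _ ih => exact lipschitz_step (ih _) hm₀ _

lemma pathPotential_eq_step (h : IsOrderPath q m z) (hτ : MonotoneOn τ (Set.Icc 0 1))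
    (ht : t ≤ τ q) :
    pathPotential τ t m z = step m (τ q - t) (pathPotential τ (τ q) m z) := by
  ext x
  cases h with
  | nil hq₀ hq =>
    have hle := hτ ⟨hq₀, hq⟩ ⟨zero_le_one, le_rfl⟩ hq
    simp only [pathPotential]
    rw [step_step lipschitz_logCosh _ (by linarith) (by linarith)]
    congr 1
    ring
  | cons hq₀ hq _ _ hz =>
    have hle := hτ ⟨hq₀, hq.trans hz.q_mem.2⟩ hz.q_mem hq
    simp only [pathPotential]
    rw [step_step (hz.lipschitz_pathPotential τ _) _ (by linarith) (by linarith)]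
    congr 1
    ring

lemma pathIntegral_congr (h : IsOrderPath q m z) {f g : ℝ → ℝ}
    (hfg : ∀ x ∈ Set.Icc q 1, f x = g x) :
    pathIntegral m z f = pathIntegral m z g := by
  induction h with
  | nil => rfl
  | cons _ hq _ _ hz ih =>
    simp only [pathIntegral]
    rw [hfg _ ⟨hq, hz.q_mem.2⟩, ih fun x hx => hfg x ⟨hq.trans hx.1, hx.2⟩]

lemma pathIntegral_mono (h : IsOrderPath q m z) {f g : ℝ → ℝ} (hfg : ∀ x ∈ Set.Icc q 1, f x ≤ g x) :
    pathIntegral m z f ≤ pathIntegral m z g := by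
  induction h with
  | nil => exact le_rfl
  | cons _ hq _ hm hz ih =>
    simp only [pathIntegral]
    exact add_le_add (mul_le_mul_of_nonneg_left (hfg _ ⟨hq, hz.q_mem.2⟩) (sub_nonneg.2 hm))
      (ih fun x hx => hfg x ⟨hq.trans hx.1, hx.2⟩)

lemma pathIntegral_const (h : IsOrderPath q m z) (c : ℝ) :
    pathIntegral m z (fun _ => c) = (1 - m) * c := by
  induction h with
  | nil => simp [pathIntegral]
  | cons _ _ _ _ _ ih =>
    simp only [pathIntegral, ih]
    ring

end IsOrderPath

lemma pathIntegral_add (m : ℝ) (z : List (ℝ × ℝ)) (f g : ℝ → ℝ) :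
    pathIntegral m z (fun x => f x + g x) = pathIntegral m z f + pathIntegral m z g := by
  induction z generalizing m with
  | nil => simp [pathIntegral]
  | cons p z ih =>
    simp only [pathIntegral, ih]
    ring

lemma pathIntegral_const_mul (m : ℝ) (z : List (ℝ × ℝ)) (c : ℝ) (f : ℝ → ℝ) :
    pathIntegral m z (fun x => c * f x) = c * pathIntegral m z f := by
  induction z generalizing m with
  | nil => simp [pathIntegral]
  | cons p z ih =>
    simp only [pathIntegral, ih]
    ring

/-- Two continuations of the state `(q, m)` that give the same discrete measure and the same
potentials. -/
def PathEquiv (q m : ℝ) (z z' : List (ℝ × ℝ)) : Prop :=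
  (∀ f, pathIntegral m z f = pathIntegral m z' f) ∧
    ∀ τ, MonotoneOn τ (Set.Icc 0 1) → ∀ t ≤ τ q, pathPotential τ t m z = pathPotential τ t m z'

namespace PathEquiv

variable {z' : List (ℝ × ℝ)}

lemma refl (q m : ℝ) (z : List (ℝ × ℝ)) : PathEquiv q m z z := ⟨fun _ => rfl, fun _ _ _ _ => rfl⟩

lemma symm (h : PathEquiv q m z z') : PathEquiv q m z' z :=
  ⟨fun f => (h.1 f).symm, fun τ hτ t ht => (h.2 τ hτ t ht).symm⟩

lemma trans {z'' : List (ℝ × ℝ)} (h : PathEquiv q m z z') (h' : PathEquiv q m z' z'') :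
    PathEquiv q m z z'' :=
  ⟨fun f => (h.1 f).trans (h'.1 f), fun τ hτ t ht => (h.2 τ hτ t ht).trans (h'.2 τ hτ t ht)⟩

lemma cons (h : PathEquiv p.1 p.2 z z') (q m : ℝ) : PathEquiv q m (p :: z) (p :: z') := by
  refine ⟨fun f => ?_, fun τ hτ t _ => ?_⟩
  · simp only [pathIntegral, h.1]
  · simp only [pathPotential, h.2 τ hτ _ le_rfl]

lemma insert {r : ℝ} (h : PathEquiv r m z z') (hz' : IsOrderPath r m z') (hq₀ : 0 ≤ q)
    (hqr : q ≤ r) : PathEquiv q m ((r, m) :: z) z' := by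
  refine ⟨fun f => ?_, fun τ hτ t ht => ?_⟩
  · simp only [pathIntegral, h.1, sub_self, zero_mul, zero_add]
  · have hle := hτ ⟨hq₀, hqr.trans hz'.q_mem.2⟩ hz'.q_mem hqr
    rw [hz'.pathPotential_eq_step hτ (ht.trans hle)]
    simp only [pathPotential, h.2 τ hτ _ le_rfl]

end PathEquiv

end OrderPath

/-! ### Common refinements of two order parameters -/

/-- `IsTwinPath q a b M`: the list `M` of triples `(q_l, a_l, b_l)` continues the state `(q, a, b)`
of a pair of order parameters with the same points `q_l`. -/
inductive IsTwinPath : ℝ → ℝ → ℝ → List (ℝ × ℝ × ℝ) → Prop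
  | nil {q : ℝ} (hq₀ : 0 ≤ q) (hq : q ≤ 1) : IsTwinPath q 1 1 []
  | cons {q a b : ℝ} {r : ℝ × ℝ × ℝ} {M : List (ℝ × ℝ × ℝ)} (hq₀ : 0 ≤ q) (hq : q ≤ r.1)
      (ha₀ : 0 ≤ a) (ha : a ≤ r.2.1) (hb₀ : 0 ≤ b) (hb : b ≤ r.2.2)
      (hM : IsTwinPath r.1 r.2.1 r.2.2 M) : IsTwinPath q a b (r :: M)

/-- The points of a twin path together with the combination `e a_l b_l` of its two values. -/
def sidePath (e : ℝ → ℝ → ℝ) (M : List (ℝ × ℝ × ℝ)) : List (ℝ × ℝ) :=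
  M.map fun r => (r.1, e r.2.1 r.2.2)

/-- The left order parameter of a twin path. -/
abbrev leftPath : List (ℝ × ℝ × ℝ) → List (ℝ × ℝ) := sidePath fun a _ => a

/-- The right order parameter of a twin path. -/
abbrev rightPath : List (ℝ × ℝ × ℝ) → List (ℝ × ℝ) := sidePath fun _ b => b

/-- The average of the two order parameters of a twin path. -/
abbrev midPath : List (ℝ × ℝ × ℝ) → List (ℝ × ℝ) := sidePath fun a b => (a + b) / 2

/-- A way of combining the two values of a twin path that turns it into an order parameter. -/
structure IsMean (e : ℝ → ℝ → ℝ) : Prop where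
  mono : ∀ {a a' b b'}, a ≤ a' → b ≤ b' → e a b ≤ e a' b'
  zero : e 0 0 = 0
  one : e 1 1 = 1

lemma isMean_left : IsMean fun a _ => a := ⟨fun h _ => h, rfl, rfl⟩

lemma isMean_right : IsMean fun _ b => b := ⟨fun _ h => h, rfl, rfl⟩

lemma isMean_mid : IsMean fun a b => (a + b) / 2 :=
  ⟨fun ha hb => by gcongr, by norm_num, by norm_num⟩

/-- Some twin path has sides equivalent to `z` and `w`. -/
def HasCommonRefinement (q a b : ℝ) (z w : List (ℝ × ℝ)) : Prop :=
  ∃ M, IsTwinPath q a b M ∧ PathEquiv q a (leftPath M) z ∧ PathEquiv q b (rightPath M) w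

section TwinPath

variable {q a b s t : ℝ} {p r : ℝ × ℝ} {z w : List (ℝ × ℝ)} {M : List (ℝ × ℝ × ℝ)}

lemma IsOrderPath.hasCommonRefinement_cons_left (hz : IsOrderPath q a (p :: z))
    (hw : IsOrderPath q b w) (hpw : IsOrderPath p.1 b w)
    (h : HasCommonRefinement p.1 p.2 b z w) : HasCommonRefinement q a b (p :: z) w := by
  obtain ⟨M, hM, hleft, hright⟩ := h
  cases hz with
  | cons hq₀ hq ha₀ ha _ =>
    exact ⟨(p.1, p.2, b) :: M, .cons hq₀ hq ha₀ ha hw.m_mem.1 le_rfl hM, hleft.cons q a,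
      hright.insert hpw hq₀ hq⟩

lemma IsOrderPath.hasCommonRefinement_cons_right (hz : IsOrderPath q a z)
    (hrz : IsOrderPath r.1 a z) (hw : IsOrderPath q b (r :: w))
    (h : HasCommonRefinement r.1 a r.2 z w) : HasCommonRefinement q a b z (r :: w) := by
  obtain ⟨M, hM, hleft, hright⟩ := h
  cases hw with
  | cons hq₀ hq hb₀ hb _ =>
    exact ⟨(r.1, a, r.2) :: M, .cons hq₀ hq hz.m_mem.1 le_rfl hb₀ hb hM,
      hleft.insert hrz hq₀ hq, hright.cons q b⟩

lemma IsOrderPath.hasCommonRefinement (hz : IsOrderPath q a z) (hw : IsOrderPath q b w) :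
    HasCommonRefinement q a b z w := by
  induction z generalizing q a b w with
  | nil =>
    obtain rfl := hz.eq_one
    induction w generalizing q b with
    | nil =>
      obtain rfl := hw.eq_one
      exact ⟨[], .nil hz.q_mem.1 hz.q_mem.2, .refl q 1 [], .refl q 1 []⟩
    | cons r w ih =>
      have hrz : IsOrderPath r.1 1 [] := .nil hw.tail.q_mem.1 hw.tail.q_mem.2
      exact hz.hasCommonRefinement_cons_right hrz hw (ih hw.tail hrz)
  | cons p z ihz =>
    induction w generalizing q a b with
    | nil =>
      obtain rfl := hw.eq_one
      have hpw : IsOrderPath p.1 1 [] := .nil hz.tail.q_mem.1 hz.tail.q_mem.2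
      exact hz.hasCommonRefinement_cons_left hw hpw (ihz hz.tail hpw)
    | cons r w ihw =>
      obtain hpr | hrp := le_total p.1 r.1
      · have hpw : IsOrderPath p.1 b (r :: w) :=
          .cons hz.tail.q_mem.1 hpr hw.m_mem.1 hw.m_le_head hw.tail
        exact hz.hasCommonRefinement_cons_left hw hpw (ihz hz.tail hpw)
      · have hrz : IsOrderPath r.1 a (p :: z) :=
          .cons hw.tail.q_mem.1 hrp hz.m_mem.1 hz.m_le_head hz.tail
        exact hz.hasCommonRefinement_cons_right hrz hw (ihw hrz hw.tail)

lemma IsTwinPath.isOrderPath_sidePath {e : ℝ → ℝ → ℝ} (h : IsTwinPath q a b M) (he : IsMean e) :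
    IsOrderPath q (e a b) (sidePath e M) := by
  induction h with
  | nil hq₀ hq =>
    rw [he.one]
    exact .nil hq₀ hq
  | cons hq₀ hq ha₀ ha hb₀ hb _ ih =>
    exact .cons hq₀ hq (he.zero.symm.trans_le (he.mono ha₀ hb₀)) (he.mono ha hb) ih

lemma IsTwinPath.isOrderPath_left (h : IsTwinPath q a b M) : IsOrderPath q a (leftPath M) :=
  h.isOrderPath_sidePath isMean_left

lemma IsTwinPath.isOrderPath_right (h : IsTwinPath q a b M) : IsOrderPath q b (rightPath M) :=
  h.isOrderPath_sidePath isMean_right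

lemma pathIntegral_midPath (a b : ℝ) (M : List (ℝ × ℝ × ℝ)) (f : ℝ → ℝ) :
    pathIntegral ((a + b) / 2) (midPath M) f =
      (pathIntegral a (leftPath M) f + pathIntegral b (rightPath M) f) / 2 := by
  induction M generalizing a b with
  | nil => simp [pathIntegral, sidePath]
  | cons r M ih =>
    simp only [sidePath, List.map_cons, pathIntegral] at ih ⊢
    rw [ih]
    ring

end TwinPath

/-- The chain of steps attached to a twin path, started at the variance `t`. -/
def twinChain (τ : ℝ → ℝ) : ℝ → ℝ → ℝ → List (ℝ × ℝ × ℝ) → List TwinStep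
  | t, a, b, [] => [⟨τ 1 - t, a, b⟩]
  | t, a, b, r :: M => ⟨τ r.1 - t, a, b⟩ :: twinChain τ (τ r.1) r.2.1 r.2.2 M

section TwinChain

variable {τ : ℝ → ℝ} {q a b s t T d : ℝ} {M : List (ℝ × ℝ × ℝ)}

lemma chainPotential_twinChain (e : ℝ → ℝ → ℝ) (τ : ℝ → ℝ) (t a b : ℝ) (M : List (ℝ × ℝ × ℝ)) :
    chainPotential (fun u => e u.left u.right) (twinChain τ t a b M) =
      pathPotential τ t (e a b) (sidePath e M) := by
  induction M generalizing t a b with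
  | nil => rfl
  | cons r M ih => simp only [twinChain, chainPotential_cons, ih, sidePath, List.map_cons,
      pathPotential]

lemma totalVar_twinChain (τ : ℝ → ℝ) (t a b : ℝ) (M : List (ℝ × ℝ × ℝ)) :
    totalVar (twinChain τ t a b M) = τ 1 - t := by
  induction M generalizing t a b with
  | nil => simp [twinChain, totalVar]
  | cons r M ih =>
    simp only [twinChain, totalVar_cons, ih]
    ring

lemma displacement_twinChain (h : IsTwinPath q a b M) (τ : ℝ → ℝ) (t : ℝ) :
    displacement (twinChain τ t a b M) =
      (b - a) * t + pathIntegral b (rightPath M) τ - pathIntegral a (leftPath M) τ := by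
  induction h generalizing t with
  | nil => simp [twinChain, displacement, TwinStep.discrepancy, pathIntegral, sidePath]
  | cons _ _ _ _ _ _ _ ih =>
    simp only [twinChain, displacement_cons, ih, sidePath, List.map_cons, pathIntegral,
      TwinStep.discrepancy]
    ring

lemma IsTwinPath.admissible_of_mem_twinChain (h : IsTwinPath q a b M)
    (hτ : MonotoneOn τ (Set.Icc 0 1)) (ht : t ≤ τ q) :
    ∀ u ∈ twinChain τ t a b M, u.Admissible := by
  have hq := h.isOrderPath_left.q_mem
  have ha := h.isOrderPath_left.m_mem
  have hb := h.isOrderPath_right.m_mem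
  induction h generalizing t with
  | nil =>
    have hle := hτ hq ⟨zero_le_one, le_rfl⟩ hq.2
    simp only [twinChain, List.mem_singleton, forall_eq]
    exact ⟨by dsimp only; linarith, ha, hb⟩
  | cons _ hqr _ _ _ _ hM ih =>
    have hr := hM.isOrderPath_left.q_mem
    have hle := hτ hq hr hqr
    simp only [twinChain, List.forall_mem_cons]
    exact ⟨⟨by dsimp only; linarith, ha, hb⟩,
      ih le_rfl hr hM.isOrderPath_left.m_mem hM.isOrderPath_right.m_mem⟩

lemma isFineChain_totalVar {L : List TwinStep} (h : ∀ u ∈ L, u.Admissible) :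
    IsFineChain (totalVar L) L := by
  refine fun u hu => ⟨h u hu, ?_⟩
  refine List.single_le_sum (fun v hv => ?_) _ (List.mem_map_of_mem hu)
  obtain ⟨w, hw, rfl⟩ := List.mem_map.1 hv
  exact (h w hw).var_nonneg

/-- `IsSplit τ t a b M s P L`: the chain `P ++ L` is obtained from the chain of the twin path `M` by
cutting it at the point `s`, with `L` the part after `s`. -/
structure IsSplit (τ : ℝ → ℝ) (t a b : ℝ) (M : List (ℝ × ℝ × ℝ)) (s : ℝ) (P L : List TwinStep) :
    Prop where
  admissible : ∀ u ∈ P ++ L, u.Admissible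
  totalVar_eq : totalVar (P ++ L) = τ 1 - t
  chainPotential_eq : ∀ {e : ℝ → ℝ → ℝ}, IsMean e →
    chainPotential (fun u => e u.left u.right) (P ++ L) = pathPotential τ t (e a b) (sidePath e M)
  displacement_eq : displacement L = (b - a) * τ s +
    pathIntegral b (rightPath M) (fun y => τ (max s y)) -
    pathIntegral a (leftPath M) (fun y => τ (max s y))

namespace IsTwinPath

lemma isSplit_head (h : IsTwinPath s a b M) (hτ : MonotoneOn τ (Set.Icc 0 1)) (ht : t ≤ τ s) :
    IsSplit τ t a b M s [⟨τ s - t, a, b⟩] (twinChain τ (τ s) a b M) := by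
  have hadm := h.admissible_of_mem_twinChain hτ le_rfl
  have ha := h.isOrderPath_left.m_mem
  have hb := h.isOrderPath_right.m_mem
  refine ⟨?_, ?_, fun he => ?_, ?_⟩
  · simp only [List.singleton_append, List.forall_mem_cons]
    exact ⟨⟨by dsimp only; linarith, ha, hb⟩, hadm⟩
  · simp only [List.singleton_append, totalVar_cons, totalVar_twinChain]
    ring
  · rw [(h.isOrderPath_sidePath he).pathPotential_eq_step hτ ht, List.singleton_append,
      chainPotential_cons, chainPotential_twinChain]
  · have hcongr : ∀ y ∈ Set.Icc s 1, τ y = τ (max s y) := fun y hy => by rw [max_eq_right hy.1]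
    rw [displacement_twinChain h, h.isOrderPath_left.pathIntegral_congr hcongr,
      h.isOrderPath_right.pathIntegral_congr hcongr]

lemma exists_isSplit (h : IsTwinPath q a b M) (hτ : MonotoneOn τ (Set.Icc 0 1)) (ht : t ≤ τ q)
    (hqs : q ≤ s) (hs : s ≤ 1) : ∃ P L, IsSplit τ t a b M s P L := by
  induction h generalizing t with
  | nil hq₀ hq =>
    have hs₀ := hq₀.trans hqs
    exact ⟨_, _, (IsTwinPath.nil hs₀ hs).isSplit_head hτ (ht.trans (hτ ⟨hq₀, hq⟩ ⟨hs₀, hs⟩ hqs))⟩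
  | @cons q a b r M hq₀ hq ha₀ ha hb₀ hb hM ih =>
    have hr := hM.isOrderPath_left.q_mem
    have hqr := hτ ⟨hq₀, hqs.trans hs⟩ hr hq
    obtain hsr | hrs := le_or_gt s r.1
    · have hs₀ := hq₀.trans hqs
      exact ⟨_, _, (IsTwinPath.cons hs₀ hsr ha₀ ha hb₀ hb hM).isSplit_head hτ
        (ht.trans (hτ ⟨hq₀, hqs.trans hs⟩ ⟨hs₀, hs⟩ hqs))⟩
    obtain ⟨P, L, h⟩ := ih le_rfl hrs.le
    refine ⟨⟨τ r.1 - t, a, b⟩ :: P, L, ?_, ?_, fun he => ?_, ?_⟩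
    · simp only [List.cons_append, List.forall_mem_cons]
      refine ⟨⟨by dsimp only; linarith, ⟨ha₀, ha.trans hM.isOrderPath_left.m_mem.2⟩,
        ⟨hb₀, hb.trans hM.isOrderPath_right.m_mem.2⟩⟩, h.admissible⟩
    · rw [List.cons_append, totalVar_cons, h.totalVar_eq]
      ring
    · rw [List.cons_append, chainPotential_cons, h.chainPotential_eq he]
      rfl
    · rw [h.displacement_eq]
      simp only [sidePath, List.map_cons, pathIntegral, max_eq_left hrs.le]
      ring

end IsTwinPath

theorem exists_le_average_sub_pathPotential (x : ℝ) (hT : 1 ≤ T) (hd : 0 < d) :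
    ∃ ε > 0, ∀ τ, MonotoneOn τ (Set.Icc 0 1) → 0 ≤ τ 0 → τ 1 ≤ T → ∀ z w, IsOrderPath 0 0 z →
      IsOrderPath 0 0 w → ∃ y, IsOrderPath 0 0 y ∧
        (∀ f, pathIntegral 0 y f = (pathIntegral 0 z f + pathIntegral 0 w f) / 2) ∧
        ∀ s ∈ Set.Icc 0 1, d ≤ |pathIntegral 0 z (fun q => τ (max s q)) -
            pathIntegral 0 w (fun q => τ (max s q))| →
          ε ≤ (pathPotential τ 0 0 z x + pathPotential τ 0 0 w x) / 2 -
            pathPotential τ 0 0 y x := by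
  obtain ⟨ε, hε, hgap⟩ := exists_le_chainGap x hT hd
  refine ⟨ε, hε, fun τ hτ hτ₀ hτ₁ z w hz hw => ?_⟩
  obtain ⟨M, hM, hleft, hright⟩ := hz.hasCommonRefinement hw
  have hmid := hM.isOrderPath_sidePath isMean_mid
  have hinteg := pathIntegral_midPath 0 0 M
  rw [add_zero, zero_div] at hmid hinteg
  simp only [hleft.1, hright.1] at hinteg
  refine ⟨midPath M, hmid, hinteg, fun s hs hds => ?_⟩
  obtain ⟨P, L, h⟩ := hM.exists_isSplit hτ hτ₀ hs.1 hs.2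
  have htot : totalVar (P ++ L) ≤ T := by rw [h.totalVar_eq]; linarith
  have hchain : IsFineChain T (P ++ L) := fun u hu =>
    (isFineChain_totalVar h.admissible u hu).imp_right fun hle => hle.trans htot
  have := hgap P L hchain htot (by
    rwa [h.displacement_eq, hleft.1, hright.1, sub_self, zero_mul, zero_add, abs_sub_comm])
  have eleft : chainPotential TwinStep.left (P ++ L) = pathPotential τ 0 0 z :=
    (h.chainPotential_eq isMean_left).trans (hleft.2 τ hτ 0 hτ₀)
  have eright : chainPotential TwinStep.right (P ++ L) = pathPotential τ 0 0 w :=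
    (h.chainPotential_eq isMean_right).trans (hright.2 τ hτ 0 hτ₀)
  have emid : chainPotential TwinStep.mid (P ++ L) = pathPotential τ 0 0 (midPath M) := by
    refine (h.chainPotential_eq isMean_mid).trans ?_
    rw [add_zero, zero_div]
  simp only [chainGap, midpointGap, eleft, eright, emid, zero_div, add_zero, sub_zero] at this
  linarith

end TwinChain

/-! ### The Parisi functional of a list -/

section Xi

variable (S : Finset ℕ) (β : ℕ → ℝ)

@[fun_prop]
lemma continuous_xiFn' : Continuous (xiFn' S β) := by
  unfold xiFn'
  fun_prop

@[fun_prop]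
lemma continuous_thetaFn : Continuous (thetaFn S β) := by
  unfold thetaFn xiFn
  fun_prop

lemma monotoneOn_xiFn' : MonotoneOn (xiFn' S β) (Set.Icc 0 1) := by
  intro x hx y _ hxy
  have := hx.1
  unfold xiFn'
  gcongr

lemma xiFn'_zero_nonneg : 0 ≤ xiFn' S β 0 :=
  Finset.sum_nonneg fun p _ => by positivity

variable {S}

lemma thetaFn_eq_sum (hS : ∀ p ∈ S, 0 < p) (x : ℝ) :
    thetaFn S β x = ∑ p ∈ S, β p ^ 2 * (p - 1) * x ^ p := by
  unfold thetaFn xiFn' xiFn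
  rw [Finset.mul_sum, ← Finset.sum_sub_distrib]
  refine Finset.sum_congr rfl fun p hp => ?_
  obtain ⟨n, rfl⟩ := Nat.exists_eq_add_one.2 (hS p hp)
  rw [Nat.add_sub_cancel]
  ring

lemma thetaFn_nonneg (hS : ∀ p ∈ S, 0 < p) {x : ℝ} (hx : 0 ≤ x) : 0 ≤ thetaFn S β x := by
  rw [thetaFn_eq_sum β hS]
  refine Finset.sum_nonneg fun p hp => ?_
  have : (1 : ℝ) ≤ p := mod_cast hS p hp
  have := sub_nonneg.2 this
  positivity

end Xi

/-- The Parisi functional of the order parameter given by the list `z`, with the sum rearranged by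
Abel summation. -/
def pathParisi (S : Finset ℕ) (h : ℝ) (β : ℕ → ℝ) (z : List (ℝ × ℝ)) : ℝ :=
  pathPotential (xiFn' S β) 0 0 z h -
    1 / 2 * (thetaFn S β 1 - pathIntegral 0 z (thetaFn S β))

/-- The list of the `j` terms of a sequence of points that follow the term of index `l`. -/
def pointPath (x : ℕ → ℝ × ℝ) (l j : ℕ) : List (ℝ × ℝ) := (List.range' (l + 1) j).map x

/-- The order parameter as a list. -/
def orderPath {k : ℕ} (op : OrderParam k) : List (ℝ × ℝ) :=
  pointPath (fun i => (op.q i, op.m i)) 0 k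

@[simp]
lemma pointPath_zero (x : ℕ → ℝ × ℝ) (l : ℕ) : pointPath x l 0 = [] := rfl

lemma pointPath_succ (x : ℕ → ℝ × ℝ) (l j : ℕ) :
    pointPath x l (j + 1) = x (l + 1) :: pointPath x (l + 1) j := by
  simp [pointPath, List.range'_succ]

lemma length_pointPath (x : ℕ → ℝ × ℝ) (l j : ℕ) : (pointPath x l j).length = j := by
  simp [pointPath]

lemma pathIntegral_pointPath (x : ℕ → ℝ × ℝ) (f : ℝ → ℝ) (l j : ℕ) :
    pathIntegral (x l).2 (pointPath x l j) f =
      ∑ i ∈ Finset.Icc (l + 1) (l + j), ((x i).2 - (x (i - 1)).2) * f (x i).1 := by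
  induction j generalizing l with
  | zero => simp [pathIntegral]
  | succ j ih =>
    rw [pointPath_succ, pathIntegral, ih,
      ← Finset.insert_Icc_add_one_left_eq_Icc (show l + 1 ≤ l + (j + 1) by omega),
      Finset.sum_insert (by simp), Nat.add_sub_cancel, add_right_comm l 1 j, add_assoc l j 1]

lemma isOrderPath_pointPath {x : ℕ → ℝ × ℝ} {l j : ℕ} (hx₀ : 0 ≤ x l)
    (hx : ∀ i, l ≤ i → i < l + j → x i ≤ x (i + 1)) (hq : (x (l + j)).1 ≤ 1)
    (hm : (x (l + j)).2 = 1) : IsOrderPath (x l).1 (x l).2 (pointPath x l j) := by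
  induction j generalizing l with
  | zero =>
    rw [add_zero] at hq hm
    rw [hm]
    exact .nil hx₀.1 hq
  | succ j ih =>
    have hstep := hx l le_rfl (by omega)
    rw [← add_assoc, add_right_comm] at hq hm
    rw [pointPath_succ]
    exact .cons hx₀.1 hstep.1 hx₀.2 hstep.2
      (ih (hx₀.trans hstep) (fun i hi hij => hx i (by omega) (by omega)) hq hm)

section OrderParam

variable {k : ℕ} (op : OrderParam k)

lemma isOrderPath_pointPath_op {l j : ℕ} (hk : l + j = k) :
    IsOrderPath (op.q l) (op.m l) (pointPath (fun i => (op.q i, op.m i)) l j) := by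
  have hmono : ∀ i < k, (op.q i, op.m i) ≤ (op.q (i + 1), op.m (i + 1)) :=
    fun i hi => ⟨op.q_mono i hi.le, op.m_mono i hi⟩
  have hnonneg : ∀ i ≤ k, 0 ≤ (op.q i, op.m i) := fun i hi => by
    induction i with
    | zero => exact ⟨op.q_zero.ge, op.m_zero.ge⟩
    | succ i ih => exact (ih (by omega)).trans (hmono i hi)
  refine isOrderPath_pointPath (x := fun i => (op.q i, op.m i)) (hnonneg l (by omega))
    (fun i _ hi => hmono i (by omega)) ?_ ?_
  · rw [hk]
    exact (op.q_mono k le_rfl).trans_eq op.q_last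
  · rw [hk]
    exact op.m_last

lemma isOrderPath_orderPath : IsOrderPath 0 0 (orderPath op) := by
  simpa only [orderPath, op.q_zero, op.m_zero] using isOrderPath_pointPath_op op (zero_add k)

lemma pathIntegral_orderPath (f : ℝ → ℝ) :
    pathIntegral 0 (orderPath op) f =
      ∑ l ∈ Finset.Icc 1 k, (op.m l - op.m (l - 1)) * f (op.q l) := by
  simpa only [orderPath, op.m_zero, zero_add] using
    pathIntegral_pointPath (fun i => (op.q i, op.m i)) f 0 k

lemma log_integral_gauss_eq_step {K : ℝ≥0} {A : ℝ → ℝ} (hA : LipschitzWith K A) {m : ℝ} (hm : m ≠ 0)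
    (v x : ℝ) : 1 / m * log (∫ y, exp (m * A (x + y)) ∂(gauss v)) = step m v A x := by
  have := hA.continuous.measurable
  rw [step_of_ne_zero hm, integral_gauss (by fun_prop), one_div_mul_eq_div]

lemma parisiB_eq_pathPotential (S : Finset ℕ) (β : ℕ → ℝ) {l j : ℕ} (hl : 0 < l) (hk : l + j = k) :
    parisiB op.m (opVar S β op) k (j + 1) = pathPotential (xiFn' S β) (xiFn' S β (op.q l)) (op.m l)
      (pointPath (fun i => (op.q i, op.m i)) l j) := by
  have hsub : k - j = l := by omega
  have hm : op.m l ≠ 0 := (op.m_pos l hl (by omega)).ne'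
  ext x
  induction j generalizing l x with
  | zero =>
    obtain rfl : l = k := hk
    simp only [parisiB, pointPath_zero, pathPotential, Nat.sub_zero, opVar, hl.ne', if_false,
      op.q_last]
    exact log_integral_gauss_eq_step lipschitz_logCosh hm _ x
  | succ j ih =>
    have hB := funext (ih l.succ_pos (by omega) (by omega)
      (op.m_pos (l + 1) l.succ_pos (by omega)).ne')
    have hlip := (isOrderPath_pointPath_op op (l := l + 1) (j := j)
      (by omega)).lipschitz_pathPotential (xiFn' S β) (xiFn' S β (op.q (l + 1)))
    rw [parisiB, hsub, hB, log_integral_gauss_eq_step hlip hm, pointPath_succ]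
    simp only [pathPotential, opVar, hl.ne', if_false]

lemma sum_m_mul_sub (f : ℝ → ℝ) :
    ∑ l ∈ Finset.Icc 1 k, op.m l * (f (op.q (l + 1)) - f (op.q l)) =
      f 1 - pathIntegral 0 (orderPath op) f := by
  have key : ∀ j, ∑ l ∈ Finset.Icc 1 j, op.m l * (f (op.q (l + 1)) - f (op.q l)) +
      ∑ l ∈ Finset.Icc 1 j, (op.m l - op.m (l - 1)) * f (op.q l) =
        op.m j * f (op.q (j + 1)) - op.m 0 * f (op.q 1) := fun j => by
    induction j with
    | zero => simp
    | succ j ih =>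
      rw [Finset.sum_Icc_succ_top (by omega), Finset.sum_Icc_succ_top (by omega),
        Nat.add_sub_cancel]
      linarith
  have := key k
  rw [op.m_zero, op.m_last, op.q_last] at this
  rw [pathIntegral_orderPath]
  linarith

lemma parisiP_eq_pathParisi (hk : 1 ≤ k) (S : Finset ℕ) (h : ℝ) (β : ℕ → ℝ) :
    parisiP S h β op = pathParisi S h β (orderPath op) := by
  obtain ⟨j, rfl⟩ := Nat.exists_eq_add_of_le' hk
  rw [parisiP, pathParisi, sum_m_mul_sub]
  congr 1
  have hlip := (isOrderPath_pointPath_op op (add_comm 1 j)).lipschitz_pathPotential (xiFn' S β)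
    (xiFn' S β (op.q 1))
  have hB := parisiB_eq_pathPotential op S β one_pos (add_comm 1 j)
  have := hlip.continuous.measurable
  rw [hB, integral_gauss (by fun_prop), orderPath, pointPath_succ]
  simp only [pathPotential, step_zero, opVar, if_true, sub_zero, zero_add]

end OrderParam

lemma PathEquiv.pathParisi_eq {z z' : List (ℝ × ℝ)} (hz : PathEquiv 0 0 z z') (S : Finset ℕ) (h : ℝ)
    (β : ℕ → ℝ) : pathParisi S h β z = pathParisi S h β z' := by
  rw [pathParisi, pathParisi, hz.1, hz.2 _ (monotoneOn_xiFn' S β) 0 (xiFn'_zero_nonneg S β)]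

namespace IsOrderPath

variable {q m : ℝ} {p : ℝ × ℝ} {z : List (ℝ × ℝ)}

lemma pathEquiv_cons_self (h : IsOrderPath q m (p :: z)) :
    IsOrderPath q m (p :: p :: z) ∧ PathEquiv q m (p :: p :: z) (p :: z) := by
  cases h with
  | cons hq₀ hq hm₀ hm hz =>
    exact ⟨.cons hq₀ hq hm₀ hm (.cons hz.q_mem.1 le_rfl hz.m_mem.1 le_rfl hz),
      ((PathEquiv.refl _ _ z).insert hz hz.q_mem.1 le_rfl).cons q m⟩

lemma exists_cons (h : IsOrderPath q 0 z) : ∃ p w, z = p :: w := by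
  cases z with
  | nil => exact absurd h.eq_one zero_ne_one
  | cons p w => exact ⟨p, w, rfl⟩

lemma exists_pathEquiv_pos (h : IsOrderPath q 0 z) :
    ∃ p w, 0 < p.2 ∧ (p :: w).length = z.length ∧ IsOrderPath q 0 (p :: w) ∧
      PathEquiv q 0 (p :: w) z := by
  induction z generalizing q with
  | nil => exact absurd h.eq_one zero_ne_one
  | cons r z ih =>
    obtain hr | hr := h.m_le_head.lt_or_eq
    · exact ⟨r, z, hr, rfl, h, .refl _ _ _⟩
    · obtain ⟨r, m⟩ := r
      obtain rfl : 0 = m := hr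
      obtain ⟨p, w, hp, hlen, hpw, hequiv⟩ := ih h.tail
      have hequiv' := hequiv.symm.insert hpw h.q_mem.1 h.q_le_head
      obtain ⟨hppw, hdup⟩ := (hpw.of_le h.q_mem.1 h.q_le_head).pathEquiv_cons_self
      exact ⟨p, p :: w, hp, by simpa using hlen, hppw, hdup.trans hequiv'.symm⟩

lemma exists_length_add (h : IsOrderPath q 0 z) (n : ℕ) :
    ∃ w, w.length = z.length + n ∧ IsOrderPath q 0 w ∧ PathEquiv q 0 w z := by
  induction n with
  | zero => exact ⟨z, rfl, h, .refl _ _ _⟩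
  | succ n ih =>
    obtain ⟨w, hlen, hw, hequiv⟩ := ih
    obtain ⟨p, w, rfl⟩ := hw.exists_cons
    obtain ⟨hppw, hdup⟩ := hw.pathEquiv_cons_self
    exact ⟨p :: p :: w, by simp at hlen ⊢; omega, hppw, hdup.trans hequiv⟩

lemma getD_le_getD_add_one (h : IsOrderPath q m z) (i : ℕ) :
    ((q, m) :: z).getD i (1, 1) ≤ ((q, m) :: z).getD (i + 1) (1, 1) := by
  induction h generalizing i with
  | nil _ hq => cases i <;> simp [hq]
  | cons _ hq _ hm _ ih =>
    cases i with
    | zero => exact ⟨hq, hm⟩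
    | succ i => exact ih i

lemma getD_length (h : IsOrderPath q m z) : (((q, m) :: z).getD z.length (1, 1)).2 = 1 := by
  induction h with
  | nil => rfl
  | cons _ _ _ _ _ ih => exact ih

end IsOrderPath

/-- The sequences of points of order parameters with at most `k` atoms, continued by `(1, 1)`. The
values `m_l` may vanish, which makes this set compact. -/
def orderSeq (k : ℕ) : Set (ℕ → ℝ × ℝ) :=
  {x | Monotone x ∧ x 0 = 0 ∧ (x k).2 = 1 ∧ ∀ i, k < i → x i = 1}

section OrderSeq

variable {k : ℕ} {x : ℕ → ℝ × ℝ} {z : List (ℝ × ℝ)}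

lemma nonneg_of_mem_orderSeq (hx : x ∈ orderSeq k) (i : ℕ) : 0 ≤ x i :=
  hx.2.1 ▸ hx.1 i.zero_le

lemma le_one_of_mem_orderSeq (hx : x ∈ orderSeq k) (i : ℕ) : x i ≤ 1 :=
  (hx.1 (show i ≤ k + 1 + i by omega)).trans_eq (hx.2.2.2 _ (by omega))

lemma isOrderPath_of_mem_orderSeq (hx : x ∈ orderSeq k) {l j : ℕ} (hk : l + j = k) :
    IsOrderPath (x l).1 (x l).2 (pointPath x l j) :=
  isOrderPath_pointPath (nonneg_of_mem_orderSeq hx l) (fun i _ _ => hx.1 i.le_succ)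
    (le_one_of_mem_orderSeq hx _).1 (hk ▸ hx.2.2.1)

lemma isOrderPath_zero_of_mem_orderSeq (hx : x ∈ orderSeq k) :
    IsOrderPath 0 0 (pointPath x 0 k) := by
  simpa [hx.2.1] using isOrderPath_of_mem_orderSeq hx (zero_add k)

lemma getD_mem_orderSeq (hz : IsOrderPath 0 0 z) :
    (fun i => ((0, 0) :: z).getD i (1, 1)) ∈ orderSeq z.length :=
  ⟨monotone_nat_of_le_succ hz.getD_le_getD_add_one, rfl, hz.getD_length,
    fun i hi => List.getD_eq_default _ _ (by simpa using hi)⟩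

lemma pointPath_getD (p d : ℝ × ℝ) (z : List (ℝ × ℝ)) :
    pointPath (fun i => (p :: z).getD i d) 0 z.length = z := by
  refine List.ext_getElem (by simp [pointPath]) fun i h₁ h₂ => ?_
  simp [pointPath, h₂, add_comm 1 i]

/-- The order parameter with a sequence of positive values. -/
def orderParamOfSeq (hx : x ∈ orderSeq k) (hpos : 0 < (x 1).2) : OrderParam k where
  m i := (x i).2
  q i := (x i).1
  m_zero := by rw [hx.2.1]; rfl
  m_last := hx.2.2.1
  m_mono l _ := (hx.1 l.le_succ).2
  m_pos _ hl _ := hpos.trans_le (hx.1 hl).2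
  q_zero := by rw [hx.2.1]; rfl
  q_last := by rw [hx.2.2.2 _ k.lt_succ_self]; rfl
  q_mono l _ := (hx.1 l.le_succ).1

lemma IsOrderPath.exists_orderParam (hz : IsOrderPath 0 0 z) (hlen : z.length = k) :
    ∃ op : OrderParam k, PathEquiv 0 0 (orderPath op) z := by
  obtain ⟨p, w, hp, hlen', hpw, hequiv⟩ := hz.exists_pathEquiv_pos
  obtain rfl : (p :: w).length = k := hlen'.trans hlen
  refine ⟨orderParamOfSeq (getD_mem_orderSeq hpw) hp, ?_⟩
  have : orderPath (orderParamOfSeq (getD_mem_orderSeq hpw) hp) = p :: w := pointPath_getD _ _ _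
  rwa [this]

end OrderSeq

/-! ### Minimizers and near minimizers -/

lemma step_nonneg {K : ℝ≥0} {A : ℝ → ℝ} {m : ℝ} (hA : LipschitzWith K A) (hA₀ : ∀ x, 0 ≤ A x)
    (hm : 0 ≤ m) (v x : ℝ) : 0 ≤ step m v A x :=
  (integral_nonneg fun _ => hA₀ _).trans
    ((step_zero v A x).symm.trans_le (step_zero_le hA hm v x))

lemma logCosh_nonneg (x : ℝ) : 0 ≤ logCosh x := log_nonneg (one_le_cosh x)

section Minimizers

variable {τ : ℝ → ℝ} {q m : ℝ} {z : List (ℝ × ℝ)} {S : Finset ℕ}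

lemma IsOrderPath.pathPotential_nonneg (hz : IsOrderPath q m z) (τ : ℝ → ℝ) (t x : ℝ) :
    0 ≤ pathPotential τ t m z x := by
  induction hz generalizing t x with
  | nil => exact step_nonneg lipschitz_logCosh logCosh_nonneg zero_le_one _ _
  | cons _ _ hm₀ _ hz ih => exact step_nonneg (hz.lipschitz_pathPotential τ _) (ih _) hm₀ _ _

lemma IsOrderPath.neg_le_pathParisi (hz : IsOrderPath 0 0 z) (hS : ∀ p ∈ S, 0 < p) (h : ℝ)
    (β : ℕ → ℝ) : -(1 / 2 * thetaFn S β 1) ≤ pathParisi S h β z := by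
  have hinteg := hz.pathIntegral_mono (f := fun _ => 0) fun x hx => thetaFn_nonneg β hS hx.1
  rw [hz.pathIntegral_const, mul_zero] at hinteg
  have := hz.pathPotential_nonneg (xiFn' S β) 0 h
  unfold pathParisi
  linarith

lemma parisiF_le_pathParisi (hS : ∀ p ∈ S, 0 < p) (h : ℝ) (β : ℕ → ℝ) (hz : IsOrderPath 0 0 z) :
    parisiF S h β ≤ pathParisi S h β z := by
  refine csInf_le ⟨-(1 / 2 * thetaFn S β 1), ?_⟩ ?_
  · rintro x ⟨k, hk, op, rfl⟩
    rw [parisiP_eq_pathParisi op hk]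
    exact (isOrderPath_orderPath op).neg_le_pathParisi hS h β
  · obtain ⟨p, w, rfl⟩ := hz.exists_cons
    obtain ⟨op, hop⟩ := hz.exists_orderParam rfl
    exact ⟨_, by simp, op, by rw [parisiP_eq_pathParisi op (by simp), hop.pathParisi_eq]⟩

lemma isOrderPath_singleton : IsOrderPath 0 0 [(0, 1)] :=
  .cons le_rfl le_rfl le_rfl zero_le_one (.nil le_rfl zero_le_one)

lemma exists_pathParisi_lt {h : ℝ} {β : ℕ → ℝ} {c : ℝ} (hc : parisiF S h β < c) :
    ∃ z, IsOrderPath 0 0 z ∧ pathParisi S h β z < c := by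
  obtain ⟨op₁, -⟩ := isOrderPath_singleton.exists_orderParam rfl
  obtain ⟨_, ⟨k, hk, op, rfl⟩, hlt⟩ := exists_lt_of_csInf_lt (by exact ⟨_, 1, le_rfl, op₁, rfl⟩) hc
  exact ⟨_, isOrderPath_orderPath op, by rwa [← parisiP_eq_pathParisi op hk]⟩

theorem exists_near_minimizers_close (hS : ∀ p ∈ S, 0 < p) (h : ℝ) (β : ℕ → ℝ) {d : ℝ}
    (hd : 0 < d) :
    ∃ ε > 0, ∀ z w, IsOrderPath 0 0 z → IsOrderPath 0 0 w →
      pathParisi S h β z < parisiF S h β + ε → pathParisi S h β w < parisiF S h β + ε →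
      ∀ s ∈ Set.Icc 0 1, |pathIntegral 0 z (fun q => xiFn' S β (max s q)) -
        pathIntegral 0 w (fun q => xiFn' S β (max s q))| < d := by
  obtain ⟨ε, hε, hconvex⟩ :=
    exists_le_average_sub_pathPotential h (le_max_left 1 (xiFn' S β 1)) hd
  refine ⟨ε, hε, fun z w hz hw hzε hwε s hs => ?_⟩
  obtain ⟨y, hy, hinteg, hgap⟩ := hconvex (xiFn' S β) (monotoneOn_xiFn' S β) (xiFn'_zero_nonneg S β)
    (le_max_right _ _) z w hz hw
  by_contra! hds
  have := hgap s hs hds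
  have := parisiF_le_pathParisi hS h β hy
  unfold pathParisi at hzε hwε this
  rw [hinteg] at this
  linarith

end Minimizers

section Compactness

variable {k : ℕ}

lemma isCompact_orderSeq (k : ℕ) : IsCompact (orderSeq k) := by
  refine (isCompact_univ_pi fun _ => isCompact_Icc (a := (0 : ℝ × ℝ)) (b := 1)).of_isClosed_subset
    ?_ fun x hx i _ => ⟨nonneg_of_mem_orderSeq hx i, le_one_of_mem_orderSeq hx i⟩
  have hmono : IsClosed {x : ℕ → ℝ × ℝ | Monotone x} := isClosed_monotone
  have hzero : IsClosed {x : ℕ → ℝ × ℝ | x 0 = 0} := isClosed_eq (by fun_prop) (by fun_prop)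
  have hlast : IsClosed {x : ℕ → ℝ × ℝ | (x k).2 = 1} := isClosed_eq (by fun_prop) (by fun_prop)
  have htail : IsClosed {x : ℕ → ℝ × ℝ | ∀ i, k < i → x i = 1} := by
    simp only [Set.ofPred_forall]
    exact isClosed_iInter fun i => isClosed_iInter fun _ =>
      isClosed_eq (by fun_prop) (by fun_prop)
  exact hmono.inter (hzero.inter (hlast.inter htail))

@[fun_prop]
lemma continuous_orderSeq_apply (i : ℕ) : Continuous fun x : orderSeq k => x.1 i :=
  (continuous_apply i).comp continuous_subtype_val

lemma continuous_pathPotential_orderSeq {τ : ℝ → ℝ} (hτ : Continuous τ) {l j : ℕ} (hk : l + j = k)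
    {t : orderSeq k → ℝ} (ht : Continuous t) (y : ℝ) :
    Continuous fun x : orderSeq k => pathPotential τ (t x) (x.1 l).2 (pointPath x.1 l j) y := by
  have hm₀ : ∀ x : orderSeq k, 0 ≤ (x.1 l).2 := fun x => (nonneg_of_mem_orderSeq x.2 l).2
  have hm₁ : ∀ x : orderSeq k, (x.1 l).2 ≤ 1 := fun x => (le_one_of_mem_orderSeq x.2 l).2
  have hm : Continuous fun x : orderSeq k => (x.1 l).2 := by fun_prop
  refine continuous_iff_continuousAt.2 fun x => ?_
  induction j generalizing l t y with
  | zero =>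
    exact tendsto_step hm₀ hm₁ (fun _ => lipschitz_logCosh) lipschitz_logCosh hm.continuousAt
      (continuous_const.sub ht).continuousAt tendsto_const_nhds fun _ => tendsto_const_nhds
  | succ j ih =>
    have hτq : Continuous fun x : orderSeq k => τ (x.1 (l + 1)).1 := by fun_prop
    have hlip := fun x : orderSeq k => (isOrderPath_of_mem_orderSeq x.2 (l := l + 1) (j := j)
      (by omega)).lipschitz_pathPotential τ (τ (x.1 (l + 1)).1)
    simp only [pointPath_succ, pathPotential]
    exact tendsto_step hm₀ hm₁ hlip (hlip x) hm.continuousAt (hτq.sub ht).continuousAt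
      tendsto_const_nhds fun y => ih (by omega) hτq y
        (fun x => (nonneg_of_mem_orderSeq x.2 _).2) (fun x => (le_one_of_mem_orderSeq x.2 _).2)
        (by fun_prop)

lemma continuous_pathParisi_orderSeq (S : Finset ℕ) (h : ℝ) (β : ℕ → ℝ) (k : ℕ) :
    Continuous fun x : orderSeq k => pathParisi S h β (pointPath x.1 0 k) := by
  have hm : ∀ x : orderSeq k, (x.1 0).2 = 0 := fun x => by rw [x.2.2.1]; rfl
  have hpot := continuous_pathPotential_orderSeq (continuous_xiFn' S β) (zero_add k)
    (continuous_const (y := 0)) h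
  have hinteg : Continuous fun x : orderSeq k =>
      pathIntegral (x.1 0).2 (pointPath x.1 0 k) (thetaFn S β) := by
    simp only [pathIntegral_pointPath]
    fun_prop
  simp only [hm] at hpot hinteg
  unfold pathParisi
  fun_prop

lemma exists_pathParisi_min (S : Finset ℕ) (h : ℝ) (β : ℕ → ℝ) (k : ℕ) :
    ∃ z, z.length = k + 1 ∧ IsOrderPath 0 0 z ∧
      ∀ w, w.length = k + 1 → IsOrderPath 0 0 w → pathParisi S h β z ≤ pathParisi S h β w := by
  obtain ⟨w, hlen, hw, -⟩ := isOrderPath_singleton.exists_length_add k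
  rw [List.length_singleton, add_comm] at hlen
  have hcont : ContinuousOn (fun x => pathParisi S h β (pointPath x 0 (k + 1)))
      (orderSeq (k + 1)) :=
    continuousOn_iff_continuous_domRestrict.2 (continuous_pathParisi_orderSeq S h β (k + 1))
  obtain ⟨x, hx, hmin⟩ := (isCompact_orderSeq (k + 1)).exists_isMinOn
    ⟨_, hlen ▸ getD_mem_orderSeq hw⟩ hcont
  refine ⟨_, length_pointPath x 0 (k + 1), isOrderPath_zero_of_mem_orderSeq hx,
    fun w hlen hw => ?_⟩
  rw [← hlen] at hmin ⊢
  simpa only [pointPath_getD (0, 0) (1, 1) w] using isMinOn_iff.1 hmin _ (getD_mem_orderSeq hw)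

theorem exists_minimizers {S : Finset ℕ} (hS : ∀ p ∈ S, 0 < p) (h : ℝ) (β : ℕ → ℝ) :
    ∃ op : (k : ℕ) → OrderParam (k + 1),
      (∀ k, ∀ op' : OrderParam (k + 1), parisiP S h β (op k) ≤ parisiP S h β op') ∧
      Tendsto (fun k => parisiP S h β (op k)) atTop (𝓝 (parisiF S h β)) := by
  choose z hlen hz hmin using exists_pathParisi_min S h β
  choose op hop using fun k => (hz k).exists_orderParam (hlen k)
  have heq : ∀ k, parisiP S h β (op k) = pathParisi S h β (z k) := fun k => by
    rw [parisiP_eq_pathParisi _ k.succ_pos, (hop k).pathParisi_eq]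
  refine ⟨op, fun k op' => ?_, ?_⟩
  · rw [heq, parisiP_eq_pathParisi _ k.succ_pos]
    exact hmin k _ (length_pointPath _ _ _) (isOrderPath_orderPath op')
  simp only [heq]
  refine tendsto_order.2 ⟨fun c hc => .of_forall fun k =>
    hc.trans_le (parisiF_le_pathParisi hS h β (hz k)), fun c hc => ?_⟩
  obtain ⟨w, hw, hwc⟩ := exists_pathParisi_lt hc
  filter_upwards [eventually_ge_atTop w.length] with k hk
  obtain ⟨w', hlen', hw', hequiv⟩ := hw.exists_length_add (k + 1 - w.length)
  have := hmin k w' (by omega) hw'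
  rw [hequiv.pathParisi_eq] at this
  exact this.trans_lt hwc

end Compactness

/-! ### The Parisi measure -/

section Uniqueness

variable {φ : ℝ → ℝ} {a s q : ℝ}

lemma sub_comp_max_div_mem (hφ : StrictMonoOn φ (Set.Icc 0 1)) (ha : 0 ≤ a) (has : a < s)
    (hs : s ≤ 1) (hq : q ∈ Set.Icc 0 1) :
    (φ (max s q) - φ (max a q)) / (φ s - φ a) ∈ Set.Icc 0 1 := by
  have ha' : a ∈ Set.Icc 0 1 := ⟨ha, has.le.trans hs⟩
  have hs' : s ∈ Set.Icc 0 1 := ⟨ha.trans has.le, hs⟩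
  have hpos : 0 < φ s - φ a := sub_pos.2 (hφ ha' hs' has)
  rw [Set.mem_Icc, div_le_one hpos, le_div_iff₀ hpos, zero_mul]
  obtain hqa | haq := le_total q a
  · rw [max_eq_left hqa, max_eq_left (hqa.trans has.le)]
    exact ⟨hpos.le, le_rfl⟩
  obtain hqs | hsq := le_total q s
  · rw [max_eq_right haq, max_eq_left hqs]
    have h₁ := hφ.monotoneOn hq hs' hqs
    have h₂ := hφ.monotoneOn ha' hq haq
    constructor <;> linarith
  · rw [max_eq_right haq, max_eq_right hsq, sub_self]
    exact ⟨le_rfl, hpos.le⟩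

lemma tendsto_sub_comp_max_div (hφ : StrictMonoOn φ (Set.Icc 0 1)) (ha : 0 ≤ a) (ha₁ : a < 1)
    (q : ℝ) :
    Tendsto (fun s => (φ (max s q) - φ (max a q)) / (φ s - φ a)) (𝓝[>] a)
      (𝓝 ((Set.Iic a).indicator 1 q)) := by
  refine tendsto_const_nhds.congr' ?_
  obtain hqa | haq := le_or_gt q a
  · filter_upwards [Ioo_mem_nhdsGT ha₁] with s hs
    have : φ a < φ s := hφ ⟨ha, ha₁.le⟩ ⟨ha.trans hs.1.le, hs.2.le⟩ hs.1
    rw [Set.indicator_of_mem (Set.mem_Iic.2 hqa), max_eq_left hqa, max_eq_left (hqa.trans hs.1.le),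
      div_self (sub_pos.2 this).ne', Pi.one_apply]
  · filter_upwards [Ioo_mem_nhdsGT haq] with s hs
    rw [Set.indicator_of_notMem (Set.notMem_Iic.2 haq), max_eq_right haq.le,
      max_eq_right hs.2.le, sub_self, zero_div]

variable {μ ν : Measure unitInterval} [IsProbabilityMeasure μ] [IsProbabilityMeasure ν]

lemma integrable_continuous_comp {f : ℝ → ℝ} (hf : Continuous f) :
    Integrable (fun q : unitInterval => f q) μ :=
  (hf.comp continuous_subtype_val).integrable_of_hasCompactSupport (.of_compactSpace _)

lemma tendsto_integral_comp_max (hφc : Continuous φ) (hφ : StrictMonoOn φ (Set.Icc 0 1))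
    {a : unitInterval} (ha : (a : ℝ) < 1) :
    Tendsto (fun s : ℝ =>
        (∫ q : unitInterval, φ (max s q) ∂μ - ∫ q : unitInterval, φ (max a q) ∂μ) / (φ s - φ a))
      (𝓝[>] (a : ℝ)) (𝓝 (μ.real (Set.Iic a))) := by
  have hmax : ∀ s : ℝ, Continuous fun q => φ (max s q) := fun s => by fun_prop
  have hind : μ.real (Set.Iic a) =
      ∫ q : unitInterval, (Set.Iic (a : ℝ)).indicator (1 : ℝ → ℝ) q ∂μ :=
    (integral_indicator_one measurableSet_Iic).symm
  rw [hind]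
  have hlim := tendsto_integral_filter_of_dominated_convergence (l := 𝓝[>] (a : ℝ)) (μ := μ)
    (F := fun s q => (φ (max s q) - φ (max a q)) / (φ s - φ a)) (fun _ => 1)
    (.of_forall fun s => by fun_prop) ?_ (integrable_const 1)
    (.of_forall fun q => tendsto_sub_comp_max_div hφ a.2.1 ha q)
  · refine hlim.congr fun s => ?_
    rw [integral_div, integral_sub (integrable_continuous_comp (hmax s))
      (integrable_continuous_comp (hmax a))]
  · filter_upwards [Ioo_mem_nhdsGT ha] with s hs
    refine .of_forall fun q => ?_
    have := sub_comp_max_div_mem hφ a.2.1 hs.1 hs.2.le q.2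
    rw [norm_eq_abs, abs_of_nonneg this.1]
    exact this.2

lemma measure_eq_of_integral_comp_max_eq (hφc : Continuous φ) (hφ : StrictMonoOn φ (Set.Icc 0 1))
    (hinteg : ∀ s ∈ Set.Icc (0 : ℝ) 1,
      ∫ q : unitInterval, φ (max s q) ∂μ = ∫ q : unitInterval, φ (max s q) ∂ν) : μ = ν := by
  refine Measure.ext_of_Iic μ ν fun a => ?_
  obtain ha | ha := a.2.2.lt_or_eq
  · refine (measureReal_eq_measureReal_iff).1 (tendsto_nhds_unique
      (tendsto_integral_comp_max (μ := μ) hφc hφ ha)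
      ((tendsto_integral_comp_max (μ := ν) hφc hφ ha).congr' ?_))
    filter_upwards [Ioo_mem_nhdsGT ha] with s hs
    rw [hinteg s ⟨a.2.1.trans hs.1.le, hs.2.le⟩, hinteg a a.2]
  · obtain rfl : a = 1 := Subtype.ext ha
    have : Set.Iic (1 : unitInterval) = Set.univ := Set.Iic_top
    rw [this, measure_univ, measure_univ]

end Uniqueness

/-- The discrete measure on the unit interval with mass `m_l - m_{l-1}` at `q_l`, where the list of
the points `(q_l, m_l)` continues the value `m`. -/
def pathMeasure : ℝ → List (ℝ × ℝ) → Measure unitInterval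
  | _, [] => 0
  | m, p :: z => ENNReal.ofReal (p.2 - m) • Measure.dirac (Set.projIcc 0 1 zero_le_one p.1) +
      pathMeasure p.2 z

namespace IsOrderPath

variable {q m : ℝ} {z : List (ℝ × ℝ)}

lemma pathMeasure_univ (h : IsOrderPath q m z) :
    pathMeasure m z Set.univ = ENNReal.ofReal (1 - m) := by
  induction h with
  | nil => simp [pathMeasure]
  | cons _ _ _ hm hz ih =>
    simp only [pathMeasure, Measure.add_apply, Measure.smul_apply, ih, measure_univ, smul_eq_mul,
      mul_one]
    rw [← ENNReal.ofReal_add (sub_nonneg.2 hm) (sub_nonneg.2 hz.m_mem.2)]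
    congr 1
    ring

lemma integral_pathMeasure (h : IsOrderPath q m z) (f : ℝ → ℝ) :
    Integrable (fun x : unitInterval => f x) (pathMeasure m z) ∧
      ∫ x : unitInterval, f x ∂(pathMeasure m z) = pathIntegral m z f := by
  induction h with
  | nil => simp [pathMeasure, pathIntegral]
  | @cons _ m p z _ _ _ hm hz ih =>
    have hdirac : Integrable (fun x : unitInterval => f x) (ENNReal.ofReal (p.2 - m) •
        Measure.dirac (Set.projIcc 0 1 zero_le_one p.1)) :=
      (integrable_dirac (by simp)).smul_measure ENNReal.ofReal_ne_top
    refine ⟨hdirac.add_measure ih.1, ?_⟩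
    rw [pathMeasure, integral_add_measure hdirac ih.1, ih.2, integral_smul_measure, integral_dirac,
      Set.projIcc_of_mem zero_le_one hz.q_mem, ENNReal.toReal_ofReal (sub_nonneg.2 hm)]
    rfl

end IsOrderPath

/-- The lists that are discrete order parameters. -/
abbrev OrderPath := {z : List (ℝ × ℝ) // IsOrderPath 0 0 z}

/-- The discrete probability measure of an order parameter. -/
def orderMeasure (z : OrderPath) : ProbabilityMeasure unitInterval :=
  ⟨pathMeasure 0 z.1, ⟨by simp [z.2.pathMeasure_univ]⟩⟩

lemma integral_orderMeasure (z : OrderPath) (f : ℝ → ℝ) :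
    ∫ x : unitInterval, f x ∂(orderMeasure z : Measure unitInterval) = pathIntegral 0 z.1 f :=
  (z.2.integral_pathMeasure f).2

/-- The filter along which the Parisi functional tends to its infimum. -/
def nearMin (S : Finset ℕ) (h : ℝ) (β : ℕ → ℝ) : Filter OrderPath :=
  comap (fun z => pathParisi S h β z.1) (𝓝 (parisiF S h β))

section NearMin

variable {S : Finset ℕ}

lemma nearMin_hasBasis (hS : ∀ p ∈ S, 0 < p) (h : ℝ) (β : ℕ → ℝ) :
    (nearMin S h β).HasBasis (fun ε : ℝ => 0 < ε)
      fun ε => {z | pathParisi S h β z.1 < parisiF S h β + ε} := by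
  refine (Metric.nhds_basis_ball.comap _).to_hasBasis
    (fun ε hε => ⟨ε, hε, fun z hz => ?_⟩) fun ε hε => ⟨ε, hε, fun z hz => ?_⟩
  · have := parisiF_le_pathParisi hS h β z.2
    rw [Set.mem_preimage, Metric.mem_ball, Real.dist_eq, abs_of_nonneg (by linarith)]
    exact sub_lt_iff_lt_add'.2 hz
  · rw [Set.mem_preimage, Metric.mem_ball, Real.dist_eq] at hz
    exact sub_lt_iff_lt_add'.1 ((le_abs_self _).trans_lt hz)

lemma nearMin_neBot (hS : ∀ p ∈ S, 0 < p) (h : ℝ) (β : ℕ → ℝ) : (nearMin S h β).NeBot := by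
  refine (nearMin_hasBasis hS h β).neBot_iff.2 fun hε => ?_
  obtain ⟨z, hz, hlt⟩ := exists_pathParisi_lt (lt_add_of_pos_right (parisiF S h β) hε)
  exact ⟨⟨z, hz⟩, hlt⟩

lemma exists_tendsto_pathIntegral_nearMin (hS : ∀ p ∈ S, 0 < p) (h : ℝ) (β : ℕ → ℝ) {s : ℝ}
    (hs : s ∈ Set.Icc 0 1) :
    ∃ c, Tendsto (fun z : OrderPath => pathIntegral 0 z.1 fun q => xiFn' S β (max s q))
      (nearMin S h β) (𝓝 c) := by
  have := nearMin_neBot hS h β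
  refine cauchy_map_iff_exists_tendsto.1 (Metric.cauchy_iff.2 ⟨inferInstance, fun d hd => ?_⟩)
  obtain ⟨ε, hε, hclose⟩ := exists_near_minimizers_close hS h β hd
  refine ⟨_, image_mem_map ((nearMin_hasBasis hS h β).mem_of_mem hε), ?_⟩
  rintro _ ⟨z, hz, rfl⟩ _ ⟨w, hw, rfl⟩
  exact hclose z.1 w.1 z.2 w.2 hz hw s hs

lemma strictMonoOn_xiFn' {β : ℕ → ℝ} (hβ : ∃ p ∈ S, 2 ≤ p ∧ β p ≠ 0) :
    StrictMonoOn (xiFn' S β) (Set.Icc 0 1) := by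
  intro x hx y _ hxy
  obtain ⟨p, hp, hp₂, hβp⟩ := hβ
  have hx₀ := hx.1
  refine Finset.sum_lt_sum (fun i _ => by gcongr) ⟨p, hp, ?_⟩
  have hpow : x ^ (p - 1) < y ^ (p - 1) := pow_lt_pow_left₀ hxy hx₀ (by omega)
  have : (0 : ℝ) < p := mod_cast (by omega)
  exact mul_lt_mul_of_pos_left hpow (by positivity)

lemma continuous_integral_probabilityMeasure {f : ℝ → ℝ} (hf : Continuous f) :
    Continuous fun μ : ProbabilityMeasure unitInterval =>
      ∫ q : unitInterval, f q ∂(μ : Measure unitInterval) :=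
  ProbabilityMeasure.continuous_integral_boundedContinuousFunction
    (BoundedContinuousFunction.mkOfCompact
      ⟨fun q : unitInterval => f q, hf.comp continuous_subtype_val⟩)

lemma exists_tendsto_orderMeasure (hS : ∀ p ∈ S, 0 < p) (h : ℝ) {β : ℕ → ℝ}
    (hβ : ∃ p ∈ S, 2 ≤ p ∧ β p ≠ 0) : ∃ μ, Tendsto orderMeasure (nearMin S h β) (𝓝 μ) := by
  have := nearMin_neBot hS h β
  choose! c hc using fun s (hs : s ∈ Set.Icc (0 : ℝ) 1) =>
    exists_tendsto_pathIntegral_nearMin hS h β hs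
  have hcluster : ∀ ν, ClusterPt ν (map orderMeasure (nearMin S h β)) → ∀ s ∈ Set.Icc (0 : ℝ) 1,
      ∫ q : unitInterval, xiFn' S β (max s q) ∂(ν : Measure unitInterval) = c s := by
    intro ν hν s hs
    have hcont := continuous_integral_probabilityMeasure
      (f := fun q => xiFn' S β (max s q)) (by fun_prop)
    have hmap := hν.map hcont.continuousAt tendsto_map
    rw [map_map] at hmap
    have hcs := hc s hs
    simp only [← integral_orderMeasure] at hcs
    exact eq_of_nhds_neBot (hmap.mono hcs)
  obtain ⟨μ, hμ⟩ := exists_clusterPt_of_compactSpace (map orderMeasure (nearMin S h β))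
  refine ⟨μ, le_nhds_of_unique_clusterPt fun ν hν => Subtype.ext ?_⟩
  exact measure_eq_of_integral_comp_max_eq (μ := (ν : Measure unitInterval))
    (ν := (μ : Measure unitInterval)) (continuous_xiFn' S β) (strictMonoOn_xiFn' hβ)
    fun s hs => (hcluster ν hν s hs).trans (hcluster μ hμ s hs).symm

theorem exists_parisi_measure (hS : ∀ p ∈ S, 0 < p) (h : ℝ) {β : ℕ → ℝ}
    (hβ : ∃ p ∈ S, 2 ≤ p ∧ β p ≠ 0) :
    ∃ μ : Measure ℝ, IsProbabilityMeasure μ ∧ μ (Set.Icc (0 : ℝ) 1)ᶜ = 0 ∧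
      ∀ f : ℝ → ℝ, Continuous f →
        Tendsto (fun z : OrderPath => pathIntegral 0 z.1 f) (nearMin S h β) (𝓝 (∫ q, f q ∂μ)) := by
  obtain ⟨μ, hμ⟩ := exists_tendsto_orderMeasure hS h hβ
  refine ⟨(μ : Measure unitInterval).map Subtype.val,
    Measure.isProbabilityMeasure_map (by fun_prop), ?_, fun f hf => ?_⟩
  · rw [Measure.map_apply measurable_subtype_coe measurableSet_Icc.compl]
    simp
  · rw [integral_map (by fun_prop) hf.aestronglyMeasurable]
    exact (((continuous_integral_probabilityMeasure hf).tendsto μ).comp hμ).congr fun z =>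
      integral_orderMeasure z f

end NearMin

/-! ### Clipped time changes -/

lemma integrable_exp_mul_stdNormal (s : ℝ) : Integrable (fun g => exp (s * g)) stdNormal :=
  (HasExpGrowth.exp_mul_of_lipschitz LipschitzWith.id s).integrable

lemma integral_convexComb_exp (a b s : ℝ) (hab : a + b = 1) :
    ∫ g, (a * exp (s * g) + b * exp (-(s * g))) ∂stdNormal = exp (s ^ 2 / 2) := by
  simp only [← neg_mul]
  rw [integral_add ((integrable_exp_mul_stdNormal s).const_mul a)
      ((integrable_exp_mul_stdNormal (-s)).const_mul b), integral_const_mul, integral_const_mul,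
    integral_exp_mul_stdNormal, integral_exp_mul_stdNormal, neg_sq, ← add_mul, hab, one_mul]

lemma step_one_logCosh {v : ℝ} (hv : 0 ≤ v) (x : ℝ) : step 1 v logCosh x = logCosh x + v / 2 := by
  have hstep := exp_mul_step lipschitz_logCosh one_ne_zero v x
  simp only [one_mul, exp_logCosh, cosh_add_eq_cosh_mul] at hstep
  rw [integral_const_mul, integral_convexComb_exp _ _ _ (by ring), sq_sqrt hv, ← exp_logCosh,
    ← exp_add] at hstep
  exact exp_injective hstep

lemma exp_mul_convexComb_le_exp_mul_logCosh {m : ℝ} (hm₀ : 0 ≤ m) (hm₁ : m ≤ 1) (x y : ℝ) :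
    exp (m * logCosh x) *
        ((1 + tanh x) / 2 * exp (m * y) + (1 - tanh x) / 2 * exp (-(m * y))) ≤
      exp (m * logCosh (x + y)) := by
  obtain ⟨hp, hn⟩ := tanh_weights_nonneg x
  have hconc := (Real.concaveOn_rpow hm₀ hm₁).2 (Set.mem_Ici.2 (exp_pos y).le)
    (Set.mem_Ici.2 (exp_pos (-y)).le) hp hn (by ring)
  simp only [smul_eq_mul, ← exp_mul] at hconc
  rw [mul_comm m (logCosh x), mul_comm m (logCosh (x + y)), exp_mul (logCosh x),
    exp_mul (logCosh _), exp_logCosh, exp_logCosh, cosh_add_eq_cosh_mul,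
    Real.mul_rpow (cosh_pos x).le (by positivity), mul_comm m y, ← neg_mul]
  exact mul_le_mul_of_nonneg_left hconc (by positivity)

lemma le_step_zero {A u : ℝ → ℝ} (h : IsPotential A u) (v x : ℝ) :
    A x ≤ step 0 v A x := by
  have hlin : HasExpGrowth fun g => A x + u x * √v * g :=
    (HasExpGrowth.const _).add (HasExpGrowth.id.const_mul _)
  calc A x = ∫ g, (A x + u x * √v * g) ∂stdNormal := by
        rw [integral_add (HasExpGrowth.const _).integrable (HasExpGrowth.id.const_mul _).integrable,
          integral_const_mul, integral_id_gaussianReal]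
        simp
    _ ≤ ∫ g, A (x + √v * g) ∂stdNormal :=
        integral_mono hlin.integrable (expGrowth_comp h.lipschitz v x).integrable fun g => by
          simpa only [mul_assoc] using h.add_mul_le x (√v * g)
    _ = step 0 v A x := (step_zero v A x).symm

lemma logCosh_add_le_step {m v : ℝ} (hm₀ : 0 ≤ m) (hm₁ : m ≤ 1) (hv : 0 ≤ v) (x : ℝ) :
    logCosh x + m * v / 2 ≤ step m v logCosh x := by
  obtain rfl | hm := hm₀.eq_or_lt
  · simpa using le_step_zero isPotential_logCosh v x
  refine le_of_mul_le_mul_left (exp_le_exp.1 ?_) hm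
  calc exp (m * (logCosh x + m * v / 2))
      = exp (m * logCosh x) * exp ((m * √v) ^ 2 / 2) := by
        rw [mul_pow, sq_sqrt hv, ← exp_add]
        ring_nf
    _ = ∫ g, exp (m * logCosh x) * ((1 + tanh x) / 2 * exp (m * √v * g) +
          (1 - tanh x) / 2 * exp (-(m * √v * g))) ∂stdNormal := by
        rw [integral_const_mul, integral_convexComb_exp _ _ _ (by ring)]
    _ ≤ ∫ g, exp (m * logCosh (x + √v * g)) ∂stdNormal := by
        refine integral_mono ?_ (expGrowth_exp lipschitz_logCosh m v x).integrable fun g => ?_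
        · simp only [← neg_mul]
          exact (((integrable_exp_mul_stdNormal _).const_mul _).add
            ((integrable_exp_mul_stdNormal _).const_mul _)).const_mul _
        · simpa only [mul_assoc] using exp_mul_convexComb_le_exp_mul_logCosh hm₀ hm₁ x (√v * g)
    _ = exp (m * step m v logCosh x) := (exp_mul_step lipschitz_logCosh hm.ne' v x).symm

section Clipping

variable {τ : ℝ → ℝ} {q m t c : ℝ} {z : List (ℝ × ℝ)}

lemma step_logCosh_min_add_le {s : ℝ} (hm₀ : 0 ≤ m) (hm₁ : m ≤ 1) (hts : t ≤ s) (hcs : c ≤ s)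
    (x : ℝ) :
    step m (c - min t c) logCosh x + m * (s - max t c) / 2 ≤ step m (s - t) logCosh x := by
  have hsplit : s - t = (c - min t c) + (s - max t c) := by linarith [min_add_max t c]
  rw [hsplit, ← step_step lipschitz_logCosh m (sub_nonneg.2 (min_le_right t c))
    (sub_nonneg.2 (max_le hts hcs)), ← step_add_const lipschitz_logCosh]
  exact step_mono (lipschitz_add_const lipschitz_logCosh _) (lipschitz_step lipschitz_logCosh hm₀ _)
    hm₀ _ x fun y => logCosh_add_le_step hm₀ hm₁ (sub_nonneg.2 (max_le hts hcs)) y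

lemma pathPotential_const (c m : ℝ) (z : List (ℝ × ℝ)) :
    pathPotential (fun _ => c) c m z = logCosh := by
  induction z generalizing m with
  | nil => simp only [pathPotential, sub_self, step_zero_variance]
  | cons p z ih => simp only [pathPotential, sub_self, step_zero_variance, ih]

namespace IsOrderPath

lemma pathPotential_congr (hz : IsOrderPath q m z) {σ : ℝ → ℝ}
    (h : ∀ x ∈ Set.Icc q 1, τ x = σ x) (t : ℝ) : pathPotential τ t m z = pathPotential σ t m z := by
  induction hz generalizing t with
  | nil _ hq => simp only [pathPotential, h 1 ⟨hq, le_rfl⟩]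
  | cons _ hq _ _ hz ih =>
    simp only [pathPotential]
    rw [h _ ⟨hq, hz.q_mem.2⟩, ih fun x hx => h x ⟨hq.trans hx.1, hx.2⟩]

lemma step_zero_pathPotential_max_le (hz : IsOrderPath q m z) (hτ : MonotoneOn τ (Set.Icc 0 1))
    (hc : c ≤ τ 1) (ht : t ≤ τ q) (x : ℝ) :
    step 0 (max t c - t) (pathPotential (fun q => max (τ q) c) (max t c) m z) x ≤
      pathPotential τ t m z x := by
  induction hz generalizing t x with
  | nil hq₀ hq =>
    have hle := ht.trans (hτ ⟨hq₀, hq⟩ ⟨zero_le_one, le_rfl⟩ hq)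
    simp only [pathPotential, max_eq_left hc]
    refine (step_zero_le (lipschitz_step lipschitz_logCosh zero_le_one _) zero_le_one _
      x).trans_eq ?_
    rw [step_step lipschitz_logCosh 1 (sub_nonneg.2 (le_max_left t c))
      (sub_nonneg.2 (max_le hle hc)), add_comm, sub_add_sub_cancel]
  | @cons q m p z hq₀ hq hm₀ _ hz ih =>
    have hle := ht.trans (hτ ⟨hq₀, hq.trans hz.q_mem.2⟩ hz.q_mem hq)
    simp only [pathPotential]
    have hB := hz.lipschitz_pathPotential (fun q => max (τ q) c) (max (τ p.1) c)
    refine le_trans ?_ (step_mono (lipschitz_step hB le_rfl _) (hz.lipschitz_pathPotential τ _) hm₀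
      _ x (ih le_rfl))
    obtain hcp | hpc := le_total c (τ p.1)
    · rw [max_eq_left hcp, sub_self, step_zero_variance]
      refine (step_zero_le (lipschitz_step (hz.lipschitz_pathPotential _ _) hm₀ _) hm₀ _
        x).trans_eq ?_
      rw [step_step (hz.lipschitz_pathPotential _ _) m (sub_nonneg.2 (le_max_left t c))
        (sub_nonneg.2 (max_le hle hcp)), add_comm, sub_add_sub_cancel]
    · rw [max_eq_right hpc, max_eq_right (hle.trans hpc), sub_self, step_zero_variance]
      refine le_of_eq_of_le ?_
        (step_zero_le (lipschitz_step (hz.lipschitz_pathPotential _ _) le_rfl _) hm₀ _ x)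
      rw [step_step (hz.lipschitz_pathPotential _ _) 0 (sub_nonneg.2 hle) (sub_nonneg.2 hpc),
        add_comm, sub_add_sub_cancel]

lemma pathPotential_min_add_le (hz : IsOrderPath q m z) (hτ : MonotoneOn τ (Set.Icc 0 1))
    (c : ℝ) (ht : t ≤ τ q) (x : ℝ) :
    pathPotential (fun q => min (τ q) c) (min t c) m z x +
        1 / 2 * (max (τ 1) c - m * max t c - pathIntegral m z (fun q => max (τ q) c)) ≤
      pathPotential τ t m z x := by
  induction hz generalizing t x with
  | nil hq₀ hq =>
    have hle := ht.trans (hτ ⟨hq₀, hq⟩ ⟨zero_le_one, le_rfl⟩ hq)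
    simp only [pathPotential, pathIntegral]
    rw [step_one_logCosh (sub_nonneg.2 (min_le_min_right c hle)),
      step_one_logCosh (sub_nonneg.2 hle)]
    linarith [min_add_max t c, min_add_max (τ 1) c]
  | @cons q m p z hq₀ hq hm₀ hm hz ih =>
    have hle := ht.trans (hτ ⟨hq₀, hq.trans hz.q_mem.2⟩ hz.q_mem hq)
    have hB := hz.lipschitz_pathPotential (fun q => min (τ q) c) (min (τ p.1) c)
    have hmono := step_mono (lipschitz_add_const hB _) (hz.lipschitz_pathPotential τ _) hm₀
      (τ p.1 - t) x (ih le_rfl)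
    rw [step_add_const hB] at hmono
    simp only [pathPotential, pathIntegral]
    suffices hstep : step m (min (τ p.1) c - min t c)
          (pathPotential (fun q => min (τ q) c) (min (τ p.1) c) p.2 z) x +
        m * (max (τ p.1) c - max t c) / 2 ≤
          step m (τ p.1 - t) (pathPotential (fun q => min (τ q) c) (min (τ p.1) c) p.2 z) x by
      linarith
    obtain hpc | hcp := le_total (τ p.1) c
    · rw [min_eq_left hpc, min_eq_left (hle.trans hpc), max_eq_right hpc,
        max_eq_right (hle.trans hpc)]
      simp
    · have hconst : pathPotential (fun q => min (τ q) c) c p.2 z = logCosh := by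
        rw [hz.pathPotential_congr (σ := fun _ => c) (fun y hy => min_eq_right
          (hcp.trans (hτ hz.q_mem ⟨hz.q_mem.1.trans hy.1, hy.2⟩ hy.1))), pathPotential_const]
      rw [min_eq_right hcp, max_eq_left hcp, hconst]
      exact step_logCosh_min_add_le hm₀ (hm.trans hz.m_mem.2) hle hcp x

lemma pathPotential_clip_add_le (hz : IsOrderPath 0 0 z) (hτ : MonotoneOn τ (Set.Icc 0 1))
    (hτ₀ : 0 ≤ τ 0) {a b : ℝ} (ha : 0 ≤ a) (hab : a ≤ b) (haτ : a ≤ τ 1) (x : ℝ) :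
    pathPotential (fun q => min (max (τ q) a) b) 0 0 z x +
        1 / 2 * (max (τ 1) b - pathIntegral 0 z (fun q => max (τ q) b)) ≤
      pathPotential τ 0 0 z x := by
  have hmax : MonotoneOn (fun q => max (τ q) a) (Set.Icc 0 1) := fun _ hq _ hr hqr =>
    max_le_max_right a (hτ hq hr hqr)
  have hlow := hz.step_zero_pathPotential_max_le hτ haτ hτ₀ x
  have hup := hz.pathPotential_min_add_le hmax b (t := 0) (ha.trans (le_max_right _ _)) x
  simp only [min_eq_left (ha.trans hab), zero_mul, sub_zero, max_assoc, max_eq_right hab] at hup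
  have hle : (0 : ℝ) ≤ max (τ 0) a := hτ₀.trans (le_max_left _ _)
  rw [max_eq_right ha, sub_zero, hz.pathPotential_eq_step hmax (le_max_right _ _),
    step_step (hz.lipschitz_pathPotential _ _) 0 ha (sub_nonneg.2 (le_max_right _ _)),
    add_sub_cancel] at hlow
  rw [hz.pathPotential_eq_step hmax hle, sub_zero] at hup
  exact hup.trans hlow

end IsOrderPath

end Clipping

lemma pow_tangent_le (n : ℕ) {x y : ℝ} (hx : 0 ≤ x) (hy : 0 ≤ y) :
    y ^ n + n * y ^ (n - 1) * (x - y) ≤ x ^ n := by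
  induction n with
  | zero => simp
  | succ n ih =>
    obtain rfl | hn := n.eq_zero_or_pos
    · simp
    have hy' : y ^ n = y ^ (n - 1) * y := (pow_sub_one_mul hn.ne' y).symm
    have hsq : 0 ≤ n * y ^ (n - 1) * (x - y) ^ 2 := by positivity
    have := mul_le_mul_of_nonneg_right ih hx
    rw [pow_succ, pow_succ, Nat.add_sub_cancel]
    push_cast
    rw [hy'] at this ⊢
    linarith

lemma mul_xiFn'_sub_xiFn_le_thetaFn (S : Finset ℕ) (β : ℕ → ℝ)
    {x y : ℝ} (hx : 0 ≤ x) (hy : 0 ≤ y) : x * xiFn' S β y - xiFn S β x ≤ thetaFn S β y := by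
  have hsum : xiFn S β y + xiFn' S β y * (x - y) ≤ xiFn S β x := by
    unfold xiFn xiFn'
    rw [Finset.sum_mul, ← Finset.sum_add_distrib]
    refine Finset.sum_le_sum fun p _ => ?_
    have := mul_le_mul_of_nonneg_left (pow_tangent_le p hx hy) (sq_nonneg (β p))
    linarith
  unfold thetaFn
  linarith

/-! ### Transfer of order parameters between Hamiltonians -/

/-- The order parameter whose points `q_l` are moved by `φ` and whose values `m_l` are kept. -/
def relocate (φ : ℝ → ℝ) (z : List (ℝ × ℝ)) : List (ℝ × ℝ) := z.map (Prod.map φ id)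

lemma pathIntegral_relocate (φ : ℝ → ℝ) (m : ℝ) (z : List (ℝ × ℝ)) (f : ℝ → ℝ) :
    pathIntegral m (relocate φ z) f = pathIntegral m z (fun q => f (φ q)) := by
  induction z generalizing m with
  | nil => rfl
  | cons p z ih => exact congrArg ((p.2 - m) * f (φ p.1) + ·) (ih p.2)

namespace IsOrderPath

variable {φ τ : ℝ → ℝ} {q m t : ℝ} {z : List (ℝ × ℝ)}

lemma relocate (hz : IsOrderPath q m z) (hφ : MonotoneOn φ (Set.Icc 0 1))
    (hφm : ∀ q, φ q ∈ Set.Icc 0 1) : IsOrderPath (φ q) m (relocate φ z) := by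
  induction hz with
  | nil => exact nil (hφm _).1 (hφm _).2
  | cons hq₀ hq hm₀ hm hz ih =>
    exact cons (hφm _).1 (hφ ⟨hq₀, hq.trans hz.q_mem.2⟩ hz.q_mem hq) hm₀ hm ih

/-- The correction accounts for the last step, which ends at `τ 1` before and at `τ (φ 1)` after
the substitution. -/
lemma pathPotential_relocate (hz : IsOrderPath q m z) (hτ : MonotoneOn τ (Set.Icc 0 1))
    (hφ : MonotoneOn φ (Set.Icc 0 1)) (hφm : ∀ q, φ q ∈ Set.Icc 0 1) (ht : t ≤ τ (φ q)) (x : ℝ) :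
    pathPotential τ t m (Parisi.relocate φ z) x =
      pathPotential (fun q => τ (φ q)) t m z x + (τ 1 - τ (φ 1)) / 2 := by
  induction hz generalizing t x with
  | @nil q hq₀ hq =>
    have h₁ := hτ (hφm q) (hφm 1) (hφ ⟨hq₀, hq⟩ ⟨zero_le_one, le_rfl⟩ hq)
    have h₂ := hτ (hφm 1) ⟨zero_le_one, le_rfl⟩ (hφm 1).2
    change step 1 (τ 1 - t) logCosh x = step 1 (τ (φ 1) - t) logCosh x + _
    rw [step_one_logCosh (by linarith), step_one_logCosh (by linarith)]
    ring
  | @cons q m p z _ _ _ _ hz ih =>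
    change step m (τ (φ p.1) - t) (pathPotential τ (τ (φ p.1)) p.2 (Parisi.relocate φ z)) x =
      step m (τ (φ p.1) - t) (pathPotential (fun q => τ (φ q)) (τ (φ p.1)) p.2 z) x + _
    rw [← step_add_const (hz.lipschitz_pathPotential _ _)]
    congr 1
    exact funext (ih le_rfl)

end IsOrderPath

/-- `φ` takes the time change `σ` to the time change `τ`, up to clipping at the range of `τ` on the
unit interval. -/
structure IsTimeChange (σ τ φ : ℝ → ℝ) : Prop where
  mem : ∀ q, φ q ∈ Set.Icc 0 1
  comp_eq : ∀ q, τ (φ q) = min (max (σ q) (τ 0)) (τ 1)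

lemma exists_isTimeChange {τ : ℝ → ℝ} (hτ : MonotoneOn τ (Set.Icc 0 1))
    (hτc : ContinuousOn τ (Set.Icc 0 1)) (σ : ℝ → ℝ) : ∃ φ, IsTimeChange σ τ φ := by
  have hex : ∀ q, ∃ r ∈ Set.Icc (0 : ℝ) 1, τ r = min (max (σ q) (τ 0)) (τ 1) := fun q =>
    intermediate_value_Icc zero_le_one hτc ⟨le_min (le_max_right _ _)
      (hτ ⟨le_rfl, zero_le_one⟩ ⟨zero_le_one, le_rfl⟩ zero_le_one), min_le_right _ _⟩
  choose φ hφ using hex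
  exact ⟨φ, fun q => (hφ q).1, fun q => (hφ q).2⟩

lemma abs_min_max_sub_le {a b r s : ℝ} (hr : r ∈ Set.Icc a b) :
    |min (max s a) b - s| ≤ |r - s| := by
  obtain hsa | has := le_total s a
  · rw [max_eq_right hsa, min_eq_left (hr.1.trans hr.2), abs_of_nonneg (sub_nonneg.2 hsa),
      abs_of_nonneg (sub_nonneg.2 (hsa.trans hr.1))]
    exact sub_le_sub_right hr.1 s
  rw [max_eq_left has]
  obtain hsb | hbs := le_total s b
  · rw [min_eq_left hsb, sub_self, abs_zero]
    exact abs_nonneg _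
  · rw [min_eq_right hbs, abs_of_nonpos (sub_nonpos.2 hbs),
      abs_of_nonpos (sub_nonpos.2 (hr.2.trans hbs))]
    exact neg_le_neg (sub_le_sub_right hr.2 s)

namespace IsTimeChange

variable {σ τ φ : ℝ → ℝ} {z : List (ℝ × ℝ)}

lemma abs_comp_sub_le (h : IsTimeChange σ τ φ) (hτ : MonotoneOn τ (Set.Icc 0 1)) {q : ℝ}
    (hq : q ∈ Set.Icc 0 1) : |τ (φ q) - σ q| ≤ |τ q - σ q| := by
  rw [h.comp_eq]
  exact abs_min_max_sub_le ⟨hτ ⟨le_rfl, zero_le_one⟩ hq hq.1, hτ hq ⟨zero_le_one, le_rfl⟩ hq.2⟩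

lemma monotoneOn (h : IsTimeChange σ τ φ) (hσ : MonotoneOn σ (Set.Icc 0 1))
    (hτ : StrictMonoOn τ (Set.Icc 0 1)) : MonotoneOn φ (Set.Icc 0 1) := by
  intro x hx y hy hxy
  rw [← hτ.le_iff_le (h.mem x) (h.mem y), h.comp_eq, h.comp_eq]
  gcongr
  exact hσ hx hy hxy

lemma max_add_mul_le (h : IsTimeChange σ τ φ) (hτ : StrictMonoOn τ (Set.Icc 0 1)) (q : ℝ) :
    max (σ q) (τ 1) + φ q * τ (φ q) ≤ τ 1 + φ q * σ q := by
  have h₀₁ : τ 0 ≤ τ 1 := (hτ ⟨le_rfl, zero_le_one⟩ ⟨zero_le_one, le_rfl⟩ one_pos).le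
  have hcomp := h.comp_eq q
  obtain hσ₀ | hσ₀ := le_total (σ q) (τ 0)
  · rw [max_eq_right hσ₀, min_eq_left h₀₁] at hcomp
    rw [hτ.injOn (h.mem q) ⟨le_rfl, zero_le_one⟩ hcomp, max_eq_right (hσ₀.trans h₀₁)]
    simp
  rw [max_eq_left hσ₀] at hcomp
  obtain hσ₁ | hσ₁ := le_total (σ q) (τ 1)
  · rw [hcomp, min_eq_left hσ₁, max_eq_right hσ₁]
  · rw [min_eq_right hσ₁] at hcomp
    rw [hτ.injOn (h.mem q) ⟨zero_le_one, le_rfl⟩ hcomp, max_eq_left hσ₁]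
    linarith

lemma pathPotential_relocate_add_le (h : IsTimeChange σ τ φ) (hσ : MonotoneOn σ (Set.Icc 0 1))
    (hτ : StrictMonoOn τ (Set.Icc 0 1)) (hσ₀ : 0 ≤ σ 0) (hτ₀ : 0 ≤ τ 0) (hτσ : τ 0 ≤ σ 1)
    (hz : IsOrderPath 0 0 z) (x : ℝ) :
    pathPotential τ 0 0 (relocate φ z) x +
        1 / 2 * (σ 1 - pathIntegral 0 z (fun q => max (σ q) (τ 1))) ≤
      pathPotential σ 0 0 z x := by
  have h₀₁ : τ 0 ≤ τ 1 := (hτ ⟨le_rfl, zero_le_one⟩ ⟨zero_le_one, le_rfl⟩ one_pos).le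
  have hclip := hz.pathPotential_clip_add_le hσ hσ₀ hτ₀ h₀₁ hτσ x
  simp only [← h.comp_eq] at hclip
  have hend : τ (φ 1) = min (σ 1) (τ 1) := by rw [h.comp_eq, max_eq_left hτσ]
  rw [hz.pathPotential_relocate hτ.monotoneOn (h.monotoneOn hσ hτ) h.mem
    (hτ₀.trans (hτ.monotoneOn ⟨le_rfl, zero_le_one⟩ (h.mem 0) (h.mem 0).1)), hend]
  linarith [min_add_max (σ 1) (τ 1)]

lemma pathParisi_relocate_le {S : Finset ℕ} {β β' : ℕ → ℝ}
    (hφ : IsTimeChange (xiFn' S β) (xiFn' S β') φ) (hβ' : ∃ p ∈ S, 2 ≤ p ∧ β' p ≠ 0)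
    (hβ : xiFn' S β' 0 ≤ xiFn' S β 1) (hz : IsOrderPath 0 0 z) (h : ℝ) :
    pathParisi S h β' (relocate φ z) +
        1 / 2 * pathIntegral 0 (relocate φ z) (fun q => xiFn S β' q - xiFn S β q) ≤
      pathParisi S h β z + 1 / 2 * (xiFn S β' 1 - xiFn S β 1) := by
  have hpot := hφ.pathPotential_relocate_add_le (monotoneOn_xiFn' S β) (strictMonoOn_xiFn' hβ')
    (xiFn'_zero_nonneg S β) (xiFn'_zero_nonneg S β') hβ hz h
  have hinteg := hz.pathIntegral_mono (f := fun q => max (xiFn' S β q) (xiFn' S β' 1) +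
      (thetaFn S β' (φ q) + (xiFn S β' (φ q) - xiFn S β (φ q))))
    (g := fun q => xiFn' S β' 1 + thetaFn S β q) fun q hq => by
      have hyoung := mul_xiFn'_sub_xiFn_le_thetaFn S β (hφ.mem q).1 hq.1
      have hclip := hφ.max_add_mul_le (strictMonoOn_xiFn' hβ') q
      unfold thetaFn at hyoung ⊢
      linarith
  rw [pathIntegral_add, pathIntegral_add, pathIntegral_add, hz.pathIntegral_const] at hinteg
  have hθ : ∀ γ, thetaFn S γ 1 = xiFn' S γ 1 - xiFn S γ 1 := fun γ => by rw [thetaFn, one_mul]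
  rw [pathParisi, pathParisi, pathIntegral_relocate, pathIntegral_relocate, hθ, hθ]
  linarith

lemma isOrderPath_relocate {S : Finset ℕ} {β β' : ℕ → ℝ}
    (hφ : IsTimeChange (xiFn' S β) (xiFn' S β') φ) (hβ' : ∃ p ∈ S, 2 ≤ p ∧ β' p ≠ 0)
    (hz : IsOrderPath 0 0 z) : IsOrderPath 0 0 (relocate φ z) :=
  (hz.relocate (hφ.monotoneOn (monotoneOn_xiFn' S β) (strictMonoOn_xiFn' hβ')) hφ.mem).of_le
    le_rfl (hφ.mem 0).1

end IsTimeChange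

/-! ### The derivative of the Parisi formula -/

lemma exists_forall_abs_sub_lt {f g : ℝ → ℝ} {K : Set ℝ} (hK : IsCompact K)
    (hf : Continuous f) (hg : Continuous g) (hinj : Set.InjOn f K) {e : ℝ} (he : 0 < e) :
    ∃ η > 0, ∀ a ∈ K, ∀ b ∈ K, |f a - f b| < η → |g a - g b| < e := by
  have hcompact : IsCompact ((K ×ˢ K) ∩ {x : ℝ × ℝ | e ≤ |g x.1 - g x.2|}) :=
    (hK.prod hK).inter_right (isClosed_le (by fun_prop) (by fun_prop))
  obtain ⟨η, hη, hbound⟩ := hcompact.exists_forall_le' (f := fun x => |f x.1 - f x.2|) (a := 0)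
    (by fun_prop) fun x hx => abs_pos.2 <| sub_ne_zero.2 fun heq => by
      have := hx.2
      rw [Set.mem_ofPred_eq, hinj hx.1.1 hx.1.2 heq, sub_self, abs_zero] at this
      exact this.not_gt he
  refine ⟨η, hη, fun a ha b hb hab => ?_⟩
  by_contra! hge
  exact (hbound (a, b) ⟨⟨ha, hb⟩, hge⟩).not_gt hab

section Update

variable {S : Finset ℕ} {p : ℕ}

lemma xiFn_update_sub (hp : p ∈ S) (β : ℕ → ℝ) (s x : ℝ) :
    xiFn S (Function.update β p s) x - xiFn S β x = (s ^ 2 - β p ^ 2) * x ^ p := by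
  rw [xiFn, xiFn, ← Finset.sum_sub_distrib, Finset.sum_eq_single_of_mem p hp fun r _ hr => by
    rw [Function.update_of_ne hr, sub_self], Function.update_self]
  ring

lemma xiFn'_update_sub (hp : p ∈ S) (β : ℕ → ℝ) (s x : ℝ) :
    xiFn' S (Function.update β p s) x - xiFn' S β x =
      (s ^ 2 - β p ^ 2) * (p * x ^ (p - 1)) := by
  rw [xiFn', xiFn', ← Finset.sum_sub_distrib, Finset.sum_eq_single_of_mem p hp fun r _ hr => by
    rw [Function.update_of_ne hr, sub_self], Function.update_self]
  ring

lemma abs_xiFn'_update_sub_le (hp : p ∈ S) (β : ℕ → ℝ) (s : ℝ) {x : ℝ} (hx : x ∈ Set.Icc 0 1) :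
    |xiFn' S (Function.update β p s) x - xiFn' S β x| ≤ |s ^ 2 - β p ^ 2| * p := by
  have hx₀ := hx.1
  rw [xiFn'_update_sub hp, abs_mul, abs_of_nonneg (a := p * x ^ (p - 1)) (by positivity)]
  gcongr
  exact mul_le_of_le_one_right p.cast_nonneg (pow_le_one₀ hx₀ hx.2)

lemma continuous_update_right (β : ℕ → ℝ) (p : ℕ) : Continuous (Function.update β p) :=
  continuous_const.update p continuous_id

lemma eventually_update_ne_zero {β : ℕ → ℝ} (hβ : ∃ r ∈ S, 2 ≤ r ∧ β r ≠ 0) (p : ℕ) :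
    ∀ᶠ s in 𝓝 (β p), ∃ r ∈ S, 2 ≤ r ∧ Function.update β p s r ≠ 0 := by
  obtain ⟨r, hr, hr₂, hβr⟩ := hβ
  have hcont := ((continuous_apply r).comp (continuous_update_right β p)).continuousAt (x := β p)
  refine (hcont.eventually_ne ?_).mono fun s hs => ⟨r, hr, hr₂, hs⟩
  rwa [Function.comp_apply, Function.update_eq_self]

lemma tendsto_xiFn'_update (S : Finset ℕ) (β : ℕ → ℝ) (p : ℕ) (x : ℝ) :
    Tendsto (fun s => xiFn' S (Function.update β p s) x) (𝓝 (β p)) (𝓝 (xiFn' S β x)) := by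
  have hcont : Continuous fun γ : ℕ → ℝ => xiFn' S γ x := by
    unfold xiFn'
    fun_prop
  simpa only [Function.comp_def, Function.update_eq_self] using
    (hcont.comp (continuous_update_right β p)).tendsto (β p)

end Update

section FirstOrder

variable {S : Finset ℕ} {β β' : ℕ → ℝ} {D I e : ℝ} {p : ℕ} {φ : ℝ → ℝ} {z : List (ℝ × ℝ)}

lemma IsTimeChange.pathParisi_relocate_le_add (hφ : IsTimeChange (xiFn' S β) (xiFn' S β') φ)
    (hβ' : ∃ r ∈ S, 2 ≤ r ∧ β' r ≠ 0) (hβ : xiFn' S β' 0 ≤ xiFn' S β 1)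
    (hD : ∀ x, xiFn S β' x - xiFn S β x = D * x ^ p) (hz : IsOrderPath 0 0 z) (h : ℝ) :
    pathParisi S h β' (relocate φ z) ≤
      pathParisi S h β z + D / 2 * (1 - pathIntegral 0 (relocate φ z) (· ^ p)) := by
  have := hφ.pathParisi_relocate_le hβ' hβ hz h
  simp only [hD, one_pow] at this
  rw [pathIntegral_const_mul] at this
  linarith

lemma IsOrderPath.mul_one_sub_pathIntegral_pow_le (hz : IsOrderPath 0 0 z) (D : ℝ) (p : ℕ) :
    D * (1 - pathIntegral 0 z (· ^ p)) ≤ |D| := by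
  have h₀ := hz.pathIntegral_mono (f := fun _ => 0) (g := (· ^ p)) fun q hq => pow_nonneg hq.1 p
  have h₁ := hz.pathIntegral_mono (f := (· ^ p)) (g := fun _ => 1) fun q hq =>
    pow_le_one₀ hq.1 hq.2
  rw [hz.pathIntegral_const] at h₀ h₁
  calc D * (1 - pathIntegral 0 z (· ^ p)) ≤ |D| * |1 - pathIntegral 0 z (· ^ p)| :=
        (le_abs_self _).trans (abs_mul _ _).le
    _ ≤ |D| := mul_le_of_le_one_right (abs_nonneg D) (abs_le.2 ⟨by linarith, by linarith⟩)

lemma tendsto_pathParisi_nearMin (S : Finset ℕ) (h : ℝ) (β : ℕ → ℝ) :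
    Tendsto (fun z : OrderPath => pathParisi S h β z.1) (nearMin S h β) (𝓝 (parisiF S h β)) :=
  tendsto_comap

lemma parisiF_le_add_half_abs (hS : ∀ p ∈ S, 0 < p) (h : ℝ) (hβ' : ∃ r ∈ S, 2 ≤ r ∧ β' r ≠ 0)
    (hβ : xiFn' S β' 0 ≤ xiFn' S β 1) (hD : ∀ x, xiFn S β' x - xiFn S β x = D * x ^ p) :
    parisiF S h β' ≤ parisiF S h β + |D| / 2 := by
  have := nearMin_neBot hS h β
  obtain ⟨φ, hφ⟩ := exists_isTimeChange (monotoneOn_xiFn' S β')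
    (continuous_xiFn' S β').continuousOn (xiFn' S β)
  refine ge_of_tendsto' ((tendsto_pathParisi_nearMin S h β).add_const _) fun ⟨z, hz⟩ => ?_
  have hw := hφ.isOrderPath_relocate hβ' hz
  linarith [parisiF_le_pathParisi hS h β' hw, hφ.pathParisi_relocate_le_add hβ' hβ hD hz h,
    hw.mul_one_sub_pathIntegral_pow_le D p]

lemma IsOrderPath.abs_pathIntegral_relocate_sub_le (hz : IsOrderPath 0 0 z)
    {f : ℝ → ℝ} (hf : ∀ q ∈ Set.Icc 0 1, |f (φ q) - f q| ≤ e) :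
    |pathIntegral 0 (Parisi.relocate φ z) f - pathIntegral 0 z f| ≤ e := by
  have hub := hz.pathIntegral_mono (f := fun q => f (φ q)) (g := fun q => f q + e) fun q hq => by
    linarith [(abs_le.1 (hf q hq)).2]
  have hlb := hz.pathIntegral_mono (f := fun q => f q) (g := fun q => f (φ q) + e) fun q hq => by
    linarith [(abs_le.1 (hf q hq)).1]
  rw [pathIntegral_add, hz.pathIntegral_const] at hub hlb
  rw [pathIntegral_relocate, abs_le]
  constructor <;> linarith

lemma mul_sub_le_of_abs_sub_le {D a b e : ℝ} (h : |a - b| ≤ e) : D * (a - b) ≤ |D| * e :=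
  (le_abs_self _).trans <| (abs_mul _ _).trans_le (by gcongr)

lemma IsTimeChange.parisiF_le_add (hφ : IsTimeChange (xiFn' S β) (xiFn' S β') φ)
    (hS : ∀ p ∈ S, 0 < p) (h : ℝ) (hβ' : ∃ r ∈ S, 2 ≤ r ∧ β' r ≠ 0)
    (hβ : xiFn' S β' 0 ≤ xiFn' S β 1) (hD : ∀ x, xiFn S β' x - xiFn S β x = D * x ^ p)
    (hclose : ∀ q ∈ Set.Icc 0 1, |φ q ^ p - q ^ p| ≤ e)
    (hI : ∀ᶠ z : OrderPath in nearMin S h β, |pathIntegral 0 z.1 (· ^ p) - I| ≤ e) :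
    parisiF S h β' ≤ parisiF S h β + D / 2 * (1 - I) + e * |D| := by
  have := nearMin_neBot hS h β
  rw [add_assoc]
  refine ge_of_tendsto ((tendsto_pathParisi_nearMin S h β).add_const _) ?_
  filter_upwards [hI] with ⟨z, hz⟩ hzI
  have hw := hz.abs_pathIntegral_relocate_sub_le (f := (· ^ p)) hclose
  have hDI := mul_sub_le_of_abs_sub_le (D := -D) (b := I)
    ((abs_sub_le _ (pathIntegral 0 z (· ^ p)) _).trans (add_le_add hw hzI))
  rw [abs_neg] at hDI
  linarith [parisiF_le_pathParisi hS h β' (hφ.isOrderPath_relocate hβ' hz),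
    hφ.pathParisi_relocate_le_add hβ' hβ hD hz h]

/-- Here `φ` carries near minimizers at `β'` to near minimizers at `β`, whose moments are known. -/
lemma IsTimeChange.le_parisiF (hφ : IsTimeChange (xiFn' S β') (xiFn' S β) φ)
    (hS : ∀ p ∈ S, 0 < p) (h : ℝ) (hβ : ∃ r ∈ S, 2 ≤ r ∧ β r ≠ 0)
    (hβ' : xiFn' S β 0 ≤ xiFn' S β' 1) (hD : ∀ x, xiFn S β' x - xiFn S β x = D * x ^ p)
    {ε : ℝ} (hF : parisiF S h β' ≤ parisiF S h β + |D| / 2) (hDε : |D| < ε)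
    (hI : ∀ z, IsOrderPath 0 0 z → pathParisi S h β z < parisiF S h β + ε →
      |pathIntegral 0 z (· ^ p) - I| ≤ e) :
    parisiF S h β + D / 2 * (1 - I) - e / 2 * |D| ≤ parisiF S h β' := by
  have := nearMin_neBot hS h β'
  have hD' : ∀ x, xiFn S β x - xiFn S β' x = -D * x ^ p := fun x => by linarith [hD x]
  refine ge_of_tendsto (tendsto_pathParisi_nearMin S h β') ?_
  filter_upwards [(nearMin_hasBasis hS h β').mem_of_mem (sub_pos.2 hDε)] with ⟨z, hz⟩ hzF
  have hw := hφ.isOrderPath_relocate hβ hz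
  have hle := hφ.pathParisi_relocate_le_add hβ hβ' hD' hz h
  have hmoment := hw.mul_one_sub_pathIntegral_pow_le (-D) p
  rw [abs_neg] at hmoment
  have hDI := mul_sub_le_of_abs_sub_le (D := D) (hI _ hw (by linarith))
  linarith [parisiF_le_pathParisi hS h β hw]

end FirstOrder

section Derivative

variable {S : Finset ℕ} {β : ℕ → ℝ} {p : ℕ} {I : ℝ}

lemma tendsto_abs_sq_sub_mul (b c : ℝ) :
    Tendsto (fun s : ℝ => |s ^ 2 - b ^ 2| * c) (𝓝 b) (𝓝 0) := by
  have hcont : Continuous fun s : ℝ => |s ^ 2 - b ^ 2| * c := by fun_prop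
  simpa using hcont.tendsto b

lemma eventually_abs_timeChange_pow_sub_le (hβ : ∃ r ∈ S, 2 ≤ r ∧ β r ≠ 0) (hp : p ∈ S) {e : ℝ}
    (he : 0 < e) :
    ∀ᶠ s in 𝓝 (β p), ∀ φ, IsTimeChange (xiFn' S β) (xiFn' S (Function.update β p s)) φ →
      ∀ q ∈ Set.Icc 0 1, |φ q ^ p - q ^ p| ≤ e := by
  obtain ⟨η, hη, hclose⟩ := exists_forall_abs_sub_lt isCompact_Icc (continuous_xiFn' S β)
    (continuous_pow p) (strictMonoOn_xiFn' hβ).injOn he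
  filter_upwards [(tendsto_abs_sq_sub_mul (β p) p).eventually_lt_const (half_pos hη)]
    with s hs φ hφ q hq
  refine (hclose _ (hφ.mem q) q hq ?_).le
  have hcomp := (hφ.abs_comp_sub_le (monotoneOn_xiFn' S _) hq).trans
    (abs_xiFn'_update_sub_le hp β s hq)
  have hmove := abs_xiFn'_update_sub_le hp β s (hφ.mem q)
  rw [abs_sub_comm] at hmove
  linarith [abs_sub_le (xiFn' S β (φ q)) (xiFn' S (Function.update β p s) (φ q)) (xiFn' S β q)]

lemma xiFn'_zero_lt_xiFn'_one (hβ : ∃ r ∈ S, 2 ≤ r ∧ β r ≠ 0) : xiFn' S β 0 < xiFn' S β 1 :=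
  strictMonoOn_xiFn' hβ ⟨le_rfl, zero_le_one⟩ ⟨zero_le_one, le_rfl⟩ one_pos

lemma eventually_parisiF_update_le (hS : ∀ p ∈ S, 0 < p) (h : ℝ)
    (hβ : ∃ r ∈ S, 2 ≤ r ∧ β r ≠ 0) (hp : p ∈ S)
    (hI : Tendsto (fun z : OrderPath => pathIntegral 0 z.1 (· ^ p)) (nearMin S h β) (𝓝 I))
    {e : ℝ} (he : 0 < e) :
    ∀ᶠ s in 𝓝 (β p), parisiF S h (Function.update β p s) ≤
      parisiF S h β + (s ^ 2 - β p ^ 2) / 2 * (1 - I) + e * |s ^ 2 - β p ^ 2| := by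
  have hgap := xiFn'_zero_lt_xiFn'_one hβ
  filter_upwards [eventually_update_ne_zero hβ p, eventually_abs_timeChange_pow_sub_le hβ hp he,
    (tendsto_xiFn'_update S β p 0).eventually_lt_const hgap] with s hs hclose hs₀
  obtain ⟨φ, hφ⟩ := exists_isTimeChange (monotoneOn_xiFn' S (Function.update β p s))
    (continuous_xiFn' S _).continuousOn (xiFn' S β)
  exact hφ.parisiF_le_add hS h hs hs₀.le (xiFn_update_sub hp β s) (hclose φ hφ)
    (hI.eventually (Metric.closedBall_mem_nhds I he))

lemma eventually_le_parisiF_update (hS : ∀ p ∈ S, 0 < p) (h : ℝ)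
    (hβ : ∃ r ∈ S, 2 ≤ r ∧ β r ≠ 0) (hp : p ∈ S)
    (hI : Tendsto (fun z : OrderPath => pathIntegral 0 z.1 (· ^ p)) (nearMin S h β) (𝓝 I))
    {e : ℝ} (he : 0 < e) :
    ∀ᶠ s in 𝓝 (β p), parisiF S h β + (s ^ 2 - β p ^ 2) / 2 * (1 - I) -
      e / 2 * |s ^ 2 - β p ^ 2| ≤ parisiF S h (Function.update β p s) := by
  have hgap := xiFn'_zero_lt_xiFn'_one hβ
  obtain ⟨ε, hε, hnear⟩ := (nearMin_hasBasis hS h β).eventually_iff.1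
    (hI.eventually (Metric.closedBall_mem_nhds I he))
  filter_upwards [eventually_update_ne_zero hβ p,
    (tendsto_abs_sq_sub_mul (β p) 1).eventually_lt_const hε,
    (tendsto_xiFn'_update S β p 0).eventually_lt_const hgap,
    (tendsto_xiFn'_update S β p 1).eventually_const_lt hgap] with s hs hsε hs₀ hs₁
  rw [mul_one] at hsε
  have hD := xiFn_update_sub hp β s
  obtain ⟨φ, hφ⟩ := exists_isTimeChange (monotoneOn_xiFn' S β)
    (continuous_xiFn' S β).continuousOn (xiFn' S (Function.update β p s))
  exact hφ.le_parisiF hS h hβ hs₁.le hD (parisiF_le_add_half_abs hS h hs hs₀.le hD) hsε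
    fun z hz hlt => @hnear ⟨z, hz⟩ hlt

lemma parisiF_update_sub_isLittleO (hS : ∀ p ∈ S, 0 < p) (h : ℝ)
    (hβ : ∃ r ∈ S, 2 ≤ r ∧ β r ≠ 0) (hp : p ∈ S)
    (hI : Tendsto (fun z : OrderPath => pathIntegral 0 z.1 (· ^ p)) (nearMin S h β) (𝓝 I)) :
    (fun s => parisiF S h (Function.update β p s) - parisiF S h β -
      (s ^ 2 - β p ^ 2) / 2 * (1 - I)) =o[𝓝 (β p)] fun s => s ^ 2 - β p ^ 2 := by
  refine Asymptotics.isLittleO_iff.2 fun e he => ?_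
  filter_upwards [eventually_parisiF_update_le hS h hβ hp hI he,
    eventually_le_parisiF_update hS h hβ hp hI he] with s hle hge
  rw [norm_eq_abs, norm_eq_abs, abs_le]
  have : 0 ≤ e * |s ^ 2 - β p ^ 2| := by positivity
  constructor <;> linarith

theorem hasDerivAt_parisiF_update (hS : ∀ p ∈ S, 0 < p) (h : ℝ)
    (hβ : ∃ r ∈ S, 2 ≤ r ∧ β r ≠ 0) (hp : p ∈ S)
    (hI : Tendsto (fun z : OrderPath => pathIntegral 0 z.1 (· ^ p)) (nearMin S h β) (𝓝 I)) :
    HasDerivAt (fun s : ℝ => parisiF S h (Function.update β p s)) (β p * (1 - I)) (β p) := by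
  have hsq : HasDerivAt (fun s : ℝ => s ^ 2) (2 * β p) (β p) := by
    simpa using hasDerivAt_pow 2 (β p)
  have hrem : HasDerivAt (fun s => parisiF S h (Function.update β p s) - s ^ 2 / 2 * (1 - I)) 0
      (β p) := by
    refine hasDerivAt_iff_isLittleO.2 (((parisiF_update_sub_isLittleO hS h hβ hp hI).trans_isBigO
      hsq.isBigO_sub).congr_left fun s => ?_)
    rw [Function.update_eq_self, smul_zero]
    ring
  have hsum := (hrem.add ((hsq.div_const 2).mul_const (1 - I))).congr_deriv
    (g' := β p * (1 - I)) (by ring)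
  simpa only [Pi.add_def, sub_add_cancel] using hsum

end Derivative

end Parisi

/-- There exist a Borel probability measure `μ` on `[0,1]` and a sequence of minimizers
`(m^k, q^k)` of the discrete Parisi functional over order parameters with at most `k+1`
atoms, whose associated discrete measures converge weakly to `μ`, with
`P(m^k,q^k;β) → P(β)`, and such that for every `p ∈ S` the partial derivative
`∂P(β)/∂β_p` exists and equals `β_p (1 - ∫ q^p dμ(q))`. -/
theorem parisiF_deriv_via_parisi_measure
    (S : Finset ℕ) (hS : ∀ p ∈ S, 0 < p) (h : ℝ) (β : ℕ → ℝ)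
    (hβ : ∃ p ∈ S, 2 ≤ p ∧ β p ≠ 0) :
    ∃ μ : Measure ℝ, IsProbabilityMeasure μ ∧ μ (Set.Icc (0 : ℝ) 1)ᶜ = 0 ∧
      ∃ op : (k : ℕ) → OrderParam (k + 1),
        (∀ k, ∀ op' : OrderParam (k + 1), parisiP S h β (op k) ≤ parisiP S h β op') ∧
        (∀ f : BoundedContinuousFunction ℝ ℝ,
          Tendsto (fun k => ∑ l ∈ Finset.Icc 1 (k + 1),
              ((op k).m l - (op k).m (l - 1)) * f ((op k).q l)) atTop
            (𝓝 (∫ q, f q ∂μ))) ∧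
        Tendsto (fun k => parisiP S h β (op k)) atTop (𝓝 (parisiF S h β)) ∧
        ∀ p ∈ S,
          HasDerivAt (fun s : ℝ => parisiF S h (Function.update β p s))
            (β p * (1 - ∫ q, q ^ p ∂μ)) (β p) := by
  obtain ⟨μ, hprob, hsupp, hμ⟩ := Parisi.exists_parisi_measure hS h hβ
  obtain ⟨op, hmin, hlim⟩ := Parisi.exists_minimizers hS h β
  have hnear : Tendsto (fun k => (⟨_, Parisi.isOrderPath_orderPath (op k)⟩ : Parisi.OrderPath))
      atTop (Parisi.nearMin S h β) :=
    tendsto_comap_iff.2 <| hlim.congr fun k =>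
      Parisi.parisiP_eq_pathParisi (op k) k.succ_pos S h β
  refine ⟨μ, hprob, hsupp, op, hmin, fun f => ?_, hlim, fun p hp =>
    Parisi.hasDerivAt_parisiF_update hS h hβ hp (hμ _ (continuous_pow p))⟩
  exact ((hμ f f.continuous).comp hnear).congr fun k => Parisi.pathIntegral_orderPath (op k) f
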